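/- Let Ω be a bounded open subset of ℝ² with C² boundary, let δ > 0 and M ≥ 1. Let f₀, f₁ : ℝ² → ℝ be smooth functions with compact supports contained in Ω such that |x − y| > δ for every x ∈ ∂Ω and every y in the support of f₀ or f₁, and such that ‖f₀‖²_{(4)} + ‖f₁‖²_{(3)} ≤ M. Then there exists a constant C depending only on Ω and δ such that for every K > 1 the following holds: if ε² = ∫₀^K ( ω² ‖u(·,ω)‖²_{L²(∂Ω)} + ‖∇ₓu(·,ω)‖²_{L²(∂Ω)} ) dω satisfies 0 < ε < 1 and E = −log ε, then ‖f₁‖²_{(0)} + ‖f₀‖²_{(1)} ≤ C ( ε² + M² / (1 + K^{2/3} E^{1/4}) ). -/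

import Mathlib

/-!
Write `u = a + ib` for the radiating solution at a real frequency `ω`. The divergence theorem bounds
the integral over `Ω` of the divergence of the current `a∇b - b∇a` by the Cauchy data of `u` on `∂Ω`.
Only an inequality is needed, and it follows for a `C²` boundary by testing against Lipschitz cutoffs,
whose gradients live on thin tubes around the boundary (`tube_estimate`, `boundary_div`). Since
`J₀(ω|z|)` solves the Helmholtz equation and `Y₀(ω|z|)` is a positive multiple of a fundamental
solution (`Jk_green`, `Yk_green`), that integral is a positive multiple of the radiated power
`pw(ω) = q(f₁) + ω² q(f₀)`, where `q(f) = ∬ f(x) f(y) J₀(ω|x - y|) dx dy` (`flux_eq`). Hence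
`ω pw(ω)` is bounded by the integrand of `ε²` (`power_le_data`).

By Poisson's integral, `q(f)` is the average of the squared modulus of the Fourier transform of `f`
over the circle of radius `ω` (`integral_Gf_circle`). Plancherel's theorem in polar coordinates then
gives, for every frequency `y > 0`,
`‖f₁‖² + ‖∇f₀‖² ≤ Φ(y) + O(M / y²)` with `Φ(y) = ∫₀^y ω pw(ω) dω` (`en_le`), and the Poincaré
inequality adds the term `‖f₀‖²`.

Put `x = E^(3/16)`. If `x ≤ K`, take `y = K`, where `Φ(K) = O(ε²)`. If `K ≤ x`, take `y = x` and
continue `Φ` from `[0, 1]` to `x`: it is approximated super-exponentially well by even polynomials of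
degree `2n + 2`, with `n` of order `x`. On `[-1, 1]` such a polynomial is bounded by `ε²` plus the
truncation error, so by the Chebyshev extremal property it is at most `(2x)^(2n + 2)` times this at
`x`. This growth is at most `exp (B x²)`, while `ε² = exp (-2E) ≤ exp (-2x⁴)`; the outcome is
`Φ(x) = O(M / x²)` (`continuation`). In both cases `K^(2/3) E^(1/4) ≤ y^(2/3) y^(4/3) = y²`, which
turns `M / y²` into the asserted bound.
-/

open MeasureTheory Real Complex Filter

noncomputable section

/-- The Euclidean plane. -/
abbrev E2 : Type := EuclideanSpace ℝ (Fin 2)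

/-- Bessel function `J₀` (power series, entire). -/
def besselJ0 (z : ℂ) : ℂ :=
  ∑' m : ℕ, ((-1 : ℂ) ^ m * (z / 2) ^ (2 * m)) / ((m.factorial : ℂ)) ^ 2

/-- Partial harmonic sum `1 + 1/2 + ⋯ + 1/m`. -/
def harmSum (m : ℕ) : ℂ := ∑ j ∈ Finset.range m, (1 : ℂ) / (j + 1)

/-- Bessel function `Y₀` (with the principal branch of the logarithm). -/
def besselY0 (z : ℂ) : ℂ :=
  (2 / Real.pi) * (((Real.eulerMascheroniConstant : ℂ) + Complex.log (z / 2)) * besselJ0 z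
    - ∑' m : ℕ, ((-1 : ℂ) ^ (m + 1) * (z / 2) ^ (2 * (m + 1)) * harmSum (m + 1)) /
        (((m + 1).factorial : ℂ)) ^ 2)

/-- Hankel function of the first kind of order zero, `H₀⁽¹⁾ = J₀ + iY₀`. -/
def hankelH0 (z : ℂ) : ℂ := besselJ0 z + Complex.I * besselY0 z

/-- The "conjugate" Hankel function `H̄₀⁽¹⁾ = J₀ − iY₀`. -/
def hankelH0bar (z : ℂ) : ℂ := besselJ0 z - Complex.I * besselY0 z

/-- The radiating scattering solution of `(Δ + k²)u = −f₁ − i k f₀`: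
`u(x,k) = (−i/4)∫_Ω H₀⁽¹⁾(k|x−y|)(f₁(y) + i k f₀(y)) dy`. -/
def scatSol (Ω : Set E2) (f₀ f₁ : E2 → ℝ) (x : E2) (k : ℂ) : ℂ :=
  (-Complex.I / 4) *
    ∫ y in Ω, hankelH0 (k * (‖x - y‖ : ℝ)) * ((f₁ y : ℂ) + Complex.I * k * (f₀ y : ℂ))

/-- Partial derivative of a real valued function in the `i`-th coordinate direction. -/
def pd (i : Fin 2) (f : E2 → ℝ) : E2 → ℝ := fun x => fderiv ℝ f x (EuclideanSpace.single i 1)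

/-- Squared Sobolev norm `‖f‖²_{(m)} = ∑_{|α|≤m} ∫ |∂^α f|²`. -/
def sobNormSq (m : ℕ) (f : E2 → ℝ) : ℝ :=
  ∑ α ∈ (Finset.range (m + 1) ×ˢ Finset.range (m + 1)).filter (fun α => α.1 + α.2 ≤ m),
    ∫ x : E2, ((pd 0)^[α.1] ((pd 1)^[α.2] f) x) ^ 2

/-- Squared euclidean norm of the gradient of a complex valued function on the plane. -/
def gradNormSq (g : E2 → ℂ) (x : E2) : ℝ :=
  ∑ i : Fin 2, ‖fderiv ℝ g x (EuclideanSpace.single i 1)‖ ^ 2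

/-- Squared euclidean norm of the gradient of a real valued function on the plane. -/
def gradNormSqR (g : E2 → ℝ) (x : E2) : ℝ :=
  ∑ i : Fin 2, (fderiv ℝ g x (EuclideanSpace.single i 1)) ^ 2

/-- Laplacian of a complex valued function on the plane (sum of pure second partials). -/
def lapC (g : E2 → ℂ) (x : E2) : ℂ :=
  ∑ i : Fin 2, fderiv ℝ (fun y => fderiv ℝ g y (EuclideanSpace.single i 1)) x
    (EuclideanSpace.single i 1)

/-- Laplacian of a real valued function on the plane. -/
def lapR (g : E2 → ℝ) (x : E2) : ℝ :=
  ∑ i : Fin 2, fderiv ℝ (fun y => fderiv ℝ g y (EuclideanSpace.single i 1)) x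
    (EuclideanSpace.single i 1)

/-- Laplacian of a real valued function on `ℂ ≅ ℝ²`. -/
def lapPlane (g : ℂ → ℝ) (z : ℂ) : ℝ :=
  fderiv ℝ (fun w => fderiv ℝ g w 1) z 1 +
    fderiv ℝ (fun w => fderiv ℝ g w Complex.I) z Complex.I

/-- `C²`-smooth boundary: near every boundary point, `Ω` is a sublevel set of a `C²`
defining function with nonvanishing gradient. -/
def HasC2Boundary (Ω : Set E2) : Prop :=
  ∀ x ∈ frontier Ω, ∃ (U : Set E2) (g : E2 → ℝ), IsOpen U ∧ x ∈ U ∧ ContDiff ℝ 2 g ∧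
    (∀ y ∈ U, fderiv ℝ g y ≠ 0) ∧ (Ω ∩ U = {y ∈ U | g y < 0}) ∧
    (frontier Ω ∩ U = {y ∈ U | g y = 0})

/-- Kirchhoff-type solution of the plane wave equation with initial data `(−f₀, f₁)`,
extended by zero to `t ≤ 0`. -/
def waveSol (f₀ f₁ : E2 → ℝ) (x : E2) (t : ℝ) : ℝ :=
  if t ≤ 0 then 0 else
    (1 / (2 * Real.pi)) * ∫ y in Metric.ball x t, f₁ y / Real.sqrt (t ^ 2 - ‖x - y‖ ^ 2)
    - deriv (fun τ : ℝ =>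
        (1 / (2 * Real.pi)) * ∫ y in Metric.ball x τ, f₀ y / Real.sqrt (τ ^ 2 - ‖x - y‖ ^ 2)) t

/-- The quantity `I₁(k)`: the contour integral (along the segment from `0` to `k`,
parametrized by `ω = ks`) of `2ω²∫_{∂Ω} u(x,ω)ū(x,ω)`. -/
def I1 (Ω : Set E2) (f₀ f₁ : E2 → ℝ) (k : ℂ) : ℂ :=
  2 * k * ∫ s in Set.Ioo (0 : ℝ) 1, (k * s) ^ 2 *
    ∫ x in frontier Ω,
      ((-Complex.I / 4) * ∫ y in Ω,
        ((f₁ y : ℂ) + Complex.I * (k * s) * (f₀ y : ℂ)) * hankelH0 (k * s * (‖x - y‖ : ℝ))) *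
      ((Complex.I / 4) * ∫ y in Ω,
        ((f₁ y : ℂ) - Complex.I * (k * s) * (f₀ y : ℂ)) * hankelH0bar (k * s * (‖x - y‖ : ℝ)))
      ∂(μH[1])

/-- The quantity `I₂(k)`: as `I₁(k)` but with the spatial gradients of the Hankel kernels,
paired by the dot product. -/
def I2 (Ω : Set E2) (f₀ f₁ : E2 → ℝ) (k : ℂ) : ℂ :=
  2 * k * ∫ s in Set.Ioo (0 : ℝ) 1, (k * s) ^ 2 *
    ∫ x in frontier Ω,
      ∑ i : Fin 2,
        ((-Complex.I / 4) * ∫ y in Ω,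
          ((f₁ y : ℂ) + Complex.I * (k * s) * (f₀ y : ℂ)) *
            fderiv ℝ (fun x' => hankelH0 (k * s * (‖x' - y‖ : ℝ))) x
              (EuclideanSpace.single i 1)) *
        ((Complex.I / 4) * ∫ y in Ω,
          ((f₁ y : ℂ) - Complex.I * (k * s) * (f₀ y : ℂ)) *
            fderiv ℝ (fun x' => hankelH0bar (k * s * (‖x' - y‖ : ℝ))) x
              (EuclideanSpace.single i 1))
      ∂(μH[1])

end

/-! ### The boundary as a Lipschitz graph and a one-sided divergence theorem -/

lemma E2_decomp {i j : Fin 2} (hij : i ≠ j) (v : E2) :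
    v = v i • EuclideanSpace.single i (1 : ℝ) + v j • EuclideanSpace.single j (1 : ℝ) := by
  ext k
  fin_cases i <;> fin_cases j <;> fin_cases k <;> simp at hij ⊢

lemma E2_norm_le {i j : Fin 2} (hij : i ≠ j) (v : E2) : ‖v‖ ≤ |v i| + |v j| := by
  conv_lhs => rw [E2_decomp hij v]
  refine (norm_add_le _ _).trans ?_
  simp [norm_smul]

lemma E2_abs_le (i : Fin 2) (v : E2) : |v i| ≤ ‖v‖ := by
  have := PiLp.norm_apply_le v i
  simpa using this

/-- Near a boundary point, the boundary is a Lipschitz graph over one of the coordinate axes: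
the `j`-th coordinate is injective on it with Lipschitz inverse, and the image of the part of the
boundary within distance `r` of `x` contains an interval of half-length `r / Λ` about `x j`. -/
lemma local_graph {Ω : Set E2} (h : HasC2Boundary Ω) {x₀ : E2} (hx₀ : x₀ ∈ frontier Ω) :
    ∃ (i j : Fin 2) (ρ Λ : ℝ), i ≠ j ∧ 0 < ρ ∧ 1 ≤ Λ ∧
      (∀ y ∈ frontier Ω ∩ Metric.ball x₀ ρ, ∀ y' ∈ frontier Ω ∩ Metric.ball x₀ ρ,
        |y i - y' i| ≤ Λ * |y j - y' j|) ∧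
      (∀ x ∈ frontier Ω ∩ Metric.ball x₀ ρ, ∀ r, 0 < r → r < ρ → ∀ t : ℝ, |t| ≤ r / Λ →
        ∃ y ∈ frontier Ω, dist y x < r ∧ y j = x j + t) := by
  obtain ⟨U, g, hUo, hxU, hg, hg0, -, hgS⟩ := h x₀ hx₀
  set D := fderiv ℝ g x₀ with hD
  have hD0 : D ≠ 0 := hg0 x₀ hxU
  obtain ⟨i, j, hij, hi⟩ : ∃ i j : Fin 2, i ≠ j ∧ D (EuclideanSpace.single i (1 : ℝ)) ≠ 0 := by
    by_contra! hcon
    apply hD0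
    ext v
    rw [E2_decomp (i := 0) (j := 1) (by decide) v]
    simp [hcon 0 1 (by decide), hcon 1 0 (by decide)]
  set a := D (EuclideanSpace.single i (1 : ℝ)) with ha
  set l := a⁻¹ * D (EuclideanSpace.single j (1 : ℝ)) with hl
  set G : E2 → ℝ := fun y => a⁻¹ * g y with hG
  have hGL : ∀ v : E2, (a⁻¹ • D) v = v i + l * v j := by
    intro v
    conv_lhs => rw [E2_decomp hij v]
    simp only [map_add, map_smul, smul_apply, smul_eq_mul, ← ha]
    rw [hl]; field_simp
  have hstrict : HasStrictFDerivAt G (a⁻¹ • D) x₀ := by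
    have h1 : HasStrictFDerivAt g D x₀ := hg.contDiffAt.hasStrictFDerivAt (by norm_num)
    exact h1.const_smul a⁻¹
  -- normalized so that `∂ᵢG(x₀) = 1`, the function `G` is linear up to an error with Lipschitz
  -- constant `1/4`, which is absorbed in the two estimates below
  have hlit := hstrict.isLittleO.def (c := 1/4) (by norm_num)
  rw [nhds_prod_eq, ← nhds_prod_eq] at hlit
  obtain ⟨ρ₁, hρ₁, hb₁⟩ := Metric.eventually_nhds_iff.1 hlit
  obtain ⟨ρ₂, hρ₂, hb₂⟩ := Metric.isOpen_iff.1 hUo x₀ hxU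
  have key : ∀ y ∈ Metric.ball x₀ ρ₁, ∀ y' ∈ Metric.ball x₀ ρ₁,
      |G y - G y' - ((y i - y' i) + l * (y j - y' j))| ≤ 1/4 * (|y i - y' i| + |y j - y' j|) := by
    intro y hy y' hy'
    have := @hb₁ (y, y') (by rw [Prod.dist_eq]; exact max_lt hy hy')
    simp only [Real.norm_eq_abs, hGL] at this
    refine this.trans ?_
    have := E2_norm_le hij (y - y')
    simp only [PiLp.sub_apply] at this
    linarith
  set ρ := min ρ₁ ρ₂ / 2 with hρ
  have hρ0 : 0 < ρ := by positivity
  have hρ1 : 2 * ρ ≤ ρ₁ := by rw [hρ]; linarith [min_le_left ρ₁ ρ₂]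
  have hρ2 : 2 * ρ ≤ ρ₂ := by rw [hρ]; linarith [min_le_right ρ₁ ρ₂]
  have hzero : ∀ y ∈ Metric.ball x₀ (2 * ρ), (y ∈ frontier Ω ↔ G y = 0) := by
    intro y hy
    have hyU : y ∈ U := hb₂ (Metric.ball_subset_ball hρ2 hy)
    have : y ∈ frontier Ω ∩ U ↔ y ∈ {y ∈ U | g y = 0} := by rw [hgS]
    simp only [Set.mem_inter_iff, hyU, and_true, Set.mem_ofPred_eq, true_and] at this
    rw [this, hG]
    simp [hi]
  refine ⟨i, j, ρ, 4 * (|l| + 1), hij, hρ0, by linarith [abs_nonneg l], ?_, ?_⟩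
  · intro y hy y' hy'
    have hsub : Metric.ball x₀ ρ ⊆ Metric.ball x₀ (2 * ρ) := Metric.ball_subset_ball (by linarith)
    have h1 := key y (Metric.ball_subset_ball (by linarith) hy.2) y'
      (Metric.ball_subset_ball (by linarith) hy'.2)
    rw [(hzero y (hsub hy.2)).1 hy.1, (hzero y' (hsub hy'.2)).1 hy'.1] at h1
    have h2 : |y i - y' i| ≤ |(0:ℝ) - 0 - ((y i - y' i) + l * (y j - y' j))|
        + |l| * |y j - y' j| := by
      rw [← abs_mul]
      have := abs_add_le (0 - 0 - ((y i - y' i) + l * (y j - y' j))) (l * (y j - y' j))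
      refine le_trans (le_of_eq ?_) this
      rw [← abs_neg]; ring_nf
    have h3 := mul_nonneg (abs_nonneg l) (abs_nonneg (y j - y' j))
    have h4 := abs_nonneg (y j - y' j)
    generalize |0 - 0 - ((y i - y' i) + l * (y j - y' j))| = A at h1 h2
    generalize |y i - y' i| = B at h1 h2 ⊢
    generalize |y j - y' j| = B' at h1 h2 h3 h4 ⊢
    linarith
  · intro x hx r hr hrρ t ht
    set Y : ℝ → E2 := fun τ => x + t • EuclideanSpace.single j (1 : ℝ)
      + τ • EuclideanSpace.single i (1 : ℝ) with hY
    have hYi : ∀ τ, Y τ i - x i = τ := by intro τ; simp [hY, hij]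
    have hYj : ∀ τ, Y τ j - x j = t := by intro τ; simp [hY, hij.symm]
    have htr : (|l| + 1) * |t| ≤ r / 4 := by
      rw [le_div_iff₀ (by positivity)] at ht
      linarith
    have htr' : |t| ≤ r / 4 := by nlinarith [abs_nonneg l, abs_nonneg t]
    have hdist : ∀ τ, |τ| ≤ r / 2 → dist (Y τ) x < r := by
      intro τ hτ
      rw [dist_eq_norm]
      have := E2_norm_le hij (Y τ - x)
      simp only [PiLp.sub_apply, hYi, hYj] at this
      linarith
    have hball : ∀ τ, |τ| ≤ r / 2 → Y τ ∈ Metric.ball x₀ (2 * ρ) := by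
      intro τ hτ
      have h1 := hdist τ hτ
      have h2 : dist x x₀ < ρ := hx.2
      have := dist_triangle (Y τ) x x₀
      rw [Metric.mem_ball]; linarith
    have hGx : G x = 0 := (hzero x (Metric.ball_subset_ball (by linarith) hx.2)).1 hx.1
    have hval : ∀ τ, |τ| ≤ r / 2 → |G (Y τ) - (τ + l * t)| ≤ 1/4 * (|τ| + |t|) := by
      intro τ hτ
      have := key (Y τ) (Metric.ball_subset_ball hρ1 (hball τ hτ)) x
        (Metric.ball_subset_ball (by linarith) hx.2)
      rw [hYi, hYj, hGx, sub_zero] at this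
      exact this
    have hlt : |l * t| ≤ r / 4 - |t| := by rw [abs_mul]; linarith
    have hYc : Continuous Y := by rw [hY]; fun_prop
    have hGc : Continuous G := by
      have := hg.continuous
      rw [hG]; fun_prop
    have hr2 : |r / 2| = r / 2 := abs_of_pos (by positivity)
    have hpos := hval (r / 2) (by rw [hr2])
    have hneg := hval (-(r / 2)) (by rw [abs_neg, hr2])
    rw [abs_neg] at hneg
    rw [hr2, abs_le] at hpos hneg
    rw [abs_le] at hlt
    have h0 : (0 : ℝ) ∈ Set.Icc (G (Y (-(r / 2)))) (G (Y (r / 2))) := by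
      constructor <;> linarith [hpos.1, hneg.2, abs_nonneg t]
    -- `G` is negative at one end of the segment `Y` of direction `eᵢ` and positive at the other
    obtain ⟨τ, hτ, hτ0⟩ := intermediate_value_Icc (f := fun τ => G (Y τ))
      (by linarith : -(r / 2) ≤ r / 2)
      (hGc.comp hYc).continuousOn h0
    have hτ' : |τ| ≤ r / 2 := abs_le.2 hτ
    exact ⟨Y τ, (hzero _ (hball τ hτ')).2 hτ0, hdist τ hτ', by linarith [hYj τ]⟩

lemma isCompact_frontier_of_bdd {Ω : Set E2} (hΩb : Bornology.IsBounded Ω) :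
    IsCompact (frontier Ω) :=
  Metric.isCompact_of_isClosed_isBounded isClosed_frontier
    (hΩb.closure.subset frontier_subset_closure)

/-- The boundary has finite length, being locally a Lipschitz image of a bounded subset of a line. -/
lemma frontier_length_lt_top {Ω : Set E2} (hΩb : Bornology.IsBounded Ω) (h : HasC2Boundary Ω) :
    μH[1] (frontier Ω) < ⊤ := by
  refine (isCompact_frontier_of_bdd hΩb).measure_lt_top_of_nhdsWithin ?_
  intro x₀ hx₀
  obtain ⟨i, j, ρ, Λ, hij, hρ, hΛ, hlip, -⟩ := local_graph h hx₀
  refine ⟨frontier Ω ∩ Metric.ball x₀ ρ, ?_, ?_⟩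
  · exact Filter.inter_mem self_mem_nhdsWithin
      (mem_nhdsWithin_of_mem_nhds (Metric.ball_mem_nhds x₀ hρ))
  set A := frontier Ω ∩ Metric.ball x₀ ρ with hA
  set pr : E2 → ℝ := fun y => y j with hpr
  have hinj : Set.InjOn pr A := by
    intro y hy y' hy' hyy
    have h1 := hlip y hy y' hy'
    have h2 : y j - y' j = 0 := sub_eq_zero.2 hyy
    rw [h2, abs_zero, mul_zero] at h1
    have := E2_norm_le hij (y - y')
    simp only [PiLp.sub_apply, h2, abs_zero, add_zero] at this
    exact sub_eq_zero.1 (norm_le_zero_iff.1 (this.trans h1))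
  have himg : A = Function.invFunOn pr A '' (pr '' A) := (hinj.invFunOn_image subset_rfl).symm
  have hL : LipschitzOnWith (Real.toNNReal (Λ + 1)) (Function.invFunOn pr A) (pr '' A) := by
    refine LipschitzOnWith.of_dist_le_mul ?_
    rintro _ ⟨y, hy, rfl⟩ _ ⟨y', hy', rfl⟩
    rw [hinj.leftInvOn_invFunOn hy, hinj.leftInvOn_invFunOn hy', dist_eq_norm,
      Real.coe_toNNReal _ (by linarith), Real.dist_eq]
    have := E2_norm_le hij (y - y')
    simp only [PiLp.sub_apply] at this
    have h1 := hlip y hy y' hy'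
    have : (Λ + 1) * |pr y - pr y'| = Λ * |y j - y' j| + |y j - y' j| := by rw [hpr]; ring
    linarith
  have h1 := hL.hausdorffMeasure_image_le (d := 1) zero_le_one
  rw [← himg, hausdorffMeasure_real] at h1
  refine h1.trans_lt (ENNReal.mul_lt_top (by simp) ?_)
  have hsub : pr '' A ⊆ Metric.ball (x₀ j) ρ := by
    rintro _ ⟨y, hy, rfl⟩
    have h2 : dist y x₀ < ρ := hy.2
    rw [dist_eq_norm] at h2
    have := E2_abs_le j (y - x₀)
    rw [Metric.mem_ball, Real.dist_eq]
    simp only [PiLp.sub_apply] at this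
    exact this.trans_lt h2
  exact (measure_mono hsub).trans_lt measure_ball_lt_top

/-- Lower Ahlfors regularity of the boundary: a small ball around a boundary point contains a piece
of boundary of length comparable to the radius, since a coordinate projects it `1`-Lipschitz onto a
set containing an interval. The constants are uniform by compactness. -/
lemma frontier_lower_regular {Ω : Set E2} (hΩb : Bornology.IsBounded Ω) (h : HasC2Boundary Ω) :
    ∃ c r₀ : ℝ, 0 < c ∧ 0 < r₀ ∧ ∀ x ∈ frontier Ω, ∀ r, 0 < r → r < r₀ →
      ENNReal.ofReal (c * r) ≤ μH[1] (frontier Ω ∩ Metric.ball x r) := by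
  suffices H : ∃ c r₀ : ℝ, 0 < c ∧ 0 < r₀ ∧ ∀ x ∈ frontier Ω, x ∈ frontier Ω →
      ∀ r, 0 < r → r < r₀ → ENNReal.ofReal (c * r) ≤ μH[1] (frontier Ω ∩ Metric.ball x r) by
    obtain ⟨c, r₀, hc, hr, H⟩ := H
    exact ⟨c, r₀, hc, hr, fun x hx => H x hx hx⟩
  refine (isCompact_frontier_of_bdd hΩb).induction_on
    (p := fun s => ∃ c r₀ : ℝ, 0 < c ∧ 0 < r₀ ∧ ∀ x ∈ s, x ∈ frontier Ω → ∀ r, 0 < r → r < r₀ →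
      ENNReal.ofReal (c * r) ≤ μH[1] (frontier Ω ∩ Metric.ball x r)) ?_ ?_ ?_ ?_
  · exact ⟨1, 1, one_pos, one_pos, by simp⟩
  · rintro s t hst ⟨c, r₀, hc, hr, H⟩
    exact ⟨c, r₀, hc, hr, fun x hx => H x (hst hx)⟩
  · rintro s t ⟨c, r₀, hc, hr, H⟩ ⟨c', r₀', hc', hr', H'⟩
    refine ⟨min c c', min r₀ r₀', lt_min hc hc', lt_min hr hr', ?_⟩
    rintro x (hx | hx) hxS r h0 h1
    · refine le_trans (ENNReal.ofReal_le_ofReal ?_) (H x hx hxS r h0 (h1.trans_le (min_le_left _ _)))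
      exact mul_le_mul_of_nonneg_right (min_le_left _ _) h0.le
    · refine le_trans (ENNReal.ofReal_le_ofReal ?_)
        (H' x hx hxS r h0 (h1.trans_le (min_le_right _ _)))
      exact mul_le_mul_of_nonneg_right (min_le_right _ _) h0.le
  · intro x₀ hx₀
    obtain ⟨i, j, ρ, Λ, hij, hρ, hΛ, -, hcov⟩ := local_graph h hx₀
    refine ⟨Metric.ball x₀ ρ, mem_nhdsWithin_of_mem_nhds (Metric.ball_mem_nhds x₀ hρ),
      2 / Λ, ρ, by positivity, hρ, ?_⟩
    intro x hx hxS r hr0 hrρ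
    have hlip : LipschitzWith 1 (fun y : E2 => y j) := by
      refine LipschitzWith.of_dist_le_mul fun y y' => ?_
      have := E2_abs_le j (y - y')
      rw [Real.dist_eq, dist_eq_norm]
      simpa using this
    have h1 := hlip.hausdorffMeasure_image_le (d := 1) zero_le_one (frontier Ω ∩ Metric.ball x r)
    rw [hausdorffMeasure_real] at h1
    simp only [ENNReal.coe_one, ENNReal.one_rpow, one_mul] at h1
    refine le_trans ?_ h1
    have h2 : Set.Icc (x j - r / Λ) (x j + r / Λ)
        ⊆ (fun y : E2 => y j) '' (frontier Ω ∩ Metric.ball x r) := by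
      intro s hs
      obtain ⟨y, hyS, hyd, hyj⟩ := hcov x ⟨hxS, hx⟩ r hr0 hrρ (s - x j)
        (abs_le.2 ⟨by linarith [hs.1], by linarith [hs.2]⟩)
      exact ⟨y, ⟨hyS, hyd⟩, by simp [hyj]⟩
    refine le_trans (le_of_eq ?_) (measure_mono h2)
    rw [Real.volume_Icc]
    congr 1
    ring

/-- The integral of `w` over the `ε`-neighbourhood of the boundary is at most `C ε` times the
boundary integral of `w`, up to the oscillation `η` of `w` at scale `2ε`.
Fubini's theorem is applied to the pairs `(z, x)` with `x ∈ ∂Ω` and `|z - x| < 2ε`: each `z` in the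
neighbourhood sees a length at least `c ε` of boundary, each `x` sees an area `4πε²`. -/
lemma tube_estimate {Ω : Set E2} (hΩb : Bornology.IsBounded Ω) (h : HasC2Boundary Ω) :
    ∃ C r₁ : ℝ, 0 < C ∧ 0 < r₁ ∧ ∀ w : E2 → ℝ, Continuous w → ∀ ε η : ℝ, 0 < ε → ε < r₁ →
      (∀ x ∈ frontier Ω, ∀ z, dist z x < 2 * ε → w z ≤ w x + η) →
      ∫⁻ z in Metric.cthickening ε (frontier Ω), ENNReal.ofReal (w z) ≤
        ENNReal.ofReal (C * ε) * ∫⁻ x in frontier Ω, ENNReal.ofReal (w x + η) ∂μH[1] := by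
  classical
  obtain ⟨c, r₀, hc, hr₀, hreg⟩ := frontier_lower_regular hΩb h
  have hfin := frontier_length_lt_top hΩb h
  set S := frontier Ω with hS
  have hScpt : IsCompact S := isCompact_frontier_of_bdd hΩb
  have hSm : MeasurableSet S := isClosed_frontier.measurableSet
  set V : ℝ := (volume (Metric.ball (0 : E2) 1)).toReal with hV
  have hV' : volume (Metric.ball (0 : E2) 1) = ENNReal.ofReal V :=
    (ENNReal.ofReal_toReal measure_ball_lt_top.ne).symm
  have hVpos : 0 < V := ENNReal.toReal_pos (Metric.measure_ball_pos volume _ one_pos).ne'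
    measure_ball_lt_top.ne
  refine ⟨4 * V / c, r₀, by positivity, hr₀, ?_⟩
  intro w hw ε η hε hεr hosc
  set μ : Measure E2 := μH[1].restrict S with hμ
  have : IsFiniteMeasure μ := ⟨by rw [hμ, Measure.restrict_apply_univ]; exact hfin⟩
  set N := Metric.cthickening ε S with hN
  set F : E2 × E2 → ENNReal := Set.indicator {p | dist p.1 p.2 < 2 * ε}
    (fun p => ENNReal.ofReal (w p.1)) with hF
  have hFm : Measurable F := by
    refine Measurable.indicator ?_ ?_
    · exact ENNReal.measurable_ofReal.comp (hw.measurable.comp measurable_fst)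
    · exact (isOpen_lt (by fun_prop) (by fun_prop)).measurableSet
  have hcε : ENNReal.ofReal (c * ε) ≠ 0 := by simp; positivity
  have step1 : ∀ z ∈ N, ENNReal.ofReal (c * ε) * ENNReal.ofReal (w z) ≤ ∫⁻ x, F (z, x) ∂μ := by
    intro z hz
    obtain ⟨x, hx, hzx⟩ : ∃ x ∈ S, dist z x ≤ ε := by
      rw [hN, hScpt.cthickening_eq_biUnion_closedBall hε.le] at hz
      simpa using hz
    have e1 : ∀ x, F (z, x) = Set.indicator (Metric.ball z (2 * ε))
        (fun _ => ENNReal.ofReal (w z)) x := by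
      intro x
      simp only [hF, Set.indicator_apply, Metric.mem_ball, Set.mem_ofPred_eq]
      rw [dist_comm]
    simp_rw [e1]
    rw [lintegral_indicator Metric.isOpen_ball.measurableSet, setLIntegral_const, mul_comm]
    refine mul_le_mul_right ?_ _
    refine (hreg x hx ε hε hεr).trans ?_
    rw [hμ, Measure.restrict_apply Metric.isOpen_ball.measurableSet, Set.inter_comm]
    refine measure_mono (Set.inter_subset_inter_left _ ?_)
    intro y hy
    have := dist_triangle y x z
    rw [Metric.mem_ball] at hy ⊢
    rw [dist_comm x z] at this
    linarith
  have step2 : ∀ x ∈ S, ∫⁻ z, F (z, x) ≤ ENNReal.ofReal (4 * ε ^ 2 * V) *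
      ENNReal.ofReal (w x + η) := by
    intro x hx
    have e1 : ∀ z, F (z, x) ≤ Set.indicator (Metric.ball x (2 * ε))
        (fun _ => ENNReal.ofReal (w x + η)) z := by
      intro z
      simp only [hF, Set.indicator_apply, Metric.mem_ball, Set.mem_ofPred_eq]
      split_ifs with hd
      · exact ENNReal.ofReal_le_ofReal (hosc x hx z hd)
      · exact le_rfl
    refine (lintegral_mono e1).trans ?_
    rw [lintegral_indicator Metric.isOpen_ball.measurableSet, setLIntegral_const, mul_comm,
      Measure.addHaar_ball volume x (by positivity : 0 ≤ 2 * ε), hV',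
      ← ENNReal.ofReal_mul (by positivity)]
    refine mul_le_mul_left (le_of_eq ?_) _
    congr 2
    simp only [finrank_euclideanSpace, Fintype.card_fin]
    ring
  have step3 : ENNReal.ofReal (c * ε) * ∫⁻ z in N, ENNReal.ofReal (w z) ≤
      ENNReal.ofReal (4 * ε ^ 2 * V) * ∫⁻ x in S, ENNReal.ofReal (w x + η) ∂μH[1] := by
    calc ENNReal.ofReal (c * ε) * ∫⁻ z in N, ENNReal.ofReal (w z)
        = ∫⁻ z in N, ENNReal.ofReal (c * ε) * ENNReal.ofReal (w z) := by
          rw [lintegral_const_mul]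
          exact ENNReal.measurable_ofReal.comp hw.measurable
      _ ≤ ∫⁻ z in N, ∫⁻ x, F (z, x) ∂μ :=
          setLIntegral_mono' Metric.isClosed_cthickening.measurableSet step1
      _ ≤ ∫⁻ z, ∫⁻ x, F (z, x) ∂μ := setLIntegral_le_lintegral _ _
      _ = ∫⁻ x, (∫⁻ z, F (z, x)) ∂μ :=
          lintegral_lintegral_swap (f := fun z x => F (z, x)) hFm.aemeasurable
      _ ≤ ∫⁻ x in S, ENNReal.ofReal (4 * ε ^ 2 * V) * ENNReal.ofReal (w x + η) ∂μH[1] :=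
          by rw [hμ]; exact setLIntegral_mono' hSm step2
      _ = _ := by
          rw [lintegral_const_mul]
          exact ENNReal.measurable_ofReal.comp (hw.measurable.add_const η)
  have e2 : ENNReal.ofReal (4 * ε ^ 2 * V)
      = ENNReal.ofReal (c * ε) * ENNReal.ofReal (4 * V / c * ε) := by
    rw [← ENNReal.ofReal_mul (by positivity)]
    congr 1
    field_simp
  rw [e2, mul_assoc] at step3
  exact (ENNReal.mul_le_mul_iff_right hcε ENNReal.ofReal_ne_top).1 step3

section

open scoped NNReal

/-- Lipschitz approximation of the indicator function of `Ω`, equal to `1` at distance at least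
`ε` from the complement. -/
noncomputable def cutoff (Ω : Set E2) (ε : ℝ) (x : E2) : ℝ := min (ε⁻¹ * Metric.infDist x Ωᶜ) 1

lemma cutoff_lip (Ω : Set E2) {ε : ℝ} (hε : 0 < ε) :
    LipschitzWith (Real.toNNReal ε⁻¹) (cutoff Ω ε) := by
  refine LipschitzWith.min_const (f := fun x => ε⁻¹ * Metric.infDist x Ωᶜ) ?_ 1
  refine LipschitzWith.of_dist_le_mul fun x y => ?_
  have := (Metric.lipschitz_infDist_pt Ωᶜ).dist_le_mul x y
  rw [Real.coe_toNNReal _ (by positivity), Real.dist_eq, ← mul_sub, abs_mul,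
    abs_of_pos (by positivity : 0 < ε⁻¹)]
  rw [Real.dist_eq] at this
  simp only [NNReal.coe_one, one_mul] at this
  gcongr

lemma cutoff_nonneg (Ω : Set E2) {ε : ℝ} (hε : 0 < ε) (x : E2) : 0 ≤ cutoff Ω ε x :=
  le_min (mul_nonneg (by positivity) Metric.infDist_nonneg) zero_le_one

lemma cutoff_eq_zero (Ω : Set E2) (ε : ℝ) {x : E2} (hx : x ∉ Ω) : cutoff Ω ε x = 0 := by
  rw [cutoff, Metric.infDist_zero_of_mem (show x ∈ Ωᶜ from hx)]
  simp

lemma compl_nonempty_of_bdd {Ω : Set E2} (hΩb : Bornology.IsBounded Ω) : (Ωᶜ).Nonempty := by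
  rw [Set.nonempty_compl]
  rintro rfl
  exact NormedSpace.unbounded_univ ℝ E2 hΩb

/-- The cutoff is locally constant away from the `ε`-neighbourhood of the boundary. -/
lemma cutoff_lineDeriv_eq_zero {Ω : Set E2} (hΩo : IsOpen Ω) (hΩb : Bornology.IsBounded Ω)
    {ε : ℝ} (hε : 0 < ε) (v x : E2) (hx : x ∉ Metric.cthickening ε (frontier Ω)) :
    lineDeriv ℝ (cutoff Ω ε) x v = 0 := by
  have hne := compl_nonempty_of_bdd hΩb
  have hcl : IsClosed Ωᶜ := hΩo.isClosed_compl
  have hconst : ∀ a : ℝ, cutoff Ω ε =ᶠ[nhds x] (fun _ => a) → lineDeriv ℝ (cutoff Ω ε) x v = 0 := by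
    intro a ha
    rw [ha.lineDeriv_eq]
    simp [lineDeriv]
  by_cases hxΩ : x ∈ Ω
  · refine hconst 1 ?_
    obtain ⟨p, hp, hd⟩ := hcl.exists_infDist_eq_dist hne x
    have hd0 : 0 < Metric.infDist x Ωᶜ :=
      (hcl.notMem_iff_infDist_pos hne).1 (by simpa using hxΩ)
    have hball : Metric.ball x (Metric.infDist x Ωᶜ) ⊆ Ω := by
      have := Metric.ball_infDist_compl_subset (s := Ω) (x := x)
      exact this
    have hpS : p ∈ frontier Ω := by
      rw [hΩo.frontier_eq]
      refine ⟨closure_mono hball ?_, hp⟩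
      rw [closure_ball x hd0.ne', Metric.mem_closedBall, dist_comm, hd]
    have hgt : ε < Metric.infDist x Ωᶜ := by
      by_contra! hle
      rw [hd] at hle
      exact hx (Metric.mem_cthickening_of_dist_le x p ε _ hpS hle)
    have hev : ∀ᶠ y in nhds x, ε < Metric.infDist y Ωᶜ :=
      (Metric.continuous_infDist_pt Ωᶜ).continuousAt.eventually (lt_mem_nhds hgt)
    filter_upwards [hev] with y hy
    rw [cutoff, min_eq_right]
    rw [inv_mul_eq_div, le_div_iff₀ hε]; linarith
  · refine hconst 0 ?_
    have hxcl : x ∈ (closure Ω)ᶜ := by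
      intro hc
      refine hx (Metric.self_subset_cthickening _ ?_)
      rw [hΩo.frontier_eq]
      exact ⟨hc, hxΩ⟩
    filter_upwards [isClosed_closure.isOpen_compl.mem_nhds hxcl] with y hy
    exact cutoff_eq_zero Ω ε (fun h => hy (subset_closure h))

/-- `∫_Ω ∂ᵥφ` is the limit of `∫ ∂ᵥφ · cutoff = -∫ φ ∂ᵥcutoff` as `ε → 0`; the derivative of the cutoff
is `O(ε⁻¹)` and lives on a tube of width `ε` around the boundary, where `tube_estimate` applies. -/
lemma boundary_div_compact {Ω : Set E2} (hΩo : IsOpen Ω) (hΩb : Bornology.IsBounded Ω)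
    (h : HasC2Boundary Ω) :
    ∃ C : ℝ, 0 < C ∧ ∀ φ : E2 → ℝ, ContDiff ℝ 1 φ → HasCompactSupport φ → ∀ v : E2, ‖v‖ = 1 →
      |∫ x in Ω, fderiv ℝ φ x v| ≤ C * ∫ x in frontier Ω, |φ x| ∂μH[1] := by
  obtain ⟨C, r₁, hC, hr₁, htube⟩ := tube_estimate hΩb h
  have hfin := frontier_length_lt_top hΩb h
  refine ⟨C, hC, ?_⟩
  intro φ hφ hφc v hv
  set S := frontier Ω with hS
  set μ : Measure E2 := μH[1].restrict S with hμ
  have : IsFiniteMeasure μ := ⟨by rw [hμ, Measure.restrict_apply_univ]; exact hfin⟩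
  have hne := compl_nonempty_of_bdd hΩb
  have hcl : IsClosed Ωᶜ := hΩo.isClosed_compl
  obtain ⟨K, hK⟩ := ContDiff.lipschitzWith_of_hasCompactSupport hφc hφ (by simp)
  have hdc : Continuous (fun x => fderiv ℝ φ x v) :=
    (hφ.continuous_fderiv (by simp)).clm_apply continuous_const
  have hdcs : HasCompactSupport (fun x => fderiv ℝ φ x v) := hφc.fderiv_apply ℝ v
  have hdint : Integrable (fun x => fderiv ℝ φ x v) := hdc.integrable_of_hasCompactSupport hdcs
  have hφint : Integrable (fun x => |φ x|) μ := by
    obtain ⟨B, hB⟩ := hφc.exists_bound_of_continuous hφ.continuous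
    exact Integrable.of_bound (hφ.continuous.abs.aestronglyMeasurable) B
      (ae_of_all _ fun x => by simpa using hB x)
  -- the bound at scale `ε`, up to the oscillation `η` of `φ`
  have main : ∀ η : ℝ, 0 < η → ∀ᶠ ε in nhdsWithin (0:ℝ) (Set.Ioi 0),
      |∫ x, fderiv ℝ φ x v * cutoff Ω ε x| ≤ C * ∫ x, (|φ x| + η) ∂μ := by
    intro η hη
    have huc : UniformContinuous φ := hK.uniformContinuous
    obtain ⟨d, hd, hdφ⟩ := Metric.uniformContinuous_iff.1 huc η hη
    have : ∀ᶠ ε in nhdsWithin (0:ℝ) (Set.Ioi 0), ε < min r₁ (d / 2) :=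
      nhdsWithin_le_nhds (gt_mem_nhds (lt_min hr₁ (by positivity)))
    filter_upwards [this, self_mem_nhdsWithin] with ε hε hε0
    have hε0 : 0 < ε := hε0
    have hosc : ∀ x ∈ S, ∀ z, dist z x < 2 * ε → |φ z| ≤ |φ x| + η := by
      intro x _ z hz
      have h1 : dist z x < d := by linarith [min_le_right r₁ (d / 2)]
      have h2 := hdφ h1
      rw [Real.dist_eq] at h2
      have := abs_sub_abs_le_abs_sub (φ z) (φ x)
      linarith
    have ht := htube (fun z => |φ z|) hφ.continuous.abs ε η hε0 (hε.trans_le (min_le_left _ _)) hosc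
    have hcs : HasCompactSupport (cutoff Ω ε) := by
      refine HasCompactSupport.intro (K := closure Ω) hΩb.isCompact_closure ?_
      intro x hx
      exact cutoff_eq_zero Ω ε (fun h => hx (subset_closure h))
    have hibp := LipschitzWith.integral_lineDeriv_mul_eq (μ := volume) hK (cutoff_lip Ω hε0) hcs v
    have e1 : ∀ x, lineDeriv ℝ φ x v = fderiv ℝ φ x v := fun x =>
      (hφ.differentiable (by simp) x).lineDeriv_eq_fderiv
    simp_rw [e1] at hibp
    rw [hibp]
    have hInt0 : 0 ≤ ∫ x, (|φ x| + η) ∂μ := integral_nonneg fun x => by positivity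
    rw [← Real.norm_eq_abs]
    refine (norm_integral_le_lintegral_norm _).trans ?_
    refine ENNReal.toReal_le_of_le_ofReal (by positivity) ?_
    calc ∫⁻ x, ENNReal.ofReal ‖lineDeriv ℝ (cutoff Ω ε) x (-v) * φ x‖
        ≤ ∫⁻ x in Metric.cthickening ε S, ENNReal.ofReal ε⁻¹ * ENNReal.ofReal |φ x| := by
          rw [← lintegral_indicator Metric.isClosed_cthickening.measurableSet]
          refine lintegral_mono fun x => ?_
          by_cases hx : x ∈ Metric.cthickening ε S
          · rw [Set.indicator_of_mem hx, ← ENNReal.ofReal_mul (by positivity), norm_mul,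
              Real.norm_eq_abs (φ x)]
            refine ENNReal.ofReal_le_ofReal (mul_le_mul_of_nonneg_right ?_ (abs_nonneg _))
            have := norm_lineDeriv_le_of_lipschitz ℝ (x₀ := x) (v := -v) (cutoff_lip Ω hε0)
            rwa [norm_neg, hv, mul_one, Real.coe_toNNReal _ (by positivity)] at this
          · rw [cutoff_lineDeriv_eq_zero hΩo hΩb hε0 _ _ hx]
            simp
      _ = ENNReal.ofReal ε⁻¹ * ∫⁻ x in Metric.cthickening ε S, ENNReal.ofReal |φ x| := by
          rw [lintegral_const_mul]
          exact ENNReal.measurable_ofReal.comp hφ.continuous.abs.measurable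
      _ ≤ ENNReal.ofReal ε⁻¹ * (ENNReal.ofReal (C * ε) * ∫⁻ x, ENNReal.ofReal (|φ x| + η) ∂μ) := by
          gcongr
      _ = ENNReal.ofReal (C * ∫ x, (|φ x| + η) ∂μ) := by
          have hi : Integrable (fun x => |φ x| + η) μ := hφint.add (integrable_const _)
          rw [← ofReal_integral_eq_lintegral_ofReal hi (ae_of_all _ fun x => by positivity), ← ENNReal.ofReal_mul (by positivity),
            ← ENNReal.ofReal_mul (by positivity)]
          congr 1
          field_simp
  have hlim : Tendsto (fun ε => ∫ x, fderiv ℝ φ x v * cutoff Ω ε x)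
      (nhdsWithin (0:ℝ) (Set.Ioi 0)) (nhds (∫ x in Ω, fderiv ℝ φ x v)) := by
    rw [← integral_indicator hΩo.measurableSet]
    refine tendsto_integral_filter_of_dominated_convergence (fun x => ‖fderiv ℝ φ x v‖) ?_ ?_
      hdint.norm ?_
    · filter_upwards [self_mem_nhdsWithin] with ε hε
      exact (hdc.mul (cutoff_lip Ω hε).continuous).aestronglyMeasurable
    · filter_upwards [self_mem_nhdsWithin] with ε hε
      refine ae_of_all _ fun x => ?_
      rw [norm_mul]
      refine mul_le_of_le_one_right (norm_nonneg _) ?_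
      rw [Real.norm_of_nonneg (cutoff_nonneg Ω hε x)]
      exact min_le_right _ _
    · refine ae_of_all _ fun x => ?_
      by_cases hx : x ∈ Ω
      · rw [Set.indicator_of_mem hx]
        refine tendsto_const_nhds.congr' ?_
        have hd0 : 0 < Metric.infDist x Ωᶜ :=
          (hcl.notMem_iff_infDist_pos hne).1 (by simpa using hx)
        have : ∀ᶠ ε in nhdsWithin (0:ℝ) (Set.Ioi 0), ε < Metric.infDist x Ωᶜ :=
          nhdsWithin_le_nhds (gt_mem_nhds hd0)
        filter_upwards [this, self_mem_nhdsWithin] with ε hε hε0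
        have hε0 : 0 < ε := hε0
        rw [cutoff, min_eq_right, mul_one]
        rw [inv_mul_eq_div, le_div_iff₀ hε0]; linarith
      · rw [Set.indicator_of_notMem hx]
        simp [cutoff_eq_zero Ω _ hx]
  have hle : ∀ η : ℝ, 0 < η →
      |∫ x in Ω, fderiv ℝ φ x v| ≤ C * (∫ x, |φ x| ∂μ) + η * (C * μ.real Set.univ) := by
    intro η hη
    have := le_of_tendsto hlim.abs (main η hη)
    rw [integral_add hφint (integrable_const _), integral_const, smul_eq_mul] at this
    linarith
  have hl2 : Tendsto (fun η : ℝ => C * (∫ x, |φ x| ∂μ) + η * (C * μ.real Set.univ))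
      (nhdsWithin (0:ℝ) (Set.Ioi 0)) (nhds (C * (∫ x, |φ x| ∂μ) + 0 * (C * μ.real Set.univ))) := by
    refine Tendsto.mono_left ?_ nhdsWithin_le_nhds
    exact Continuous.tendsto (by fun_prop) 0
  rw [zero_mul, add_zero] at hl2
  refine ge_of_tendsto hl2 ?_
  filter_upwards [self_mem_nhdsWithin] with η hη using hle η hη

/-- A one-sided form of the divergence theorem for a bounded open set with `C²` boundary: the
integral of a derivative is controlled by the boundary integral of the function. -/
lemma boundary_div {Ω : Set E2} (hΩo : IsOpen Ω) (hΩb : Bornology.IsBounded Ω)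
    (h : HasC2Boundary Ω) :
    ∃ C : ℝ, 0 < C ∧ ∀ φ : E2 → ℝ, ContDiff ℝ 1 φ → ∀ v : E2, ‖v‖ = 1 →
      |∫ x in Ω, fderiv ℝ φ x v| ≤ C * ∫ x in frontier Ω, |φ x| ∂μH[1] := by
  obtain ⟨C, hC, H⟩ := boundary_div_compact hΩo hΩb h
  refine ⟨C, hC, ?_⟩
  intro φ hφ v hv
  obtain ⟨R, hR⟩ := hΩb.closure.subset_ball 0
  have hR1 : closure Ω ⊆ Metric.ball 0 (max R 1) :=
    hR.trans (Metric.ball_subset_ball (le_max_left _ _))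
  let χ : ContDiffBump (0 : E2) :=
    ⟨max R 1, max R 1 + 1, lt_of_lt_of_le one_pos (le_max_right _ _), by linarith⟩
  have hχ1 : ∀ x ∈ Metric.ball (0 : E2) (max R 1), χ x = 1 := fun x hx =>
    χ.one_of_mem_closedBall (Metric.ball_subset_closedBall hx)
  have h1 := H (fun x => χ x * φ x) (χ.contDiff.mul hφ) χ.hasCompactSupport.mul_right v hv
  have e1 : ∫ x in Ω, fderiv ℝ (fun x => χ x * φ x) x v = ∫ x in Ω, fderiv ℝ φ x v := by
    refine setIntegral_congr_fun hΩo.measurableSet fun x hx => ?_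
    have : (fun x => χ x * φ x) =ᶠ[nhds x] φ := by
      filter_upwards [Metric.isOpen_ball.mem_nhds (hR1 (subset_closure hx))] with y hy
      rw [hχ1 y hy, one_mul]
    simp only [this.fderiv_eq]
  have e2 : ∫ x in frontier Ω, |χ x * φ x| ∂μH[1] = ∫ x in frontier Ω, |φ x| ∂μH[1] := by
    refine setIntegral_congr_fun isClosed_frontier.measurableSet fun x hx => ?_
    simp only [hχ1 x (hR1 (frontier_subset_closure hx)), one_mul]
  rw [e1, e2] at h1
  exact h1

end

/-! ### Entire power series and Bessel functions -/

/-- The real power series with coefficients `c`. -/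
noncomputable def ps (c : ℕ → ℝ) (t : ℝ) : ℝ := ∑' m, c m * t ^ m

/-- Coefficients of the derived series. -/
noncomputable def dc (c : ℕ → ℝ) (m : ℕ) : ℝ := (m + 1) * c (m + 1)

/-- Exponential-type decay of coefficients, a condition stable under differentiation which makes
the series entire. -/
def Ent (c : ℕ → ℝ) : Prop :=
  ∃ A B : ℝ, 0 ≤ A ∧ 0 ≤ B ∧ ∀ m, |c m| ≤ B * (A ^ m / (m.factorial : ℝ))

lemma Ent.dc {c : ℕ → ℝ} (h : Ent c) : Ent (dc c) := by
  obtain ⟨A, B, hA, hB, H⟩ := h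
  refine ⟨A, B * A, hA, by positivity, fun m => ?_⟩
  have h1 := H (m + 1)
  rw [_root_.dc, abs_mul, abs_of_nonneg (by positivity : (0:ℝ) ≤ (m:ℝ) + 1)]
  calc ((m:ℝ) + 1) * |c (m + 1)| ≤ (m + 1) * (B * (A ^ (m + 1) / ((m + 1).factorial : ℝ))) := by
        gcongr
    _ = B * A * (A ^ m / (m.factorial : ℝ)) := by
        rw [Nat.factorial_succ, pow_succ]; push_cast
        field_simp

lemma Ent.summable_norm {c : ℕ → ℝ} (h : Ent c) (t : ℝ) : Summable fun m => ‖c m * t ^ m‖ := by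
  obtain ⟨A, B, hA, hB, H⟩ := h
  refine Summable.of_nonneg_of_le (fun _ => norm_nonneg _) (fun m => ?_)
    ((Real.summable_pow_div_factorial (A * |t|)).mul_left B)
  rw [norm_mul, norm_pow, Real.norm_eq_abs, Real.norm_eq_abs, mul_pow]
  calc |c m| * |t| ^ m ≤ (B * (A ^ m / (m.factorial : ℝ))) * |t| ^ m := by
        gcongr; exact H m
    _ = _ := by ring

lemma Ent.summable {c : ℕ → ℝ} (h : Ent c) (t : ℝ) : Summable fun m => c m * t ^ m :=
  (h.summable_norm t).of_norm

lemma Ent.hasDerivAt {c : ℕ → ℝ} (h : Ent c) (t : ℝ) : HasDerivAt (ps c) (ps (_root_.dc c) t) t := by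
  set R : ℝ := |t| + 1 with hR
  have hR0 : 0 ≤ R := by positivity
  have hu : Summable (fun m : ℕ => |c m| * (m * R ^ (m - 1))) := by
    rw [← summable_nat_add_iff 1]
    have := h.dc.summable_norm R
    refine this.congr fun m => ?_
    rw [norm_mul, norm_pow, Real.norm_eq_abs, Real.norm_eq_abs, _root_.dc, abs_mul,
      abs_of_nonneg (by positivity : (0:ℝ) ≤ (m:ℝ) + 1), abs_of_nonneg hR0]
    push_cast
    ring
  have key := hasDerivAt_tsum_of_isPreconnected (g := fun m t => c m * t ^ m)
    (g' := fun m t => c m * (m * t ^ (m - 1))) (t := Metric.ball 0 R) (y₀ := 0) (y := t)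
    hu Metric.isOpen_ball (convex_ball (0:ℝ) R).isPreconnected
    (fun m y _ => (hasDerivAt_pow m y).const_mul (c m)) ?_ (Metric.mem_ball_self (by positivity))
    (h.summable 0) (by simp [hR])
  · have e : ps (_root_.dc c) t = ∑' m : ℕ, c m * (m * t ^ (m - 1)) := by
      rw [Summable.tsum_eq_zero_add (f := fun m => c m * (m * t ^ (m - 1)))]
      · simp only [Nat.cast_zero, zero_mul, mul_zero, zero_add, Nat.add_sub_cancel]
        unfold ps
        congr 1; funext m; rw [_root_.dc]; push_cast; ring
      · rw [← summable_nat_add_iff 1]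
        refine (h.dc.summable t).congr fun m => ?_
        rw [_root_.dc, Nat.add_sub_cancel]; push_cast; ring
    rw [e]; exact key
  · intro m y hy
    rw [norm_mul, norm_mul, norm_pow, Real.norm_eq_abs, Real.norm_natCast]
    have : ‖y‖ ≤ R := by simpa using (Metric.mem_ball.1 hy).le
    gcongr

lemma Ent.continuous {c : ℕ → ℝ} (h : Ent c) : Continuous (ps c) :=
  continuous_iff_continuousAt.2 fun t => (h.hasDerivAt t).continuousAt

lemma ps_zero (c : ℕ → ℝ) : ps c 0 = c 0 := by
  rw [ps, tsum_eq_single 0]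
  · simp
  · intro m hm; simp [hm]

/-- The operator `t ∂² + ∂ + 1`, which annihilates `t ↦ J₀(2√t)`, acting on a power series. -/
lemma Ent.bessel_op {c : ℕ → ℝ} (h : Ent c) (t : ℝ) :
    t * ps (_root_.dc (_root_.dc c)) t + ps (_root_.dc c) t + ps c t
      = ps (fun m => ((m:ℝ) + 1) ^ 2 * c (m + 1) + c m) t := by
  have h2 := (h.dc.dc.summable t).hasSum
  have h1 := (h.dc.summable t).hasSum
  have h0 := (h.summable t).hasSum
  have h2' : HasSum (fun m : ℕ => (m:ℝ) * (m + 1) * c (m + 1) * t ^ m)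
      (t * ps (_root_.dc (_root_.dc c)) t) := by
    rw [← hasSum_nat_add_iff' 1]
    simp only [Finset.range_one, Finset.sum_singleton, Nat.cast_zero, zero_mul, sub_zero]
    have e : (fun m : ℕ => ((m + 1 : ℕ):ℝ) * (((m + 1 : ℕ):ℝ) + 1) * c (m + 1 + 1) * t ^ (m + 1))
        = fun m => t * (_root_.dc (_root_.dc c) m * t ^ m) := by
      funext m
      simp only [_root_.dc]; push_cast; ring
    rw [e]; exact h2.mul_left t
  have := (h2'.add h1).add h0
  unfold ps at this ⊢
  rw [← this.tsum_eq]
  congr 1; funext m; rw [_root_.dc]; ring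

/-- Coefficients of `t ↦ J₀(2√t)`. -/
noncomputable def jc (m : ℕ) : ℝ := (-1) ^ m / (m.factorial : ℝ) ^ 2

/-- Real partial harmonic sums. -/
noncomputable def hs (m : ℕ) : ℝ := ∑ j ∈ Finset.range m, (1 : ℝ) / (j + 1)

/-- Coefficients of the entire correction in the series of `Y₀(2√t)`. -/
noncomputable def qc (m : ℕ) : ℝ := (-1) ^ m * hs m / (m.factorial : ℝ) ^ 2

lemma fact_pos' (m : ℕ) : (0:ℝ) < m.factorial := by exact_mod_cast m.factorial_pos

lemma one_le_fact (m : ℕ) : (1:ℝ) ≤ m.factorial := by exact_mod_cast m.factorial_pos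

lemma abs_jc (m : ℕ) : |jc m| = 1 / (m.factorial : ℝ) ^ 2 := by
  rw [jc, abs_div, abs_pow, abs_neg, abs_one, one_pow, abs_of_nonneg (by positivity)]

lemma ent_jc : Ent jc := by
  refine ⟨1, 1, zero_le_one, zero_le_one, fun m => ?_⟩
  rw [abs_jc, one_pow, one_mul]
  have := one_le_fact m
  apply one_div_le_one_div_of_le (by positivity)
  nlinarith

lemma hs_nonneg (m : ℕ) : 0 ≤ hs m := Finset.sum_nonneg fun _ _ => by positivity

lemma hs_le (m : ℕ) : hs m ≤ m := by
  calc hs m ≤ ∑ j ∈ Finset.range m, (1:ℝ) := by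
        refine Finset.sum_le_sum fun j _ => ?_
        rw [div_le_one (by positivity)]
        have : (0:ℝ) ≤ j := by positivity
        linarith
    _ = m := by simp

lemma ent_qc : Ent qc := by
  refine ⟨1, 1, zero_le_one, zero_le_one, fun m => ?_⟩
  rw [qc, abs_div, abs_mul, abs_pow, abs_neg, abs_one, one_pow, one_mul, one_mul,
    abs_of_nonneg (hs_nonneg m), abs_of_nonneg (by positivity)]
  have h1 : hs m ≤ m.factorial := (hs_le m).trans (by exact_mod_cast m.self_le_factorial)
  have := fact_pos' m
  rw [div_le_div_iff₀ (by positivity) this]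
  nlinarith

/-- The Bessel equation for `J₀(2√t)`. -/
lemma jc_ode (t : ℝ) : t * ps (dc (dc jc)) t + ps (dc jc) t + ps jc t = 0 := by
  rw [ent_jc.bessel_op]
  have : (fun m : ℕ => ((m:ℝ) + 1) ^ 2 * jc (m + 1) + jc m) = fun _ => 0 := by
    funext m
    have := fact_pos' m
    simp only [jc, Nat.factorial_succ, pow_succ]
    push_cast
    field_simp
    ring
  rw [this]; simp [ps]

/-- The inhomogeneous equation satisfied by the entire correction in `Y₀(2√t)`. -/
lemma qc_ode (t : ℝ) : t * ps (dc (dc qc)) t + ps (dc qc) t + ps qc t = ps (dc jc) t := by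
  rw [ent_qc.bessel_op]
  congr 1
  funext m
  have := fact_pos' m
  simp only [jc, qc, dc, hs, Nat.factorial_succ, pow_succ, Finset.sum_range_succ]
  push_cast
  field_simp
  ring

lemma besselJ0_ofReal (z : ℝ) : besselJ0 (z : ℂ) = (ps jc ((z / 2) ^ 2) : ℝ) := by
  rw [besselJ0, ps, Complex.ofReal_tsum]
  congr 1; funext m
  simp only [jc]; push_cast; rw [pow_mul]; ring

lemma besselY0_ofReal {z : ℝ} (hz : 0 < z) : besselY0 (z : ℂ) =
    ((2 / Real.pi * ((Real.eulerMascheroniConstant + Real.log (z / 2)) * ps jc ((z / 2) ^ 2)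
      - ps qc ((z / 2) ^ 2)) : ℝ) : ℂ) := by
  have h1 : ps qc ((z / 2) ^ 2) = ∑' m : ℕ, qc (m + 1) * ((z / 2) ^ 2) ^ (m + 1) := by
    have := (ent_qc.summable ((z / 2) ^ 2)).tsum_eq_zero_add
    rw [ps, this]
    simp [qc, hs]
  rw [besselY0, besselJ0_ofReal, h1]
  push_cast
  rw [Complex.ofReal_log (by positivity)]
  push_cast
  congr 3
  funext m
  simp only [qc, harmSum, hs]; push_cast; rw [pow_mul]; ring

lemma ps_jc_zero : ps jc 0 = 1 := by rw [ps_zero]; simp [jc]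

/-- Error in truncating the series of `J₀(2√t)`. -/
lemma ps_jc_trunc (n : ℕ) (t : ℝ) (ht : 0 ≤ t) :
    |ps jc t - ∑ m ∈ Finset.range n, jc m * t ^ m| ≤
      ∑' m : ℕ, t ^ (m + n) / ((m + n).factorial : ℝ) ^ 2 := by
  have h := ent_jc.summable t
  rw [ps, ← h.sum_add_tsum_nat_add n, add_sub_cancel_left]
  have h2 := (summable_nat_add_iff n).2 (ent_jc.summable_norm t)
  refine (norm_tsum_le_tsum_norm h2).trans (le_of_eq ?_)
  congr 1; funext m
  rw [norm_mul, Real.norm_eq_abs, abs_jc, norm_pow, Real.norm_eq_abs, abs_of_nonneg ht]; ring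

/-! ### Poisson's integral -/

lemma prod_odd_even (n : ℕ) : ∏ i ∈ Finset.range n, (2 * (i : ℝ) + 1) / (2 * i + 2)
    = ((2 * n).factorial : ℝ) / (4 ^ n * (n.factorial : ℝ) ^ 2) := by
  induction n with
  | zero => simp
  | succ n ih =>
    rw [Finset.prod_range_succ, ih, show 2 * (n + 1) = (2 * n + 1) + 1 by ring,
      Nat.factorial_succ, Nat.factorial_succ, Nat.factorial_succ]
    have := fact_pos' n
    push_cast
    field_simp
    ring

lemma integral_sin_even (n : ℕ) : ∫ θ in (-Real.pi)..Real.pi, Real.sin θ ^ (2 * n)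
    = 2 * Real.pi * (((2 * n).factorial : ℝ) / (4 ^ n * (n.factorial : ℝ) ^ 2)) := by
  have hi : ∀ a b, IntervalIntegrable (fun θ => Real.sin θ ^ (2 * n)) volume a b := fun a b =>
    (by fun_prop : Continuous fun θ => Real.sin θ ^ (2 * n)).intervalIntegrable a b
  rw [← intervalIntegral.integral_add_adjacent_intervals (hi _ 0) (hi 0 _)]
  have e : ∫ θ in (-Real.pi)..0, Real.sin θ ^ (2 * n) = ∫ θ in (0:ℝ)..Real.pi, Real.sin θ ^ (2 * n) := by
    have := intervalIntegral.integral_comp_neg (a := 0) (b := Real.pi)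
      (fun θ => Real.sin θ ^ (2 * n))
    rw [neg_zero] at this
    rw [← this]
    congr 1; funext θ
    rw [Real.sin_neg, pow_mul, pow_mul, neg_sq]
  rw [e, integral_sin_pow_even, prod_odd_even]; ring

/-- Poisson's integral for `J₀`, obtained by integrating the cosine series term by term. -/
lemma integral_cos_sin (z : ℝ) : ∫ θ in (-Real.pi)..Real.pi, Real.cos (z * Real.sin θ)
    = 2 * Real.pi * ps jc (z ^ 2 / 4) := by
  have hs : HasSum (fun n : ℕ => ∫ θ in (-Real.pi)..Real.pi,
      (-1) ^ n * (z * Real.sin θ) ^ (2 * n) / ((2 * n).factorial : ℝ))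
      (∫ θ in (-Real.pi)..Real.pi, Real.cos (z * Real.sin θ)) := by
    apply intervalIntegral.hasSum_integral_of_dominated_convergence
      (bound := fun n _ => |z| ^ (2 * n) / ((2 * n).factorial : ℝ))
    · intro n
      exact (by fun_prop : Continuous fun θ : ℝ =>
        (-1) ^ n * (z * Real.sin θ) ^ (2 * n) / ((2 * n).factorial : ℝ)).aestronglyMeasurable
    · intro n
      refine Eventually.of_forall fun θ _ => ?_
      rw [norm_div, norm_mul, norm_pow, norm_neg, norm_one, one_pow, one_mul, norm_pow, norm_mul,
        Real.norm_eq_abs, Real.norm_eq_abs, Real.norm_natCast]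
      have := Real.abs_sin_le_one θ
      gcongr
      nlinarith [abs_nonneg z]
    · refine Eventually.of_forall fun θ _ => ?_
      exact (Real.summable_pow_div_factorial |z|).comp_injective (i := fun n : ℕ => 2 * n)
        (fun a b h => by simpa using h)
    · exact intervalIntegrable_const
    · exact Eventually.of_forall fun θ _ => Real.hasSum_cos _
  rw [← hs.tsum_eq, ps, ← tsum_mul_left]
  congr 1; funext n
  have e : ∀ θ : ℝ, (-1) ^ n * (z * Real.sin θ) ^ (2 * n) / ((2 * n).factorial : ℝ)
     = ((-1) ^ n * z ^ (2 * n) / ((2 * n).factorial : ℝ)) * Real.sin θ ^ (2 * n) := fun θ => by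
    rw [mul_pow]; ring
  simp only [e]
  rw [intervalIntegral.integral_const_mul, integral_sin_even, jc]
  have := fact_pos' n
  have := fact_pos' (2 * n)
  rw [div_pow, ← pow_mul]
  field_simp

lemma integral_cos_circle (a b : ℝ) :
    ∫ θ in (-Real.pi)..Real.pi, Real.cos (a * Real.cos θ + b * Real.sin θ)
    = 2 * Real.pi * ps jc ((a ^ 2 + b ^ 2) / 4) := by
  set w : ℂ := ⟨b, a⟩ with hw
  have hb : ‖w‖ * Real.cos w.arg = b := Complex.norm_mul_cos_arg w
  have ha : ‖w‖ * Real.sin w.arg = a := Complex.norm_mul_sin_arg w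
  have e : ∀ θ : ℝ, Real.cos (a * Real.cos θ + b * Real.sin θ)
      = (fun θ => Real.cos (‖w‖ * Real.sin θ)) (θ + w.arg) := fun θ => by
    simp only [Real.sin_add]
    rw [← ha, ← hb]
    congr 1
    ring
  simp only [e]
  rw [intervalIntegral.integral_comp_add_right (fun θ => Real.cos (‖w‖ * Real.sin θ))]
  have hp : Function.Periodic (fun θ => Real.cos (‖w‖ * Real.sin θ)) (2 * Real.pi) := fun θ => by
    simp only [Real.sin_add_two_pi]
  have := hp.intervalIntegral_add_eq (-Real.pi + w.arg) (-Real.pi)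
  rw [show -Real.pi + w.arg + 2 * Real.pi = Real.pi + w.arg by ring,
    show -Real.pi + 2 * Real.pi = Real.pi by ring] at this
  rw [this, integral_cos_sin]
  congr 2
  rw [← ha, ← hb]
  have := Real.sin_sq_add_cos_sq w.arg
  rw [show (‖w‖ * Real.sin w.arg) ^ 2 + (‖w‖ * Real.cos w.arg) ^ 2
    = ‖w‖ ^ 2 * (Real.sin w.arg ^ 2 + Real.cos w.arg ^ 2) by ring, this, mul_one]

/-! ### Helmholtz kernels and fundamental solutions -/

lemma Ent.contDiff_nat {c : ℕ → ℝ} (h : Ent c) (n : ℕ) : ContDiff ℝ n (ps c) := by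
  induction n generalizing c with
  | zero => exact contDiff_zero.2 h.continuous
  | succ n ih =>
    push_cast
    rw [contDiff_succ_iff_deriv]
    refine ⟨fun t => (h.hasDerivAt t).differentiableAt, by simp, ?_⟩
    rw [show deriv (ps c) = ps (_root_.dc c) from funext fun t => (h.hasDerivAt t).deriv]
    exact ih h.dc

/-- Coordinate vectors of the plane. -/
noncomputable abbrev ev (i : Fin 2) : E2 := EuclideanSpace.single i 1

lemma hasFDerivAt_normSq (z : E2) (i : Fin 2) :
    fderiv ℝ (fun z : E2 => ‖z‖ ^ 2) z (ev i) = 2 * z i := by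
  have := (hasStrictFDerivAt_norm_sq z).hasFDerivAt.fderiv
  rw [this]
  simp [EuclideanSpace.inner_single_right]

lemma fderiv_radial {G : ℝ → ℝ} {G1 : ℝ} {z : E2} (h : HasDerivAt G G1 (‖z‖ ^ 2)) (i : Fin 2) :
    fderiv ℝ (fun z : E2 => G (‖z‖ ^ 2)) z (ev i) = 2 * z i * G1 := by
  have h1 : HasFDerivAt (fun z : E2 => ‖z‖ ^ 2) (fderiv ℝ (fun z : E2 => ‖z‖ ^ 2) z) z :=
    ((contDiff_norm_sq ℝ (n := 1)).differentiable (by norm_num) z).hasFDerivAt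
  have h2 := h.comp_hasFDerivAt z h1
  have h3 : fderiv ℝ (fun z : E2 => G (‖z‖ ^ 2)) z = _ := h2.fderiv
  rw [h3]
  simp only [FunLike.coe_smul, Pi.smul_apply, smul_eq_mul]
  rw [hasFDerivAt_normSq]; ring

lemma differentiable_radial {G G1 : ℝ → ℝ} (h : ∀ s, 0 ≤ s → HasDerivAt G (G1 s) s) :
    Differentiable ℝ (fun z : E2 => G (‖z‖ ^ 2)) := fun z =>
  (h _ (by positivity)).differentiableAt.comp z
    ((contDiff_norm_sq ℝ (n := 1)).differentiable (by norm_num) z)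

/-- The Laplacian of a radial function, in terms of the variable `s = ‖z‖²`. -/
lemma lapR_radial {G G1 G2 : ℝ → ℝ} (h1 : ∀ s, 0 ≤ s → HasDerivAt G (G1 s) s)
    (h2 : ∀ s, 0 ≤ s → HasDerivAt G1 (G2 s) s) (z : E2) :
    lapR (fun z : E2 => G (‖z‖ ^ 2)) z = 4 * (‖z‖ ^ 2 * G2 (‖z‖ ^ 2) + G1 (‖z‖ ^ 2)) := by
  have e : ∀ i : Fin 2, fderiv ℝ (fun y => fderiv ℝ (fun z : E2 => G (‖z‖ ^ 2)) y (ev i)) z (ev i)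
      = 2 * G1 (‖z‖ ^ 2) + 4 * (z i) ^ 2 * G2 (‖z‖ ^ 2) := by
    intro i
    have e1 : (fun y => fderiv ℝ (fun z : E2 => G (‖z‖ ^ 2)) y (ev i))
        = fun y => (2 * y i) * G1 (‖y‖ ^ 2) := funext fun y => fderiv_radial (h1 _ (by positivity)) i
    rw [e1]
    have d1 : HasFDerivAt (fun y : E2 => 2 * y i) ((2:ℝ) • (EuclideanSpace.proj (𝕜 := ℝ) i : E2 →L[ℝ] ℝ)) z :=
      (EuclideanSpace.proj (𝕜 := ℝ) i : E2 →L[ℝ] ℝ).hasFDerivAt.const_mul 2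
    have d2 := (differentiable_radial h2 z).hasFDerivAt
    have d3 := (d1.mul d2).fderiv
    have d4 : fderiv ℝ (fun y : E2 => (2 * y i) * G1 (‖y‖ ^ 2)) z = _ := d3
    rw [d4]
    simp only [FunLike.coe_add, FunLike.coe_smul, Pi.smul_apply, Pi.add_apply, smul_eq_mul]
    rw [fderiv_radial (h2 _ (by positivity))]
    simp
    ring
  unfold lapR
  rw [Fin.sum_univ_two, e, e, EuclideanSpace.norm_sq_eq, Fin.sum_univ_two]
  simp only [Real.norm_eq_abs, sq_abs]
  ring

lemma contDiff_pderiv {n : ℕ} {φ : E2 → ℝ} (h : ContDiff ℝ (n + 1 : ℕ) φ) (v : E2) :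
    ContDiff ℝ n (fun y => fderiv ℝ φ y v) := by
  have : ContDiff ℝ n (fderiv ℝ φ) := h.fderiv_right (by push_cast; exact le_rfl)
  exact this.clm_apply contDiff_const

/-- Integration by parts against a compactly supported function. -/
lemma ibp1 {g φ : E2 → ℝ} (hg : ContDiff ℝ 1 g) (hφ : ContDiff ℝ 1 φ) (hc : HasCompactSupport φ)
    (v : E2) : ∫ z, g z * fderiv ℝ φ z v = - ∫ z, fderiv ℝ g z v * φ z := by
  have c1 : Continuous fun z => fderiv ℝ g z v := (contDiff_pderiv (n := 0) (by simpa using hg) v).continuous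
  have c2 : Continuous fun z => fderiv ℝ φ z v := (contDiff_pderiv (n := 0) (by simpa using hφ) v).continuous
  have s2 : HasCompactSupport fun z => fderiv ℝ φ z v := hc.fderiv_apply ℝ v
  refine integral_mul_fderiv_eq_neg_fderiv_mul_of_integrable ?_ ?_ ?_
    (fun x _ => hg.differentiable (by norm_num) x) (fun x _ => hφ.differentiable (by norm_num) x)
  · exact (c1.mul hφ.continuous).integrable_of_hasCompactSupport hc.mul_left
  · exact (hg.continuous.mul c2).integrable_of_hasCompactSupport s2.mul_left
  · exact (hg.continuous.mul hφ.continuous).integrable_of_hasCompactSupport hc.mul_left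

lemma ibp2 {g φ : E2 → ℝ} (hg : ContDiff ℝ 2 g) (hφ : ContDiff ℝ 2 φ) (hc : HasCompactSupport φ) :
    ∫ z, g z * lapR φ z = ∫ z, lapR g z * φ z := by
  have hpg := fun v => contDiff_pderiv (n := 1) (by exact_mod_cast hg) v
  have hpφ := fun v => contDiff_pderiv (n := 1) (by exact_mod_cast hφ) v
  have key : ∀ i, ∫ z, g z * fderiv ℝ (fun y => fderiv ℝ φ y (ev i)) z (ev i)
      = ∫ z, fderiv ℝ (fun y => fderiv ℝ g y (ev i)) z (ev i) * φ z := fun i => by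
    rw [ibp1 (hg.of_le (by norm_num)) (by exact_mod_cast hpφ _) (hc.fderiv_apply ℝ _), ibp1 (by exact_mod_cast hpg _) (hφ.of_le (by norm_num)) hc,
      neg_neg]
  unfold lapR
  simp only [Finset.mul_sum, Finset.sum_mul]
  rw [integral_finsetSum, integral_finsetSum]
  · exact Finset.sum_congr rfl fun i _ => key i
  · intro i _
    exact (((contDiff_pderiv (n := 0) (by exact_mod_cast hpg (ev i)) (ev i)).continuous).mul
      hφ.continuous).integrable_of_hasCompactSupport hc.mul_left
  · intro i _
    exact (hg.continuous.mul (contDiff_pderiv (n := 0) (by exact_mod_cast hpφ (ev i))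
      (ev i)).continuous).integrable_of_hasCompactSupport
        ((hc.fderiv_apply ℝ _).fderiv_apply ℝ _).mul_left

lemma integrable_log_ball (R : ℝ) :
    IntegrableOn (fun z : E2 => |Real.log (‖z‖ ^ 2)|) (Metric.ball 0 R) := by
  rw [← integrable_indicator_iff Metric.isOpen_ball.measurableSet]
  have e : (Metric.ball (0:E2) R).indicator (fun z : E2 => |Real.log (‖z‖ ^ 2)|)
      = fun z => (Set.Iio R).indicator (fun r => |Real.log (r ^ 2)|) ‖z‖ := by
    funext z
    by_cases h : ‖z‖ < R
    · rw [Set.indicator_of_mem (mem_ball_zero_iff.2 h), Set.indicator_of_mem (Set.mem_Iio.2 h)]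
    · rw [Set.indicator_of_notMem (fun h' => h (mem_ball_zero_iff.1 h')),
        Set.indicator_of_notMem (fun h' => h (Set.mem_Iio.1 h'))]
  rw [e, integrable_fun_norm_addHaar volume (f := (Set.Iio R).indicator (fun r => |Real.log (r ^ 2)|))]
  have hc : Continuous fun y : ℝ => |2 * (y * Real.log y)| :=
    (Real.continuous_mul_log.const_mul 2).abs
  have h1 : IntegrableOn ((Set.Iio R).indicator fun y : ℝ => |2 * (y * Real.log y)|) (Set.Ioi 0) := by
    rw [IntegrableOn, integrable_indicator_iff measurableSet_Iio, IntegrableOn,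
      Measure.restrict_restrict measurableSet_Iio]
    exact (hc.integrableOn_Icc (a := 0) (b := R)).mono_set fun x hx => ⟨hx.2.le, hx.1.le⟩
  refine h1.congr_fun (fun y hy => ?_) measurableSet_Ioi
  have hy : 0 < y := hy
  simp only [Set.indicator_apply, Set.mem_Iio]
  split_ifs
  · rw [Real.log_pow, finrank_euclideanSpace_fin, smul_eq_mul, abs_mul, abs_mul, abs_mul,
      abs_of_pos hy]
    norm_num; ring
  · simp

lemma integrable_mul_log {h : E2 → ℝ} (hh : Continuous h) (hc : HasCompactSupport h) :
    Integrable (fun z : E2 => h z * |Real.log (‖z‖ ^ 2)|) := by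
  obtain ⟨R, hR⟩ := hc.isBounded.subset_ball (0:E2)
  obtain ⟨B, hB⟩ := hh.bounded_above_of_compact_support hc
  have h1 := integrable_log_ball R
  rw [← integrable_indicator_iff Metric.isOpen_ball.measurableSet] at h1
  have h2 := h1.bdd_mul (f := h) hh.aestronglyMeasurable (Eventually.of_forall hB)
  refine h2.congr (Eventually.of_forall fun z => ?_)
  by_cases hz : z ∈ Metric.ball (0:E2) R
  · simp only [Set.indicator_of_mem hz]
  · have : h z = 0 := image_eq_zero_of_notMem_tsupport fun h => hz (hR h)
    simp [this]

lemma integrable_kernel : Integrable fun w : E2 => 1 / (1 + ‖w‖ ^ 2) ^ 2 := by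
  have := integrable_rpow_neg_one_add_norm_sq (E := E2) (μ := volume) (r := 4)
    (by rw [finrank_euclideanSpace_fin]; norm_num)
  refine this.congr (Eventually.of_forall fun w => ?_)
  simp only
  rw [show (-4:ℝ) / 2 = -(2:ℕ) by norm_num, Real.rpow_neg (by positivity), Real.rpow_natCast,
    one_div]

/-- A quarter of the integral of `Δ log(1 + |w|²)`; its value `π` is not needed. -/
noncomputable def cker : ℝ := ∫ w : E2, 1 / (1 + ‖w‖ ^ 2) ^ 2

lemma cker_pos : 0 < cker := by
  unfold cker
  rw [integral_pos_iff_support_of_nonneg (fun w => by positivity) integrable_kernel]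
  have : Function.support (fun w : E2 => 1 / (1 + ‖w‖ ^ 2) ^ 2) = Set.univ := by
    ext w; simp; positivity
  rw [this]
  exact isOpen_univ.measure_pos volume ⟨0, trivial⟩

lemma ae_ne_zero : ∀ᵐ z : E2, z ≠ 0 := by
  exact compl_mem_ae_iff.2 (measure_singleton (0:E2))

lemma continuous_lapR {φ : E2 → ℝ} (hφ : ContDiff ℝ 2 φ) : Continuous (lapR φ) := by
  unfold lapR
  refine continuous_finsetSum _ fun i _ => ?_
  exact (contDiff_pderiv (n := 0)
    (by exact_mod_cast contDiff_pderiv (n := 1) (by exact_mod_cast hφ) (ev i)) (ev i)).continuous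

lemma hasCompactSupport_lapR {φ : E2 → ℝ} (hc : HasCompactSupport φ) : HasCompactSupport (lapR φ) := by
  have : lapR φ = (fun x => fderiv ℝ (fun y => fderiv ℝ φ y (ev 0)) x (ev 0))
      + (fun x => fderiv ℝ (fun y => fderiv ℝ φ y (ev 1)) x (ev 1)) := by
    funext x; simp [lapR, Fin.sum_univ_two]
  rw [this]
  exact ((hc.fderiv_apply ℝ _).fderiv_apply ℝ _).add ((hc.fderiv_apply ℝ _).fderiv_apply ℝ _)

/-- A smooth radial solution of the Helmholtz equation is orthogonal to `(Δ + 4k)φ`. -/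
lemma helmholtz_smooth {b b1 b2 : ℝ → ℝ} {k : ℝ} (hb : ContDiff ℝ 2 b)
    (h1 : ∀ s, HasDerivAt b (b1 s) s) (h2 : ∀ s, HasDerivAt b1 (b2 s) s)
    (ode : ∀ s, s * b2 s + b1 s + k * b s = 0) {φ : E2 → ℝ} (hφ : ContDiff ℝ 2 φ)
    (hc : HasCompactSupport φ) :
    ∫ z : E2, b (‖z‖ ^ 2) * (lapR φ z + 4 * k * φ z) = 0 := by
  have hg : ContDiff ℝ 2 (fun z : E2 => b (‖z‖ ^ 2)) := hb.comp (contDiff_norm_sq ℝ)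
  have i1 : Integrable (fun z : E2 => b (‖z‖ ^ 2) * lapR φ z) :=
    (hg.continuous.mul (continuous_lapR hφ)).integrable_of_hasCompactSupport
      (hasCompactSupport_lapR hc).mul_left
  have i2 : Integrable (fun z : E2 => b (‖z‖ ^ 2) * (4 * k * φ z)) :=
    (hg.continuous.mul (continuous_const.mul hφ.continuous)).integrable_of_hasCompactSupport
      (HasCompactSupport.mul_left (hc.mul_left (f := fun _ => 4 * k)))
  simp only [mul_add]
  rw [integral_add i1 i2, ibp2 hg hφ hc, ← integral_add _ i2]
  · rw [← integral_zero E2 ℝ]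
    congr 1; funext z
    rw [lapR_radial (fun s _ => h1 s) (fun s _ => h2 s)]
    linear_combination 4 * φ z * ode (‖z‖ ^ 2)
  · exact ((continuous_lapR hg).mul hφ.continuous).integrable_of_hasCompactSupport hc.mul_left

/-- Regularized Green identity: the logarithm is replaced by `log (s + e)`. -/
lemma helmholtz_reg {a a1 a2 b b1 b2 : ℝ → ℝ} {k : ℝ} (ha : ContDiff ℝ 2 a) (hb : ContDiff ℝ 2 b)
    (ha1 : ∀ s, HasDerivAt a (a1 s) s) (ha2 : ∀ s, HasDerivAt a1 (a2 s) s)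
    (hb1 : ∀ s, HasDerivAt b (b1 s) s) (hb2 : ∀ s, HasDerivAt b1 (b2 s) s)
    (odea : ∀ s, s * a2 s + a1 s + k * a s = -2 * b1 s)
    (odeb : ∀ s, s * b2 s + b1 s + k * b s = 0) {φ : E2 → ℝ} (hφ : ContDiff ℝ 2 φ)
    (hc : HasCompactSupport φ) {e : ℝ} (he : 0 < e) :
    ∫ z : E2, (a (‖z‖ ^ 2) + b (‖z‖ ^ 2) * Real.log (‖z‖ ^ 2 + e)) * (lapR φ z + 4 * k * φ z)
      = ∫ z : E2, (-8 * b1 (‖z‖ ^ 2) * (e / (‖z‖ ^ 2 + e))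
        + 4 * b (‖z‖ ^ 2) * (e / (‖z‖ ^ 2 + e) ^ 2)) * φ z := by
  set G : ℝ → ℝ := fun s => a s + b s * Real.log (s + e) with hG
  set G1 : ℝ → ℝ := fun s => a1 s + (b1 s * Real.log (s + e) + b s * (s + e)⁻¹) with hG1
  set G2 : ℝ → ℝ := fun s => a2 s + ((b2 s * Real.log (s + e) + b1 s * (s + e)⁻¹) +
    (b1 s * (s + e)⁻¹ + b s * (-1 / (s + e) ^ 2))) with hG2
  have hl : ∀ s, 0 ≤ s → HasDerivAt (fun s => Real.log (s + e)) (s + e)⁻¹ s := fun s hs => by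
    simpa using ((hasDerivAt_id s).add_const e).log (by simp; positivity)
  have hi : ∀ s, 0 ≤ s → HasDerivAt (fun s => (s + e)⁻¹) (-1 / (s + e) ^ 2) s := fun s hs => by
    simpa using ((hasDerivAt_id s).add_const e).fun_inv (by simp; positivity)
  have d1 : ∀ s, 0 ≤ s → HasDerivAt G (G1 s) s := fun s hs => (ha1 s).add ((hb1 s).mul (hl s hs))
  have d2 : ∀ s, 0 ≤ s → HasDerivAt G1 (G2 s) s := fun s hs =>
    (ha2 s).add (((hb2 s).mul (hl s hs)).add ((hb1 s).mul (hi s hs)))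
  have hn : ContDiff ℝ 2 (fun z : E2 => ‖z‖ ^ 2) := contDiff_norm_sq ℝ
  have hg : ContDiff ℝ 2 (fun z : E2 => G (‖z‖ ^ 2)) :=
    (ha.comp hn).add ((hb.comp hn).mul ((hn.add contDiff_const).log fun z => by positivity))
  have i1 : Integrable (fun z : E2 => G (‖z‖ ^ 2) * lapR φ z) :=
    (hg.continuous.mul (continuous_lapR hφ)).integrable_of_hasCompactSupport
      (hasCompactSupport_lapR hc).mul_left
  have i2 : Integrable (fun z : E2 => G (‖z‖ ^ 2) * (4 * k * φ z)) :=
    (hg.continuous.mul (continuous_const.mul hφ.continuous)).integrable_of_hasCompactSupport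
      (HasCompactSupport.mul_left (hc.mul_left (f := fun _ => 4 * k)))
  change ∫ z : E2, G (‖z‖ ^ 2) * (lapR φ z + 4 * k * φ z) = _
  simp only [mul_add]
  rw [integral_add i1 i2, ibp2 hg hφ hc, ← integral_add _ i2]
  · congr 1; funext z
    rw [lapR_radial d1 d2]
    have h0 : 0 < ‖z‖ ^ 2 + e := by positivity
    simp only [hG, hG1, hG2]
    have o1 := odea (‖z‖ ^ 2)
    have o2 := odeb (‖z‖ ^ 2)
    generalize ‖z‖ ^ 2 = s at *
    rw [show a1 s = -2 * b1 s - s * a2 s - k * a s by linarith,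
      show b2 s * Real.log (s + e) = b2 s * Real.log (s + e) from rfl]
    have e3 : s * (b2 s * Real.log (s + e)) = (- b1 s - k * b s) * Real.log (s + e) := by
      rw [← mul_assoc]; congr 1; linarith
    have : s * (a2 s + ((b2 s * Real.log (s + e) + b1 s * (s + e)⁻¹) +
        (b1 s * (s + e)⁻¹ + b s * (-1 / (s + e) ^ 2)))) = s * a2 s + ((- b1 s - k * b s) *
          Real.log (s + e) + s * (2 * b1 s * (s + e)⁻¹ + b s * (-1 / (s + e) ^ 2))) := by
      rw [← e3]; ring
    rw [this]
    field_simp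
    ring
  · exact ((continuous_lapR hg).mul hφ.continuous).integrable_of_hasCompactSupport hc.mul_left

open Topology

lemma log_reg_bound {s e : ℝ} (hs : 0 < s) (he : 0 < e) (he1 : e ≤ 1) :
    |Real.log (s + e)| ≤ |Real.log s| + Real.log (s + 1) := by
  have h1 : Real.log s ≤ Real.log (s + e) := Real.log_le_log hs (by linarith)
  have h2 : Real.log (s + e) ≤ Real.log (s + 1) := Real.log_le_log (by linarith) (by linarith)
  have h3 : 0 ≤ Real.log (s + 1) := Real.log_nonneg (by linarith)
  rw [abs_le]
  constructor
  · linarith [neg_abs_le (Real.log s)]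
  · linarith [abs_nonneg (Real.log s)]

/-- The radial function `a(|z|²) + b(|z|²) log |z|²` is `4 cker b(0)` times a fundamental solution of
`Δ + 4k`, when `a` and `b` satisfy the radial equations `odea` and `odeb`. -/
lemma fund_sol {a a1 a2 b b1 b2 : ℝ → ℝ} {k : ℝ} (ha : ContDiff ℝ 2 a) (hb : ContDiff ℝ 2 b)
    (ha1 : ∀ s, HasDerivAt a (a1 s) s) (ha2 : ∀ s, HasDerivAt a1 (a2 s) s)
    (hb1 : ∀ s, HasDerivAt b (b1 s) s) (hb2 : ∀ s, HasDerivAt b1 (b2 s) s)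
    (odea : ∀ s, s * a2 s + a1 s + k * a s = -2 * b1 s)
    (odeb : ∀ s, s * b2 s + b1 s + k * b s = 0) {φ : E2 → ℝ} (hφ : ContDiff ℝ 2 φ)
    (hc : HasCompactSupport φ) :
    ∫ z : E2, (a (‖z‖ ^ 2) + b (‖z‖ ^ 2) * Real.log (‖z‖ ^ 2)) * (lapR φ z + 4 * k * φ z)
      = 4 * cker * b 0 * φ 0 := by
  have hn : Continuous (fun z : E2 => ‖z‖ ^ 2) := by fun_prop
  have cb1 : Continuous b1 := continuous_iff_continuousAt.2 fun s => (hb2 s).continuousAt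
  set h : E2 → ℝ := fun z => lapR φ z + 4 * k * φ z with hh
  have hhc : Continuous h := (continuous_lapR hφ).add (continuous_const.mul hφ.continuous)
  have hhs : HasCompactSupport h :=
    (hasCompactSupport_lapR hc).add (hc.mul_left (f := fun _ => 4 * k))
  have hsmall : ∀ᶠ e : ℝ in 𝓝[>] 0, 0 < e ^ 2 ∧ e ^ 2 ≤ 1 := by
    filter_upwards [self_mem_nhdsWithin, mem_nhdsWithin_of_mem_nhds (Iio_mem_nhds one_pos)]
      with e he he1
    have he : 0 < e := he
    have he1 : e < 1 := he1
    constructor <;> nlinarith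
  have hsq : Tendsto (fun e : ℝ => e ^ 2) (𝓝[>] 0) (𝓝 0) := by
    have : Tendsto (fun e : ℝ => e ^ 2) (𝓝 0) (𝓝 (0 ^ 2)) := (continuous_pow 2).tendsto 0
    rw [zero_pow two_ne_zero] at this
    exact this.mono_left nhdsWithin_le_nhds
  -- the regularized pairing converges to the singular one
  have T1 : Tendsto (fun e : ℝ => ∫ z : E2,
      (a (‖z‖ ^ 2) + b (‖z‖ ^ 2) * Real.log (‖z‖ ^ 2 + e ^ 2)) * h z) (𝓝[>] 0)
      (𝓝 (∫ z : E2, (a (‖z‖ ^ 2) + b (‖z‖ ^ 2) * Real.log (‖z‖ ^ 2)) * h z)) := by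
    apply tendsto_integral_filter_of_dominated_convergence
      (fun z : E2 => (|a (‖z‖ ^ 2)| + |b (‖z‖ ^ 2)| * Real.log (‖z‖ ^ 2 + 1)) * |h z|
        + |b (‖z‖ ^ 2)| * |h z| * |Real.log (‖z‖ ^ 2)|)
    · filter_upwards [hsmall] with e he
      have : Continuous fun z : E2 => Real.log (‖z‖ ^ 2 + e ^ 2) :=
        (hn.add continuous_const).log fun z =>
          (add_pos_of_nonneg_of_pos (sq_nonneg _) he.1).ne'
      exact (((ha.continuous.comp hn).add ((hb.continuous.comp hn).mul this)).mul
        hhc).aestronglyMeasurable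
    · filter_upwards [hsmall] with e he
      filter_upwards [ae_ne_zero] with z hz
      have hz : 0 < ‖z‖ ^ 2 := by have := norm_pos_iff.2 hz; positivity
      have := log_reg_bound hz he.1 he.2
      rw [norm_mul, Real.norm_eq_abs, Real.norm_eq_abs]
      calc |a (‖z‖ ^ 2) + b (‖z‖ ^ 2) * Real.log (‖z‖ ^ 2 + e ^ 2)| * |h z|
          ≤ (|a (‖z‖ ^ 2)| + |b (‖z‖ ^ 2)| * (|Real.log (‖z‖ ^ 2)| + Real.log (‖z‖ ^ 2 + 1))) *
            |h z| := by
            gcongr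
            refine (abs_add_le _ _).trans ?_
            rw [abs_mul]
            gcongr
        _ = _ := by ring
    · refine Integrable.add ?_ ?_
      · refine Continuous.integrable_of_hasCompactSupport (Continuous.mul ?_ hhc.abs)
          (HasCompactSupport.mul_left hhs.abs)
        exact (ha.continuous.comp hn).abs.add ((hb.continuous.comp hn).abs.mul
          ((hn.add continuous_const).log fun z =>
            (add_pos_of_nonneg_of_pos (sq_nonneg _) one_pos).ne'))
      · exact integrable_mul_log ((hb.continuous.comp hn).abs.mul hhc.abs)
          (HasCompactSupport.mul_left hhs.abs)
    · filter_upwards [ae_ne_zero] with z hz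
      have hz : 0 < ‖z‖ ^ 2 := by have := norm_pos_iff.2 hz; positivity
      have h1 : Tendsto (fun e : ℝ => ‖z‖ ^ 2 + e ^ 2) (𝓝[>] 0) (𝓝 (‖z‖ ^ 2)) := by
        simpa using hsq.const_add (‖z‖ ^ 2)
      exact (((h1.log hz.ne').const_mul _).const_add _).mul_const _
  -- the first error term vanishes in the limit
  have T2 : Tendsto (fun e : ℝ => ∫ z : E2,
      (-8 * b1 (‖z‖ ^ 2) * (e ^ 2 / (‖z‖ ^ 2 + e ^ 2))) * φ z) (𝓝[>] 0) (𝓝 0) := by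
    have : 𝓝 (0:ℝ) = 𝓝 (∫ z : E2, (0:ℝ)) := by simp
    rw [this]
    apply tendsto_integral_filter_of_dominated_convergence
      (fun z : E2 => 8 * |b1 (‖z‖ ^ 2)| * |φ z|)
    · filter_upwards [hsmall] with e he
      have : Continuous fun z : E2 => e ^ 2 / (‖z‖ ^ 2 + e ^ 2) :=
        continuous_const.div (hn.add continuous_const) fun z => by
          have := he.1
          positivity
      exact (((continuous_const.mul (cb1.comp hn)).mul this).mul
        hφ.continuous).aestronglyMeasurable
    · filter_upwards [hsmall] with e he
      refine Eventually.of_forall fun z => ?_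
      have h1 : |e ^ 2 / (‖z‖ ^ 2 + e ^ 2)| ≤ 1 := by
        have := he.1
        rw [abs_of_nonneg (by positivity), div_le_one (by positivity)]
        linarith [sq_nonneg ‖z‖]
      rw [norm_mul, Real.norm_eq_abs, Real.norm_eq_abs, abs_mul, abs_mul]
      refine mul_le_mul_of_nonneg_right ?_ (abs_nonneg _)
      rw [abs_neg, abs_of_nonneg (by norm_num : (0:ℝ) ≤ 8)]
      exact mul_le_of_le_one_right (by positivity) h1
    · exact (((continuous_const.mul (cb1.comp hn).abs)).mul
        hφ.continuous.abs).integrable_of_hasCompactSupport (HasCompactSupport.mul_left hc.abs)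
    · filter_upwards [ae_ne_zero] with z hz
      have hz : 0 < ‖z‖ ^ 2 := by have := norm_pos_iff.2 hz; positivity
      have h1 : Tendsto (fun e : ℝ => e ^ 2 / (‖z‖ ^ 2 + e ^ 2)) (𝓝[>] 0)
          (𝓝 (0 / (‖z‖ ^ 2 + 0))) := hsq.div (hsq.const_add _) (by positivity)
      simpa using (h1.const_mul (-8 * b1 (‖z‖ ^ 2))).mul_const (φ z)
  -- the substitution `z = e w` turns the last term into an approximate identity
  have T3 : Tendsto (fun e : ℝ => ∫ z : E2,
      (4 * b (‖z‖ ^ 2) * (e ^ 2 / (‖z‖ ^ 2 + e ^ 2) ^ 2)) * φ z) (𝓝[>] 0)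
      (𝓝 (4 * cker * b 0 * φ 0)) := by
    have hF : Continuous fun z : E2 => 4 * b (‖z‖ ^ 2) * φ z :=
      (continuous_const.mul (hb.continuous.comp hn)).mul hφ.continuous
    obtain ⟨Bd, hBd⟩ := hF.bounded_above_of_compact_support (HasCompactSupport.mul_left hc)
    have e1 : (fun e : ℝ => ∫ w : E2, (4 * b (‖e • w‖ ^ 2) * φ (e • w)) * (1 / (1 + ‖w‖ ^ 2) ^ 2))
        =ᶠ[𝓝[>] 0] (fun e : ℝ => ∫ z : E2,
      (4 * b (‖z‖ ^ 2) * (e ^ 2 / (‖z‖ ^ 2 + e ^ 2) ^ 2)) * φ z) := by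
      filter_upwards [self_mem_nhdsWithin] with e he
      have he : 0 < e := he
      have := Measure.integral_comp_smul (volume : Measure E2) (fun z : E2 =>
        (4 * b (‖z‖ ^ 2) * (e ^ 2 / (‖z‖ ^ 2 + e ^ 2) ^ 2)) * φ z) e
      rw [finrank_euclideanSpace_fin, abs_of_pos (by positivity), smul_eq_mul,
        inv_mul_eq_div, eq_div_iff (by positivity)] at this
      rw [← this, ← integral_mul_const]
      congr 1; funext w
      have e2 : ‖e • w‖ ^ 2 = e ^ 2 * ‖w‖ ^ 2 := by
        rw [norm_smul, mul_pow, Real.norm_eq_abs, sq_abs]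
      rw [e2]
      have : 0 < 1 + ‖w‖ ^ 2 := by positivity
      rw [show e ^ 2 * ‖w‖ ^ 2 + e ^ 2 = e ^ 2 * (1 + ‖w‖ ^ 2) by ring]
      field_simp
    refine Tendsto.congr' e1 ?_
    have e3 : 4 * cker * b 0 * φ 0 = ∫ w : E2, (4 * b 0 * φ 0) * (1 / (1 + ‖w‖ ^ 2) ^ 2) := by
      rw [integral_const_mul, cker]; ring
    rw [e3]
    apply tendsto_integral_filter_of_dominated_convergence
      (fun w : E2 => Bd * (1 / (1 + ‖w‖ ^ 2) ^ 2))
    · refine Eventually.of_forall fun e => ?_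
      exact ((hF.comp (continuous_const_smul e)).aestronglyMeasurable).mul
        integrable_kernel.aestronglyMeasurable
    · refine Eventually.of_forall fun e => Eventually.of_forall fun w => ?_
      rw [norm_mul, Real.norm_of_nonneg (by positivity : 0 ≤ 1 / (1 + ‖w‖ ^ 2) ^ 2)]
      gcongr
      exact hBd (e • w)
    · exact integrable_kernel.const_mul _
    · refine Eventually.of_forall fun w => ?_
      refine Tendsto.mul_const _ ?_
      have h1 : Tendsto (fun e : ℝ => e • w) (𝓝[>] 0) (𝓝 ((0:ℝ) • w)) :=
        ((continuous_id.smul continuous_const).tendsto 0).mono_left nhdsWithin_le_nhds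
      rw [zero_smul] at h1
      have := (hF.tendsto 0).comp h1
      simpa [Function.comp_def] using this
  have T : Tendsto (fun e : ℝ => ∫ z : E2,
      (a (‖z‖ ^ 2) + b (‖z‖ ^ 2) * Real.log (‖z‖ ^ 2 + e ^ 2)) * h z) (𝓝[>] 0)
      (𝓝 (0 + 4 * cker * b 0 * φ 0)) := by
    refine Tendsto.congr' ?_ (T2.add T3)
    filter_upwards [hsmall] with e he
    have he := he.1
    rw [helmholtz_reg ha hb ha1 ha2 hb1 hb2 odea odeb hφ hc he, ← integral_add]
    · congr 1; funext z; ring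
    · refine Continuous.integrable_of_hasCompactSupport (Continuous.mul ?_ hφ.continuous)
          (HasCompactSupport.mul_left hc)
      exact (continuous_const.mul (cb1.comp hn)).mul (continuous_const.div
        (hn.add continuous_const) fun z => by positivity)
    · refine Continuous.integrable_of_hasCompactSupport (Continuous.mul ?_ hφ.continuous)
          (HasCompactSupport.mul_left hc)
      exact (continuous_const.mul (hb.continuous.comp hn)).mul (continuous_const.div
        ((hn.add continuous_const).pow 2) fun z => by positivity)
  rw [zero_add] at T
  exact tendsto_nhds_unique T1 T

/-- The kernel `J₀(ω|z|)` on the plane. -/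
noncomputable def Jk (ω : ℝ) (z : E2) : ℝ := ps jc ((ω * ‖z‖ / 2) ^ 2)

/-- The kernel `Y₀(ω|z|)` on the plane. -/
noncomputable def Yk (ω : ℝ) (z : E2) : ℝ :=
  2 / Real.pi * ((Real.eulerMascheroniConstant + Real.log (ω * ‖z‖ / 2)) *
    ps jc ((ω * ‖z‖ / 2) ^ 2) - ps qc ((ω * ‖z‖ / 2) ^ 2))

lemma Jk_neg (ω : ℝ) (z : E2) : Jk ω (-z) = Jk ω z := by simp [Jk]

lemma Yk_neg (ω : ℝ) (z : E2) : Yk ω (-z) = Yk ω z := by simp [Yk]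

lemma hankel_eq {ω : ℝ} (hω : 0 < ω) {z : E2} (hz : z ≠ 0) :
    hankelH0 ((ω : ℂ) * (‖z‖ : ℝ)) = (Jk ω z : ℂ) + Complex.I * (Yk ω z : ℂ) := by
  have hz : 0 < ‖z‖ := norm_pos_iff.2 hz
  rw [← Complex.ofReal_mul, hankelH0, besselJ0_ofReal, besselY0_ofReal (by positivity), Jk, Yk]

/-- The coefficient of the logarithm in `Y₀(ω|z|) = yA(|z|²) + yB(|z|²) log |z|²`. -/
noncomputable def yB (ω s : ℝ) : ℝ := 1 / Real.pi * ps jc (ω ^ 2 / 4 * s)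

/-- The entire part of `Y₀(ω|z|)` as a function of `s = |z|²`; see `yB`. -/
noncomputable def yA (ω s : ℝ) : ℝ :=
  2 / Real.pi * ((Real.eulerMascheroniConstant + Real.log (ω / 2)) * ps jc (ω ^ 2 / 4 * s)
    - ps qc (ω ^ 2 / 4 * s))

lemma Jk_eq (ω : ℝ) (z : E2) : Jk ω z = Real.pi * yB ω (‖z‖ ^ 2) := by
  have := Real.pi_pos
  rw [Jk, yB, show (ω * ‖z‖ / 2) ^ 2 = ω ^ 2 / 4 * ‖z‖ ^ 2 by ring]
  field_simp

lemma Yk_eq {ω : ℝ} (hω : 0 < ω) {z : E2} (hz : z ≠ 0) :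
    Yk ω z = yA ω (‖z‖ ^ 2) + yB ω (‖z‖ ^ 2) * Real.log (‖z‖ ^ 2) := by
  have hz : 0 < ‖z‖ := norm_pos_iff.2 hz
  rw [Yk, yA, yB, show (ω * ‖z‖ / 2) ^ 2 = ω ^ 2 / 4 * ‖z‖ ^ 2 by ring,
    show ω * ‖z‖ / 2 = (ω / 2) * ‖z‖ by ring, Real.log_mul (by positivity) (by positivity),
    Real.log_pow]
  push_cast
  ring

lemma hasDerivAt_ps_scale {c : ℕ → ℝ} (h : Ent c) (k s : ℝ) :
    HasDerivAt (fun s => ps c (k * s)) (k * ps (dc c) (k * s)) s := by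
  have := (h.hasDerivAt (k * s)).comp s ((hasDerivAt_id s).const_mul k)
  simpa [Function.comp_def, mul_comm] using this

lemma contDiff_ps_scale {c : ℕ → ℝ} (h : Ent c) (k : ℝ) :
    ContDiff ℝ 2 (fun s => ps c (k * s)) :=
  ContDiff.comp (g := ps c) (by exact_mod_cast h.contDiff_nat 2) (contDiff_const.mul contDiff_id)

lemma contDiff_yB (ω : ℝ) : ContDiff ℝ 2 (yB ω) :=
  contDiff_const.mul (contDiff_ps_scale ent_jc (ω ^ 2 / 4))

lemma contDiff_yA (ω : ℝ) : ContDiff ℝ 2 (yA ω) :=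
  contDiff_const.mul ((contDiff_const.mul
    (contDiff_ps_scale ent_jc (ω ^ 2 / 4))).sub
      (contDiff_ps_scale ent_qc (ω ^ 2 / 4)))

/-- The functions `yA` and `yB` satisfy the radial equations required by `fund_sol`. -/
lemma green_facts (ω : ℝ) : ∃ a1 a2 b1 b2 : ℝ → ℝ, (∀ s, HasDerivAt (yA ω) (a1 s) s) ∧
    (∀ s, HasDerivAt a1 (a2 s) s) ∧ (∀ s, HasDerivAt (yB ω) (b1 s) s) ∧
    (∀ s, HasDerivAt b1 (b2 s) s) ∧
    (∀ s, s * a2 s + a1 s + ω ^ 2 / 4 * yA ω s = -2 * b1 s) ∧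
    (∀ s, s * b2 s + b1 s + ω ^ 2 / 4 * yB ω s = 0) := by
  set k := ω ^ 2 / 4 with hk
  set l := Real.eulerMascheroniConstant + Real.log (ω / 2) with hl
  refine ⟨fun s => 2 / Real.pi * (l * (k * ps (dc jc) (k * s)) - k * ps (dc qc) (k * s)),
    fun s => 2 / Real.pi * (l * (k * (k * ps (dc (dc jc)) (k * s)))
      - k * (k * ps (dc (dc qc)) (k * s))),
    fun s => 1 / Real.pi * (k * ps (dc jc) (k * s)),
    fun s => 1 / Real.pi * (k * (k * ps (dc (dc jc)) (k * s))), fun s => ?_, fun s => ?_,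
    fun s => ?_, fun s => ?_, fun s => ?_, fun s => ?_⟩
  · exact (((hasDerivAt_ps_scale ent_jc k s).const_mul l).sub
      (hasDerivAt_ps_scale ent_qc k s)).const_mul _
  · exact ((((hasDerivAt_ps_scale ent_jc.dc k s).const_mul k).const_mul l).sub
      ((hasDerivAt_ps_scale ent_qc.dc k s).const_mul k)).const_mul _
  · exact (hasDerivAt_ps_scale ent_jc k s).const_mul _
  · exact ((hasDerivAt_ps_scale ent_jc.dc k s).const_mul k).const_mul _
  · simp only [yA]
    rw [← hk, ← hl]
    linear_combination (2 / Real.pi * l * k) * jc_ode (k * s)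
      - (2 / Real.pi * k) * qc_ode (k * s)
  · simp only [yB]
    rw [← hk]
    linear_combination (1 / Real.pi * k) * jc_ode (k * s)

/-- `J₀(ω|·|)` is a solution of the Helmholtz equation in the sense of distributions. -/
lemma Jk_green (ω : ℝ) {φ : E2 → ℝ} (hφ : ContDiff ℝ 2 φ) (hc : HasCompactSupport φ) :
    ∫ z : E2, Jk ω z * (lapR φ z + ω ^ 2 * φ z) = 0 := by
  obtain ⟨a1, a2, b1, b2, -, -, h3, h4, -, h6⟩ := green_facts ω
  have := helmholtz_smooth (contDiff_yB ω) h3 h4 h6 hφ hc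
  simp only [Jk_eq, mul_assoc]
  rw [integral_const_mul]
  rw [show 4 * (ω ^ 2 / 4) = ω ^ 2 by ring] at this
  rw [this, mul_zero]

/-- The mass of the distribution `(Δ + ω²) Y₀(ω|·|)` (its value, `4`, is not needed). -/
noncomputable def kap : ℝ := 4 * cker * (1 / Real.pi)

lemma kap_pos : 0 < kap := by
  have := cker_pos
  have := Real.pi_pos
  unfold kap; positivity

/-- `Y₀(ω|·|)` is a multiple of a fundamental solution of the Helmholtz operator. -/
lemma Yk_green {ω : ℝ} (hω : 0 < ω) {φ : E2 → ℝ} (hφ : ContDiff ℝ 2 φ)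
    (hc : HasCompactSupport φ) :
    ∫ z : E2, Yk ω z * (lapR φ z + ω ^ 2 * φ z) = kap * φ 0 := by
  obtain ⟨a1, a2, b1, b2, h1, h2, h3, h4, h5, h6⟩ := green_facts ω
  have := fund_sol (contDiff_yA ω) (contDiff_yB ω) h1 h2 h3 h4 h5 h6 hφ hc
  rw [show 4 * (ω ^ 2 / 4) = ω ^ 2 by ring] at this
  rw [kap, show 1 / Real.pi = yB ω 0 by simp [yB, ps_jc_zero], ← this]
  refine integral_congr_ae ?_
  filter_upwards [ae_ne_zero] with z hz
  rw [Yk_eq hω hz]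

lemma continuous_Jk (ω : ℝ) : Continuous (Jk ω) :=
  ent_jc.continuous.comp (by fun_prop)

lemma continuous_Jk₂ : Continuous (fun p : ℝ × E2 => Jk p.1 p.2) :=
  ent_jc.continuous.comp (by fun_prop)

lemma locInt_Jk (ω : ℝ) : LocallyIntegrable (Jk ω) := (continuous_Jk ω).locallyIntegrable

lemma locInt_Yk {ω : ℝ} (hω : 0 < ω) : LocallyIntegrable (Yk ω) := by
  have hn : Continuous (fun z : E2 => ‖z‖ ^ 2) := by fun_prop
  have h1 : LocallyIntegrable (fun z : E2 => yA ω (‖z‖ ^ 2)) :=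
    ((contDiff_yA ω).continuous.comp hn).locallyIntegrable
  have h0 : LocallyIntegrable (fun z : E2 => Real.log (‖z‖ ^ 2)) := by
    intro z
    refine ⟨Metric.ball 0 (‖z‖ + 1), Metric.isOpen_ball.mem_nhds (by simp), ?_⟩
    have hm : AEStronglyMeasurable (fun z : E2 => Real.log (‖z‖ ^ 2))
        (volume.restrict (Metric.ball 0 (‖z‖ + 1))) :=
      (Real.measurable_log.comp hn.measurable).aestronglyMeasurable
    exact (integrable_norm_iff hm).1 (integrable_log_ball _)
  have h2 : LocallyIntegrable (fun z : E2 => yB ω (‖z‖ ^ 2) * Real.log (‖z‖ ^ 2)) := by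
    rw [← locallyIntegrableOn_univ] at h0 ⊢
    exact h0.continuousOn_mul ((contDiff_yB ω).continuous.comp hn).continuousOn isClosed_univ.isLocallyClosed
  refine (h1.add h2).congr ?_
  filter_upwards [ae_ne_zero] with z hz
  rw [Yk_eq hω hz]; rfl

/-! ### Volume potentials -/

/-- Convolution of a locally integrable kernel with a compactly supported function. -/
noncomputable def cv (k f : E2 → ℝ) (x : E2) : ℝ := ∫ z, k z * f (x - z)

lemma cv_eq (k f : E2 → ℝ) : cv k f = convolution k f (ContinuousLinearMap.mul ℝ ℝ) volume := by
  funext x; simp [cv, convolution]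

lemma cv_contDiff {k f : E2 → ℝ} (hk : LocallyIntegrable k) {n : ℕ∞} (hf : ContDiff ℝ n f)
    (hc : HasCompactSupport f) : ContDiff ℝ n (cv k f) := by
  rw [cv_eq]
  exact hc.contDiff_convolution_right _ hk hf

lemma cv_fderiv {k f : E2 → ℝ} (hk : LocallyIntegrable k) (hf : ContDiff ℝ 1 f)
    (hc : HasCompactSupport f) (x v : E2) :
    fderiv ℝ (cv k f) x v = cv k (fun y => fderiv ℝ f y v) x := by
  rw [cv_eq, cv_eq, (hc.hasFDerivAt_convolution_right _ hk hf x).fderiv,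
    convolution_precompR_apply]
  · exact hk
  · exact hc.fderiv ℝ
  · exact hf.continuous_fderiv (by norm_num)

lemma cv_integrable {k f : E2 → ℝ} (hk : LocallyIntegrable k) (hf : Continuous f)
    (hc : HasCompactSupport f) (x : E2) : Integrable (fun z => k z * f (x - z)) := by
  have := hc.convolutionExists_right (ContinuousLinearMap.mul ℝ ℝ) hk hf x
  simpa [ConvolutionExistsAt] using this

lemma contDiff_one_pderiv {f : E2 → ℝ} (hf : ContDiff ℝ 2 f) (v : E2) :
    ContDiff ℝ 1 (fun y => fderiv ℝ f y v) := by
  exact_mod_cast contDiff_pderiv (n := 1) (by exact_mod_cast hf) v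

lemma continuous_pderiv {f : E2 → ℝ} (hf : ContDiff ℝ 1 f) (v : E2) :
    Continuous (fun y => fderiv ℝ f y v) :=
  (contDiff_pderiv (n := 0) (by simpa using hf) v).continuous

lemma lapR_cv {k f : E2 → ℝ} (hk : LocallyIntegrable k) (hf : ContDiff ℝ 2 f)
    (hc : HasCompactSupport f) (x : E2) : lapR (cv k f) x = cv k (lapR f) x := by
  have e : ∀ i, fderiv ℝ (fun y => fderiv ℝ (cv k f) y (ev i)) x (ev i)
      = cv k (fun y => fderiv ℝ (fun y => fderiv ℝ f y (ev i)) y (ev i)) x := fun i => by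
    have : (fun y => fderiv ℝ (cv k f) y (ev i)) = cv k (fun y => fderiv ℝ f y (ev i)) :=
      funext fun y => cv_fderiv hk (hf.of_le (by norm_num)) hc y _
    rw [this, cv_fderiv hk (contDiff_one_pderiv hf (ev i))
      (hc.fderiv_apply ℝ _)]
  have hi : ∀ i, Integrable (fun z => k z *
      fderiv ℝ (fun y => fderiv ℝ f y (ev i)) (x - z) (ev i)) := fun i =>
    cv_integrable hk (f := fun y => fderiv ℝ (fun y => fderiv ℝ f y (ev i)) y (ev i))
      (continuous_pderiv (contDiff_one_pderiv hf (ev i)) (ev i)) ((hc.fderiv_apply ℝ _).fderiv_apply ℝ _) x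
  unfold lapR
  rw [Fin.sum_univ_two, e, e, cv, cv, ← integral_add (hi 0) (hi 1), cv]
  congr 1; funext z
  rw [Fin.sum_univ_two]; ring

lemma lapR_reflect {f : E2 → ℝ} (x z : E2) :
    lapR (fun z => f (x - z)) z = lapR f (x - z) := by
  have e : ∀ (g : E2 → ℝ) (z v : E2), fderiv ℝ (fun z => g (x - z)) z v = - fderiv ℝ g (x - z) v := by
    intro g z v
    have h1 : (fun z => g (x - z)) = (fun w => g (x + w)) ∘ (ContinuousLinearEquiv.neg ℝ : E2 ≃L[ℝ] E2) := by
      funext z; simp [sub_eq_add_neg]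
    rw [h1, ContinuousLinearEquiv.comp_right_fderiv, fderiv_comp_add_left]
    simp [sub_eq_add_neg]
  unfold lapR
  refine Finset.sum_congr rfl fun i _ => ?_
  have : (fun y => fderiv ℝ (fun z => f (x - z)) y (EuclideanSpace.single i 1))
      = fun y => (fun w => - fderiv ℝ f w (EuclideanSpace.single i 1)) (x - y) := by
    funext y; rw [e]
  rw [this, e (fun w => - fderiv ℝ f w (EuclideanSpace.single i 1)), fderiv_fun_neg]
  simp

lemma compact_reflect {f : E2 → ℝ} (hc : HasCompactSupport f) (x : E2) :
    HasCompactSupport (fun z => f (x - z)) :=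
  hc.comp_homeomorph (Homeomorph.subLeft x)

/-- The volume potential of `J₀(ω|·|)` solves the homogeneous Helmholtz equation. -/
lemma helm_J (ω : ℝ) {f : E2 → ℝ} (hf : ContDiff ℝ 2 f) (hc : HasCompactSupport f) (x : E2) :
    lapR (cv (Jk ω) f) x + ω ^ 2 * cv (Jk ω) f x = 0 := by
  have h := Jk_green ω (φ := fun z => f (x - z)) (hf.comp (contDiff_const.sub contDiff_id))
    (compact_reflect hc x)
  rw [lapR_cv (locInt_Jk ω) hf hc, ← h, cv, cv, ← integral_const_mul, ← integral_add]
  · congr 1; funext z; rw [lapR_reflect]; ring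
  · exact cv_integrable (locInt_Jk ω) (continuous_lapR hf) (hasCompactSupport_lapR hc) x
  · exact (cv_integrable (locInt_Jk ω) hf.continuous hc x).const_mul _

/-- The volume potential of `Y₀(ω|·|)` solves the inhomogeneous Helmholtz equation. -/
lemma helm_Y {ω : ℝ} (hω : 0 < ω) {f : E2 → ℝ} (hf : ContDiff ℝ 2 f) (hc : HasCompactSupport f)
    (x : E2) : lapR (cv (Yk ω) f) x + ω ^ 2 * cv (Yk ω) f x = kap * f x := by
  have h := Yk_green hω (φ := fun z => f (x - z)) (hf.comp (contDiff_const.sub contDiff_id))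
    (compact_reflect hc x)
  rw [sub_zero] at h
  rw [lapR_cv (locInt_Yk hω) hf hc, ← h, cv, cv, ← integral_const_mul, ← integral_add]
  · congr 1; funext z; rw [lapR_reflect]; ring
  · exact cv_integrable (locInt_Yk hω) (continuous_lapR hf) (hasCompactSupport_lapR hc) x
  · exact (cv_integrable (locInt_Yk hω) hf.continuous hc x).const_mul _

/-- Convolution with an even kernel is symmetric. -/
lemma cv_symm {k f g : E2 → ℝ} (hk : LocallyIntegrable k) (hev : ∀ z, k (-z) = k z)
    (hf : Continuous f) (hfc : HasCompactSupport f) (hg : Continuous g)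
    (hgc : HasCompactSupport g) :
    ∫ x, cv k f x * g x = ∫ x, cv k g x * f x := by
  have key : ∀ f g : E2 → ℝ, Continuous f → HasCompactSupport f → Continuous g →
      HasCompactSupport g → ∫ x, cv k f x * g x = ∫ z, k z * ∫ x, f (x - z) * g x := by
    intro f g hf hfc hg hgc
    obtain ⟨R, hR⟩ := hfc.isBounded.subset_ball (0:E2)
    obtain ⟨S, hS⟩ := hgc.isBounded.subset_ball (0:E2)
    obtain ⟨A, hA⟩ := hf.bounded_above_of_compact_support hfc
    have hf0 : ∀ x, x ∉ Metric.ball (0:E2) R → f x = 0 := fun x hx =>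
      image_eq_zero_of_notMem_tsupport fun h => hx (hR h)
    have hg0 : ∀ x, x ∉ Metric.ball (0:E2) S → g x = 0 := fun x hx =>
      image_eq_zero_of_notMem_tsupport fun h => hx (hS h)
    have hK : Integrable ((Metric.closedBall (0:E2) (R + S)).indicator k) :=
      (integrable_indicator_iff Metric.isClosed_closedBall.measurableSet).2
        (hk.integrableOn_isCompact (isCompact_closedBall _ _))
    have hgi : Integrable g := hg.integrable_of_hasCompactSupport hgc
    have hi : Integrable (fun p : E2 × E2 => k p.2 * f (p.1 - p.2) * g p.1)
        ((volume : Measure E2).prod volume) := by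
      have h1 := (hgi.mul_prod hK).bdd_mul (f := fun p : E2 × E2 => f (p.1 - p.2)) (c := A)
        (hf.comp (continuous_fst.sub continuous_snd)).aestronglyMeasurable
        (Eventually.of_forall fun p => hA _)
      refine h1.congr (Eventually.of_forall fun p => ?_)
      simp only
      by_cases hp : p.2 ∈ Metric.closedBall (0:E2) (R + S)
      · rw [Set.indicator_of_mem hp]; ring
      · by_cases h1 : p.1 ∈ Metric.ball (0:E2) S
        · rw [hf0 (p.1 - p.2)]
          · ring
          · intro h2
            apply hp
            rw [mem_ball_zero_iff] at h1 h2
            rw [mem_closedBall_zero_iff]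
            calc ‖p.2‖ = ‖p.1 - (p.1 - p.2)‖ := by congr 1; abel
              _ ≤ ‖p.1‖ + ‖p.1 - p.2‖ := norm_sub_le _ _
              _ ≤ _ := by linarith
        · rw [hg0 _ h1]; ring
    calc ∫ x, cv k f x * g x = ∫ x, ∫ z, k z * f (x - z) * g x := by
          congr 1; funext x; rw [cv, integral_mul_const]
      _ = ∫ z, ∫ x, k z * f (x - z) * g x := integral_integral_swap hi
      _ = _ := by
          congr 1; funext z
          rw [← integral_const_mul]
          congr 1; funext x; ring
  rw [key f g hf hfc hg hgc, key g f hg hgc hf hfc, ← integral_neg_eq_self]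
  congr 1; funext z
  rw [hev, ← integral_sub_right_eq_self (fun x => f (x - -z) * g x) z]
  congr 2; funext x
  rw [sub_neg_eq_add, sub_add_cancel]; ring

/-! ### The radiating solution and its energy flux -/

/-- Real part of the radiating solution. -/
noncomputable def ua (ω : ℝ) (f₀ f₁ : E2 → ℝ) (x : E2) : ℝ :=
  (cv (Yk ω) f₁ x + ω * cv (Jk ω) f₀ x) / 4

/-- Imaginary part of the radiating solution. -/
noncomputable def ub (ω : ℝ) (f₀ f₁ : E2 → ℝ) (x : E2) : ℝ :=
  (ω * cv (Yk ω) f₀ x - cv (Jk ω) f₁ x) / 4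

/-- On the real frequency axis the radiating solution splits into its real and imaginary parts. -/
lemma scat_eq {Ω : Set E2} {f₀ f₁ : E2 → ℝ} (h0 : Continuous f₀) (h1 : Continuous f₁)
    (c0 : HasCompactSupport f₀) (c1 : HasCompactSupport f₁) (s0 : tsupport f₀ ⊆ Ω)
    (s1 : tsupport f₁ ⊆ Ω) {ω : ℝ} (hω : 0 < ω) (x : E2) :
    scatSol Ω f₀ f₁ x (ω : ℂ) = (ua ω f₀ f₁ x : ℂ) + Complex.I * (ub ω f₀ f₁ x : ℂ) := by
  have i1 := cv_integrable (locInt_Yk hω) h1 c1 x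
  have i2 := cv_integrable (locInt_Yk hω) h0 c0 x
  have i3 := cv_integrable (locInt_Jk ω) h1 c1 x
  have i4 := cv_integrable (locInt_Jk ω) h0 c0 x
  rw [scatSol, setIntegral_eq_integral_of_forall_compl_eq_zero,
    ← integral_sub_left_eq_self _ volume x]
  · have e : ∫ z, hankelH0 (ω * (‖x - (x - z)‖ : ℝ)) *
        ((f₁ (x - z) : ℂ) + Complex.I * ω * (f₀ (x - z) : ℂ)) =
        ∫ z, (((Jk ω z * f₁ (x - z) - ω * (Yk ω z * f₀ (x - z)) : ℝ) : ℂ) +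
          Complex.I * ((Yk ω z * f₁ (x - z) + ω * (Jk ω z * f₀ (x - z)) : ℝ) : ℂ)) := by
      refine integral_congr_ae ?_
      filter_upwards [ae_ne_zero] with z hz
      rw [sub_sub_cancel, hankel_eq hω hz]
      push_cast
      linear_combination (Yk ω z : ℂ) * ω * (f₀ (x - z) : ℂ) * Complex.I_sq
    rw [e, integral_add, integral_const_mul, integral_complex_ofReal, integral_complex_ofReal, integral_sub,
      integral_add, integral_const_mul, integral_const_mul]
    · simp only [ua, ub, cv]
      push_cast
      linear_combination (-1/4 : ℂ) * ((∫ z, Yk ω z * f₁ (x - z) : ℝ) + ω * (∫ z, Jk ω z * f₀ (x - z) : ℝ)) * Complex.I_sq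
    · exact i1
    · exact i4.const_mul _
    · exact i3
    · exact i2.const_mul _
    · exact (i3.sub (i2.const_mul _)).ofReal
    · exact (i1.add (i4.const_mul _)).ofReal.const_mul _
  · intro y hy
    rw [image_eq_zero_of_notMem_tsupport fun h => hy (s0 h),
      image_eq_zero_of_notMem_tsupport fun h => hy (s1 h)]
    simp

lemma norm_sq_ri (p q : ℝ) : ‖(p : ℂ) + Complex.I * (q : ℂ)‖ ^ 2 = p ^ 2 + q ^ 2 := by
  rw [Complex.sq_norm, Complex.normSq_apply]; simp; ring

lemma gradNormSq_ri {p q : E2 → ℝ} (hp : ContDiff ℝ 1 p) (hq : ContDiff ℝ 1 q) (x : E2) :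
    gradNormSq (fun x => (p x : ℂ) + Complex.I * (q x : ℂ)) x =
      ∑ i : Fin 2, ((fderiv ℝ p x (ev i)) ^ 2 + (fderiv ℝ q x (ev i)) ^ 2) := by
  have h1 := Complex.ofRealCLM.hasFDerivAt.comp x (hp.differentiable (by norm_num) x).hasFDerivAt
  have h2 := Complex.ofRealCLM.hasFDerivAt.comp x (hq.differentiable (by norm_num) x).hasFDerivAt
  have h3 := (h1.add (h2.const_mul Complex.I)).fderiv
  have h4 : fderiv ℝ (fun x => (p x : ℂ) + Complex.I * (q x : ℂ)) x = _ := h3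
  unfold gradNormSq
  refine Finset.sum_congr rfl fun i _ => ?_
  rw [h4, ← norm_sq_ri]
  simp

lemma ua_contDiff {ω : ℝ} (hω : 0 < ω) {f₀ f₁ : E2 → ℝ} (h0 : ContDiff ℝ 2 f₀)
    (h1 : ContDiff ℝ 2 f₁) (c0 : HasCompactSupport f₀) (c1 : HasCompactSupport f₁) :
    ContDiff ℝ 2 (ua ω f₀ f₁) :=
  ((cv_contDiff (n := 2) (locInt_Yk hω) h1 c1).add
    (contDiff_const.mul (cv_contDiff (n := 2) (locInt_Jk ω) h0 c0))).div_const 4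

lemma ub_contDiff {ω : ℝ} (hω : 0 < ω) {f₀ f₁ : E2 → ℝ} (h0 : ContDiff ℝ 2 f₀)
    (h1 : ContDiff ℝ 2 f₁) (c0 : HasCompactSupport f₀) (c1 : HasCompactSupport f₁) :
    ContDiff ℝ 2 (ub ω f₀ f₁) :=
  ((contDiff_const.mul (cv_contDiff (n := 2) (locInt_Yk hω) h0 c0)).sub
    (cv_contDiff (n := 2) (locInt_Jk ω) h1 c1)).div_const 4

lemma lapR_lin {p q : E2 → ℝ} (hp : ContDiff ℝ 2 p) (hq : ContDiff ℝ 2 q) (s t : ℝ) (x : E2) :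
    lapR (fun x => s * p x + t * q x) x = s * lapR p x + t * lapR q x := by
  have e : ∀ (p q : E2 → ℝ), ContDiff ℝ 1 p → ContDiff ℝ 1 q → ∀ x v,
      fderiv ℝ (fun x => s * p x + t * q x) x v = s * fderiv ℝ p x v + t * fderiv ℝ q x v := by
    intro p q hp hq x v
    have h1 := (hp.differentiable (by norm_num) x).hasFDerivAt.const_mul s
    have h2 := (hq.differentiable (by norm_num) x).hasFDerivAt.const_mul t
    have h : fderiv ℝ (fun x => s * p x + t * q x) x = _ := (h1.add h2).fderiv
    rw [h]; simp
  unfold lapR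
  rw [Finset.mul_sum, Finset.mul_sum, ← Finset.sum_add_distrib]
  refine Finset.sum_congr rfl fun i _ => ?_
  have : (fun y => fderiv ℝ (fun x => s * p x + t * q x) y (EuclideanSpace.single i 1)) =
      fun y => s * (fun y => fderiv ℝ p y (ev i)) y + t * (fun y => fderiv ℝ q y (ev i)) y :=
    funext fun y => e p q (hp.of_le (by norm_num)) (hq.of_le (by norm_num)) y _
  rw [this, e _ _ (contDiff_one_pderiv hp _) (contDiff_one_pderiv hq _)]

lemma helm_ua {ω : ℝ} (hω : 0 < ω) {f₀ f₁ : E2 → ℝ} (h0 : ContDiff ℝ 2 f₀)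
    (h1 : ContDiff ℝ 2 f₁) (c0 : HasCompactSupport f₀) (c1 : HasCompactSupport f₁) (x : E2) :
    lapR (ua ω f₀ f₁) x + ω ^ 2 * ua ω f₀ f₁ x = kap / 4 * f₁ x := by
  have e : ua ω f₀ f₁ = fun x => (1 / 4) * cv (Yk ω) f₁ x + (ω / 4) * cv (Jk ω) f₀ x := by
    funext x; simp only [ua]; ring
  rw [e, lapR_lin (cv_contDiff (n := 2) (locInt_Yk hω) h1 c1)
    (cv_contDiff (n := 2) (locInt_Jk ω) h0 c0)]
  linear_combination (1 / 4) * helm_Y hω h1 c1 x + (ω / 4) * helm_J ω h0 c0 x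

lemma helm_ub {ω : ℝ} (hω : 0 < ω) {f₀ f₁ : E2 → ℝ} (h0 : ContDiff ℝ 2 f₀)
    (h1 : ContDiff ℝ 2 f₁) (c0 : HasCompactSupport f₀) (c1 : HasCompactSupport f₁) (x : E2) :
    lapR (ub ω f₀ f₁) x + ω ^ 2 * ub ω f₀ f₁ x = kap / 4 * (ω * f₀ x) := by
  have e : ub ω f₀ f₁ = fun x => (ω / 4) * cv (Yk ω) f₀ x + (- (1 / 4)) * cv (Jk ω) f₁ x := by
    funext x; simp only [ub]; ring
  rw [e, lapR_lin (cv_contDiff (n := 2) (locInt_Yk hω) h0 c0)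
    (cv_contDiff (n := 2) (locInt_Jk ω) h1 c1)]
  linear_combination (ω / 4) * helm_Y hω h0 c0 x - (1 / 4) * helm_J ω h1 c1 x

/-- The radiated power at frequency `ω`, up to a constant factor. -/
noncomputable def pw (f₀ f₁ : E2 → ℝ) (ω : ℝ) : ℝ :=
  (∫ x, cv (Jk ω) f₁ x * f₁ x) + ω ^ 2 * ∫ x, cv (Jk ω) f₀ x * f₀ x

/-- The current `a ∂ᵢb − b ∂ᵢa`. -/
noncomputable def cur (a b : E2 → ℝ) (i : Fin 2) (x : E2) : ℝ :=
  a x * fderiv ℝ b x (ev i) - b x * fderiv ℝ a x (ev i)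

lemma cur_contDiff {a b : E2 → ℝ} (ha : ContDiff ℝ 2 a) (hb : ContDiff ℝ 2 b) (i : Fin 2) :
    ContDiff ℝ 1 (cur a b i) :=
  ((ha.of_le (by norm_num)).mul (contDiff_one_pderiv hb _)).sub
    ((hb.of_le (by norm_num)).mul (contDiff_one_pderiv ha _))

lemma fderiv_mul_apply' {p q : E2 → ℝ} (hp : ContDiff ℝ 1 p) (hq : ContDiff ℝ 1 q) (x v : E2) :
    fderiv ℝ (fun x => p x * q x) x v = p x * fderiv ℝ q x v + q x * fderiv ℝ p x v := by
  have h : fderiv ℝ (fun x => p x * q x) x = _ :=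
    ((hp.differentiable (by norm_num) x).hasFDerivAt.mul
      (hq.differentiable (by norm_num) x).hasFDerivAt).fderiv
  rw [h]; simp

/-- The second Green identity in divergence form. -/
lemma div_cur {a b : E2 → ℝ} (ha : ContDiff ℝ 2 a) (hb : ContDiff ℝ 2 b) (x : E2) :
    ∑ i : Fin 2, fderiv ℝ (cur a b i) x (ev i) = a x * lapR b x - b x * lapR a x := by
  have e : ∀ i, fderiv ℝ (cur a b i) x (ev i) =
      a x * fderiv ℝ (fun y => fderiv ℝ b y (ev i)) x (ev i) -
      b x * fderiv ℝ (fun y => fderiv ℝ a y (ev i)) x (ev i) := fun i => by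
    have a1 : ContDiff ℝ 1 a := ha.of_le (by norm_num)
    have b1 : ContDiff ℝ 1 b := hb.of_le (by norm_num)
    have a2 := contDiff_one_pderiv ha (ev i)
    have b2 := contDiff_one_pderiv hb (ev i)
    have h : fderiv ℝ (cur a b i) x = _ :=
      fderiv_fun_sub ((a1.mul b2).differentiable (by norm_num) x)
        ((b1.mul a2).differentiable (by norm_num) x)
    rw [h, FunLike.coe_sub, Pi.sub_apply, fderiv_mul_apply' a1 b2, fderiv_mul_apply' b1 a2]
    ring
  unfold lapR
  rw [Fin.sum_univ_two, Fin.sum_univ_two, Fin.sum_univ_two, e, e]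
  ring

lemma integrableOn_of_bdd {Ω : Set E2} (hΩb : Bornology.IsBounded Ω) {g : E2 → ℝ}
    (hg : Continuous g) : IntegrableOn g Ω := by
  obtain ⟨R, hR⟩ := hΩb.subset_closedBall (0 : E2)
  exact (hg.continuousOn.integrableOn_compact (isCompact_closedBall _ R)).mono_set hR

/-- The divergence of the current of the radiating solution, integrated over `Ω`, is a positive
multiple of the radiated power. The cross terms in `Y₀` cancel because its kernel is even. -/
lemma flux_eq {Ω : Set E2} (hΩb : Bornology.IsBounded Ω) {f₀ f₁ : E2 → ℝ} (h0 : ContDiff ℝ 2 f₀)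
    (h1 : ContDiff ℝ 2 f₁) (c0 : HasCompactSupport f₀) (c1 : HasCompactSupport f₁)
    (s0 : tsupport f₀ ⊆ Ω) (s1 : tsupport f₁ ⊆ Ω) {ω : ℝ} (hω : 0 < ω) :
    ∑ i : Fin 2, ∫ x in Ω, fderiv ℝ (cur (ua ω f₀ f₁) (ub ω f₀ f₁) i) x (ev i) =
      kap / 16 * pw f₀ f₁ ω := by
  have ha := ua_contDiff hω h0 h1 c0 c1
  have hb := ub_contDiff hω h0 h1 c0 c1
  rw [← integral_finsetSum _ fun i _ => integrableOn_of_bdd hΩb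
    (continuous_pderiv (cur_contDiff ha hb i) (ev i))]
  have e : ∀ x, ∑ i : Fin 2, fderiv ℝ (cur (ua ω f₀ f₁) (ub ω f₀ f₁) i) x (ev i) =
      kap / 16 * (ω * (cv (Yk ω) f₁ x * f₀ x) - ω * (cv (Yk ω) f₀ x * f₁ x) +
        (cv (Jk ω) f₁ x * f₁ x + ω ^ 2 * (cv (Jk ω) f₀ x * f₀ x))) := fun x => by
    rw [div_cur ha hb]
    have e1 := helm_ua hω h0 h1 c0 c1 x
    have e2 := helm_ub hω h0 h1 c0 c1 x
    have : ua ω f₀ f₁ x * lapR (ub ω f₀ f₁) x - ub ω f₀ f₁ x * lapR (ua ω f₀ f₁) x =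
      kap / 4 * (ω * ua ω f₀ f₁ x * f₀ x - ub ω f₀ f₁ x * f₁ x) := by
      linear_combination ua ω f₀ f₁ x * e2 - ub ω f₀ f₁ x * e1
    rw [this, ua, ub]; ring
  simp only [e]
  rw [setIntegral_eq_integral_of_forall_compl_eq_zero fun x hx => by
    rw [image_eq_zero_of_notMem_tsupport fun h => hx (s0 h),
      image_eq_zero_of_notMem_tsupport fun h => hx (s1 h)]
    simp]
  have key : ∀ (k f g : E2 → ℝ), LocallyIntegrable k → ContDiff ℝ 2 f → HasCompactSupport f →
      ContDiff ℝ 2 g → HasCompactSupport g → Integrable (fun x => cv k f x * g x) :=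
    fun k f g hk hf hfc hg hgc =>
      ((cv_contDiff (n := 2) hk hf hfc).continuous.mul hg.continuous).integrable_of_hasCompactSupport
        hgc.mul_left
  rw [integral_const_mul, integral_add, integral_sub, integral_add, integral_const_mul,
    integral_const_mul, integral_const_mul,
    cv_symm (locInt_Yk hω) (Yk_neg ω) h1.continuous c1 h0.continuous c0, pw]
  · ring
  · exact key _ _ _ (locInt_Jk ω) h1 c1 h1 c1
  · exact (key _ _ _ (locInt_Jk ω) h0 c0 h0 c0).const_mul _
  · exact (key _ _ _ (locInt_Yk hω) h1 c1 h0 c0).const_mul _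
  · exact (key _ _ _ (locInt_Yk hω) h0 c0 h1 c1).const_mul _
  · exact ((key _ _ _ (locInt_Yk hω) h1 c1 h0 c0).const_mul _).sub
      ((key _ _ _ (locInt_Yk hω) h0 c0 h1 c1).const_mul _)
  · exact (key _ _ _ (locInt_Jk ω) h1 c1 h1 c1).add
      ((key _ _ _ (locInt_Jk ω) h0 c0 h0 c0).const_mul _)

/-- The integrand of `ε²`: the weighted Cauchy data of the radiating solution on the boundary at
frequency `ω`. -/
noncomputable def bdata (Ω : Set E2) (f₀ f₁ : E2 → ℝ) (ω : ℝ) : ℝ :=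
  (ω ^ 2 * ∫ x in frontier Ω, ‖scatSol Ω f₀ f₁ x (ω : ℂ)‖ ^ 2 ∂(μH[1])) +
    ∫ x in frontier Ω, gradNormSq (fun x' => scatSol Ω f₀ f₁ x' (ω : ℂ)) x ∂(μH[1])

/-- The radiated power is controlled by the Cauchy data on the boundary. -/
lemma power_le_data {Ω : Set E2} (hΩo : IsOpen Ω) (hΩb : Bornology.IsBounded Ω)
    (h : HasC2Boundary Ω) : ∃ C, 0 < C ∧ ∀ f₀ f₁ : E2 → ℝ, ContDiff ℝ 2 f₀ → ContDiff ℝ 2 f₁ →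
      HasCompactSupport f₀ → HasCompactSupport f₁ → tsupport f₀ ⊆ Ω → tsupport f₁ ⊆ Ω →
      ∀ ω : ℝ, 0 < ω → ω * pw f₀ f₁ ω ≤ C * bdata Ω f₀ f₁ ω := by
  obtain ⟨C, hC, hdiv⟩ := boundary_div hΩo hΩb h
  have hk := kap_pos
  refine ⟨C * 16 / kap, by positivity, fun f₀ f₁ h0 h1 c0 c1 s0 s1 ω hω => ?_⟩
  have ha := ua_contDiff hω h0 h1 c0 c1
  have hb := ub_contDiff hω h0 h1 c0 c1
  have ha1 : ContDiff ℝ 1 (ua ω f₀ f₁) := ha.of_le (by norm_num)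
  have hb1 : ContDiff ℝ 1 (ub ω f₀ f₁) := hb.of_le (by norm_num)
  have hfl := flux_eq hΩb h0 h1 c0 c1 s0 s1 hω
  set a := ua ω f₀ f₁ with ea
  set b := ub ω f₀ f₁ with eb
  have hKc := isCompact_frontier_of_bdd hΩb
  have hfin := frontier_length_lt_top hΩb h
  have hint : ∀ g : E2 → ℝ, Continuous g → IntegrableOn g (frontier Ω) (μH[1]) := fun g hg =>
    hg.continuousOn.integrableOn_of_subset_isCompact hKc hKc.measurableSet subset_rfl hfin.ne
  have hsc : (fun x' => scatSol Ω f₀ f₁ x' (ω : ℂ)) = fun x => (a x : ℂ) + Complex.I * (b x : ℂ) :=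
    funext fun x => scat_eq h0.continuous h1.continuous c0 c1 s0 s1 hω x
  have hD : bdata Ω f₀ f₁ ω = ∫ x in frontier Ω, (ω ^ 2 * (a x ^ 2 + b x ^ 2) +
      ∑ i : Fin 2, ((fderiv ℝ a x (ev i)) ^ 2 + (fderiv ℝ b x (ev i)) ^ 2)) ∂(μH[1]) := by
    have e1 : (fun x => ‖scatSol Ω f₀ f₁ x (ω : ℂ)‖ ^ 2) = fun x => a x ^ 2 + b x ^ 2 :=
      funext fun x => by rw [congrFun hsc x, norm_sq_ri]
    have e2 := funext (gradNormSq_ri ha1 hb1)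
    rw [integral_add, integral_const_mul, bdata, hsc, e1]
    · exact congrArg _ (congrArg _ e2)
    · exact (hint _ ((ha.continuous.pow 2).add (hb.continuous.pow 2))).const_mul _
    · exact hint _ (continuous_finsetSum _ fun i _ =>
        ((continuous_pderiv ha1 (ev i)).pow 2).add ((continuous_pderiv hb1 (ev i)).pow 2))
  have hcur : ∀ i, Continuous (fun x => |cur a b i x|) := fun i =>
    (cur_contDiff ha hb i).continuous.abs
  have h3 : ω * ∑ i : Fin 2, ∫ x in frontier Ω, |cur a b i x| ∂(μH[1]) ≤ bdata Ω f₀ f₁ ω := by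
    rw [hD, ← integral_finsetSum _ fun i _ => hint _ (hcur i), ← integral_const_mul]
    refine integral_mono (hint _ (continuous_const.mul (continuous_finsetSum _ fun i _ => hcur i)))
      (hint _ ?_) fun x => ?_
    · exact (continuous_const.mul ((ha.continuous.pow 2).add (hb.continuous.pow 2))).add
        (continuous_finsetSum _ fun i _ =>
        ((continuous_pderiv ha1 (ev i)).pow 2).add ((continuous_pderiv hb1 (ev i)).pow 2))
    -- Young's inequality, pointwise
    · have key : ∀ i, ω * |cur a b i x| ≤ (ω ^ 2 * (a x ^ 2 + b x ^ 2) +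
          ((fderiv ℝ a x (ev i)) ^ 2 + (fderiv ℝ b x (ev i)) ^ 2)) / 2 := fun i => by
        rw [← abs_of_pos hω, ← abs_mul, abs_of_pos hω, abs_le, cur]
        constructor <;>
        nlinarith [sq_nonneg (ω * a x - fderiv ℝ b x (ev i)), sq_nonneg (ω * a x + fderiv ℝ b x (ev i)),
          sq_nonneg (ω * b x - fderiv ℝ a x (ev i)), sq_nonneg (ω * b x + fderiv ℝ a x (ev i))]
      have k0 := key 0
      have k1 := key 1
      simp only [Fin.sum_univ_two]
      nlinarith [sq_nonneg (fderiv ℝ a x (ev 0)), sq_nonneg (fderiv ℝ a x (ev 1)),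
        sq_nonneg (fderiv ℝ b x (ev 0)), sq_nonneg (fderiv ℝ b x (ev 1))]
  have h4 : kap / 16 * pw f₀ f₁ ω ≤ C * ∑ i : Fin 2, ∫ x in frontier Ω, |cur a b i x| ∂(μH[1]) := by
    rw [← hfl, Finset.mul_sum]
    refine Finset.sum_le_sum fun i _ => (le_abs_self _).trans ?_
    exact hdiv _ (cur_contDiff ha hb i) (ev i) (by simp)
  rw [show C * 16 / kap * bdata Ω f₀ f₁ ω = 16 / kap * (C * bdata Ω f₀ f₁ ω) by ring]
  calc ω * pw f₀ f₁ ω = 16 / kap * (ω * (kap / 16 * pw f₀ f₁ ω)) := by field_simp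
    _ ≤ 16 / kap * (ω * (C * ∑ i : Fin 2, ∫ x in frontier Ω, |cur a b i x| ∂(μH[1]))) := by gcongr
    _ = 16 / kap * (C * (ω * ∑ i : Fin 2, ∫ x in frontier Ω, |cur a b i x| ∂(μH[1]))) := by ring
    _ ≤ _ := by gcongr

/-! ### Fourier representation of the radiated power -/

section

open FourierTransform

/-- The squared modulus of the Fourier transform of a real function. -/
noncomputable def Gf (f : E2 → ℝ) (ξ : E2) : ℝ := ‖𝓕 (fun x => (f x : ℂ)) ξ‖ ^ 2

/-- The squared modulus as the sum of the squares of the cosine and sine transforms. -/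
lemma Gf_eq {f : E2 → ℝ} (hf : Continuous f) (hc : HasCompactSupport f) (ξ : E2) :
    Gf f ξ = (∫ x, f x * Real.cos (2 * Real.pi * inner ℝ x ξ)) ^ 2 +
      (∫ x, f x * Real.sin (2 * Real.pi * inner ℝ x ξ)) ^ 2 := by
  have hi : Integrable f := hf.integrable_of_hasCompactSupport hc
  have i1 : Integrable (fun x => f x * Real.cos (2 * Real.pi * inner ℝ x ξ)) :=
    (hf.mul (by fun_prop)).integrable_of_hasCompactSupport hc.mul_right
  have i2 : Integrable (fun x => f x * Real.sin (2 * Real.pi * inner ℝ x ξ)) :=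
    (hf.mul (by fun_prop)).integrable_of_hasCompactSupport hc.mul_right
  have e : 𝓕 (fun x => (f x : ℂ)) ξ =
      ((∫ x, f x * Real.cos (2 * Real.pi * inner ℝ x ξ) : ℝ) : ℂ) + Complex.I *
        ((-∫ x, f x * Real.sin (2 * Real.pi * inner ℝ x ξ) : ℝ) : ℂ) := by
    rw [Real.fourier_eq', ← integral_neg, ← integral_complex_ofReal, ← integral_complex_ofReal,
      ← integral_const_mul, ← integral_add]
    · congr 1; funext x
      rw [Complex.exp_mul_I, ← Complex.ofReal_cos, ← Complex.ofReal_sin,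
        show -2 * Real.pi * inner ℝ x ξ = -(2 * Real.pi * inner ℝ x ξ) by ring, Real.cos_neg,
        Real.sin_neg]
      simp only [smul_eq_mul]; push_cast; ring
    · exact i1.ofReal
    · exact (i2.neg.ofReal).const_mul _
  rw [Gf, e, norm_sq_ri]; ring

lemma prod_integrable {f : E2 → ℝ} (hf : Continuous f) (hc : HasCompactSupport f)
    {h : E2 × E2 → ℝ} (hh : Continuous h) :
    Integrable (fun p : E2 × E2 => f p.1 * f p.2 * h p) ((volume : Measure E2).prod volume) := by
  have : HasCompactSupport (fun p : E2 × E2 => f p.1 * f p.2) := by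
    refine HasCompactSupport.of_support_subset_isCompact (hc.isCompact.prod hc.isCompact) ?_
    intro p hp
    have hp : f p.1 * f p.2 ≠ 0 := hp
    exact ⟨subset_tsupport _ (left_ne_zero_of_mul hp), subset_tsupport _ (right_ne_zero_of_mul hp)⟩
  exact (((hf.comp continuous_fst).mul (hf.comp continuous_snd)).mul hh).integrable_of_hasCompactSupport
    this.mul_right

lemma Gf_double {f : E2 → ℝ} (hf : Continuous f) (hc : HasCompactSupport f) (ξ : E2) :
    Gf f ξ = ∫ p : E2 × E2, f p.1 * f p.2 * Real.cos (2 * Real.pi * inner ℝ (p.1 - p.2) ξ)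
      ∂((volume : Measure E2).prod volume) := by
  rw [Gf_eq hf hc, sq, sq, ← integral_prod_mul, ← integral_prod_mul, ← integral_add]
  · congr 1; funext p
    rw [inner_sub_left, mul_sub, Real.cos_sub]; ring
  · refine (prod_integrable hf hc (h := fun p => Real.cos (2 * Real.pi * inner ℝ p.1 ξ) *
      Real.cos (2 * Real.pi * inner ℝ p.2 ξ)) (by fun_prop)).congr (Eventually.of_forall fun p => ?_)
    simp only; ring
  · refine (prod_integrable hf hc (h := fun p => Real.sin (2 * Real.pi * inner ℝ p.1 ξ) *
      Real.sin (2 * Real.pi * inner ℝ p.2 ξ)) (by fun_prop)).congr (Eventually.of_forall fun p => ?_)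
    simp only; ring

/-- The point with polar coordinates `(r, θ)`. -/
noncomputable def pt (r θ : ℝ) : E2 := !₂[r * Real.cos θ, r * Real.sin θ]

lemma continuous_pt : Continuous (fun p : ℝ × ℝ => pt p.1 p.2) := by
  unfold pt
  refine (PiLp.continuous_toLp 2 _).comp (continuous_pi fun i => ?_)
  fin_cases i
  · simp; fun_prop
  · simp; fun_prop

/-- The quadratic form of the volume potential with kernel `J₀(ω|·|)`. -/
noncomputable def qf (f : E2 → ℝ) (ω : ℝ) : ℝ := ∫ x, cv (Jk ω) f x * f x

lemma qf_double {f : E2 → ℝ} (hf : Continuous f) (hc : HasCompactSupport f) (ω : ℝ) :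
    qf f ω = ∫ p : E2 × E2, f p.1 * f p.2 * Jk ω (p.1 - p.2) ∂((volume : Measure E2).prod volume) := by
  rw [integral_prod _ (prod_integrable hf hc (h := fun p => Jk ω (p.1 - p.2))
    ((continuous_Jk ω).comp (by fun_prop))), qf]
  congr 1; funext x
  rw [cv, ← integral_sub_left_eq_self _ volume x, ← integral_mul_const]
  congr 1; funext z
  rw [sub_sub_cancel]; ring

/-- Averaging the Fourier modulus over a circle gives the `J₀` quadratic form. -/
lemma integral_Gf_circle {f : E2 → ℝ} (hf : Continuous f) (hc : HasCompactSupport f) (r : ℝ) :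
    ∫ θ in (-Real.pi)..Real.pi, Gf f (pt r θ) = 2 * Real.pi * qf f (2 * Real.pi * r) := by
  have hpi : -Real.pi ≤ Real.pi := by linarith [Real.pi_pos]
  simp only [Gf_double hf hc]
  rw [intervalIntegral.integral_of_le hpi, integral_integral_swap]
  · rw [qf_double hf hc, ← integral_const_mul]
    congr 1; funext p
    rw [← intervalIntegral.integral_of_le hpi, intervalIntegral.integral_const_mul]
    have e : ∀ θ, Real.cos (2 * Real.pi * inner ℝ (p.1 - p.2) (pt r θ)) =
        Real.cos ((2 * Real.pi * r * (p.1 - p.2) 0) * Real.cos θ +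
          (2 * Real.pi * r * (p.1 - p.2) 1) * Real.sin θ) := fun θ => by
      congr 1
      rw [PiLp.inner_apply, Fin.sum_univ_two]
      simp [pt]; ring
    simp only [e]
    rw [integral_cos_circle, Jk]
    have : ((2 * Real.pi * r * (p.1 - p.2) 0) ^ 2 + (2 * Real.pi * r * (p.1 - p.2) 1) ^ 2) / 4 =
        (2 * Real.pi * r * ‖p.1 - p.2‖ / 2) ^ 2 := by
      rw [show (2 * Real.pi * r * ‖p.1 - p.2‖ / 2) ^ 2 = (Real.pi * r) ^ 2 * ‖p.1 - p.2‖ ^ 2 by ring,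
        EuclideanSpace.norm_sq_eq, Fin.sum_univ_two]
      simp only [Real.norm_eq_abs, sq_abs]; ring
    rw [this]; ring
  · have h1 := (integrable_const (μ := volume.restrict (Set.Ioc (-Real.pi) Real.pi)) (1:ℝ)).mul_prod
      (prod_integrable hf hc (h := fun _ => 1) continuous_const)
    refine h1.mono ?_ (Eventually.of_forall fun q => ?_)
    · refine Continuous.aestronglyMeasurable ?_
      have := continuous_pt
      have h2 : Continuous fun q : ℝ × (E2 × E2) => pt r q.1 :=
        continuous_pt.comp (continuous_const.prodMk continuous_fst)
      simp only [Function.uncurry_def]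
      refine (by fun_prop : Continuous fun q : ℝ × (E2 × E2) => f q.2.1 * f q.2.2).mul ?_
      refine Real.continuous_cos.comp (continuous_const.mul ?_)
      exact Continuous.inner (by fun_prop) h2
    · simp only [Function.uncurry_def, norm_mul, mul_one, one_mul]
      exact mul_le_of_le_one_right (by positivity) (Real.abs_cos_le_one _)

lemma norm_pt {r θ : ℝ} (hr : 0 ≤ r) : ‖pt r θ‖ = r := by
  have h : ‖pt r θ‖ ^ 2 = r ^ 2 := by
    rw [EuclideanSpace.norm_sq_eq, Fin.sum_univ_two]
    simp only [pt, Real.norm_eq_abs, sq_abs]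
    simp only [Matrix.cons_val_zero, Matrix.cons_val_one]
    linear_combination r ^ 2 * Real.sin_sq_add_cos_sq θ
  exact (pow_left_inj₀ (norm_nonneg _) hr two_ne_zero).1 h

/-- Integration over a disc in polar coordinates. -/
lemma polar_ball {H : E2 → ℝ} (hH : Continuous H) {ρ : ℝ} (hρ : 0 ≤ ρ) :
    ∫ η in Metric.ball (0 : E2) ρ, H η =
      ∫ r in (0 : ℝ)..ρ, r * ∫ θ in (-Real.pi)..Real.pi, H (pt r θ) := by
  have hpi : -Real.pi ≤ Real.pi := by linarith [Real.pi_pos]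
  have hmp := Complex.orthonormalBasisOneI.repr.measurePreserving
  rw [← integral_indicator Metric.isOpen_ball.measurableSet,
    ← hmp.integral_comp Complex.orthonormalBasisOneI.repr.toMeasurableEquiv.measurableEmbedding,
    ← Complex.integral_comp_polarCoord_symm]
  have e1 : ∀ p : ℝ × ℝ, Complex.orthonormalBasisOneI.repr (Complex.polarCoord.symm p) =
      pt p.1 p.2 := fun p => by
    ext i
    rw [Complex.orthonormalBasisOneI_repr_apply, Complex.polarCoord_symm_apply, pt]
    fin_cases i <;> simp [Complex.cos_ofReal_re, Complex.sin_ofReal_re, Complex.cos_ofReal_im, Complex.sin_ofReal_im]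
  simp only [e1]
  have e2 : ∫ p in polarCoord.target, p.1 • (Metric.ball (0:E2) ρ).indicator H (pt p.1 p.2) =
      ∫ p in polarCoord.target, (Set.Iio ρ ×ˢ (Set.univ : Set ℝ)).indicator
        (fun p : ℝ × ℝ => p.1 * H (pt p.1 p.2)) p := by
    refine setIntegral_congr_fun polarCoord.open_target.measurableSet fun p hp => ?_
    rw [polarCoord_target] at hp
    have h0 : 0 < p.1 := hp.1
    by_cases h : p.1 < ρ
    · rw [Set.indicator_of_mem, Set.indicator_of_mem, smul_eq_mul]
      · exact ⟨h, trivial⟩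
      · rw [mem_ball_zero_iff, norm_pt h0.le]; exact h
    · rw [Set.indicator_of_notMem, Set.indicator_of_notMem, smul_zero]
      · exact fun h' => h h'.1
      · rw [mem_ball_zero_iff, norm_pt h0.le]; exact h
  have hc : Continuous (fun p : ℝ × ℝ => p.1 * H (pt p.1 p.2)) :=
    continuous_fst.mul (hH.comp continuous_pt)
  rw [e2, setIntegral_indicator (measurableSet_Iio.prod MeasurableSet.univ), polarCoord_target,
    Set.prod_inter_prod, Set.inter_univ, Set.Ioi_inter_Iio, Measure.volume_eq_prod,
    setIntegral_prod, intervalIntegral.integral_of_le hρ, integral_Ioc_eq_integral_Ioo]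
  · refine setIntegral_congr_fun measurableSet_Ioo fun r _ => ?_
    simp only
    rw [intervalIntegral.integral_of_le hpi, integral_Ioc_eq_integral_Ioo, integral_const_mul]
  · exact (hc.continuousOn.integrableOn_compact (isCompact_Icc.prod isCompact_Icc)).mono_set
      (Set.prod_mono Set.Ioo_subset_Icc_self Set.Ioo_subset_Icc_self)

/-- A smooth compactly supported real function as a complex Schwartz function. -/
noncomputable def sw {f : E2 → ℝ} (hf : ContDiff ℝ (⊤ : ℕ∞) f) (hc : HasCompactSupport f) :
    SchwartzMap E2 ℂ :=
  HasCompactSupport.toSchwartzMap (f := fun x => (f x : ℂ))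
    (hc.comp_left (g := fun t : ℝ => (t : ℂ)) Complex.ofReal_zero) (Complex.ofRealCLM.contDiff.comp hf)

lemma sw_apply {f : E2 → ℝ} (hf : ContDiff ℝ (⊤ : ℕ∞) f) (hc : HasCompactSupport f) (x : E2) :
    sw hf hc x = (f x : ℂ) := rfl

lemma Gf_sw {f : E2 → ℝ} (hf : ContDiff ℝ (⊤ : ℕ∞) f) (hc : HasCompactSupport f) (ξ : E2) :
    Gf f ξ = ‖(𝓕 (sw hf hc)) ξ‖ ^ 2 := by
  rw [Gf, SchwartzMap.fourier_coe]; rfl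

lemma Gf_nonneg (f : E2 → ℝ) (ξ : E2) : 0 ≤ Gf f ξ := by unfold Gf; positivity

lemma Gf_continuous {f : E2 → ℝ} (hf : ContDiff ℝ (⊤ : ℕ∞) f) (hc : HasCompactSupport f) :
    Continuous (Gf f) := by
  rw [funext (Gf_sw hf hc)]
  exact (SchwartzMap.continuous _).norm.pow 2

lemma Gf_integrable {f : E2 → ℝ} (hf : ContDiff ℝ (⊤ : ℕ∞) f) (hc : HasCompactSupport f) :
    Integrable (Gf f) := by
  rw [funext (Gf_sw hf hc)]
  exact ((SchwartzMap.memLp (𝓕 (sw hf hc)) 2).integrable_norm_pow two_ne_zero)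

/-- Plancherel's theorem. -/
lemma integral_Gf {f : E2 → ℝ} (hf : ContDiff ℝ (⊤ : ℕ∞) f) (hc : HasCompactSupport f) :
    ∫ ξ, Gf f ξ = ∫ x, f x ^ 2 := by
  rw [funext (Gf_sw hf hc), SchwartzMap.integral_norm_sq_fourier]
  congr 1; funext x
  rw [sw_apply, Complex.norm_real, Real.norm_eq_abs, sq_abs]

lemma pd_contDiff {f : E2 → ℝ} (hf : ContDiff ℝ (⊤ : ℕ∞) f) (i : Fin 2) :
    ContDiff ℝ (⊤ : ℕ∞) (pd i f) :=
  (hf.fderiv_right (m := (⊤ : ℕ∞)) (by simp)).clm_apply contDiff_const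

lemma pd_compact {f : E2 → ℝ} (hc : HasCompactSupport f) (i : Fin 2) :
    HasCompactSupport (pd i f) := hc.fderiv_apply ℝ _

/-- Differentiation becomes multiplication. -/
lemma Gf_pd {f : E2 → ℝ} (hf : ContDiff ℝ (⊤ : ℕ∞) f) (hc : HasCompactSupport f) (i : Fin 2)
    (ξ : E2) : Gf (pd i f) ξ = (2 * Real.pi * ξ i) ^ 2 * Gf f ξ := by
  have e : sw (pd_contDiff hf i) (pd_compact hc i) = LineDeriv.lineDerivOp (ev i) (sw hf hc) := by
    ext x
    rw [SchwartzMap.lineDerivOp_apply_eq_fderiv, sw_apply]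
    have h1 := (Complex.ofRealCLM.hasFDerivAt.comp x
      (hf.differentiable (by simp) x).hasFDerivAt).fderiv
    have h2 : fderiv ℝ (sw hf hc) x = _ := h1
    rw [h2]
    simp [pd]
  have hg : (fun x : E2 => inner ℝ x (ev i)).HasTemperateGrowth := by fun_prop
  rw [Gf_sw (pd_contDiff hf i) (pd_compact hc i), e, SchwartzMap.fourier_lineDerivOp_eq, Gf_sw hf hc]
  rw [smul_apply, SchwartzMap.smulLeftCLM_apply_apply hg]
  simp only [norm_smul, mul_pow, norm_mul]
  rw [EuclideanSpace.inner_single_right]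
  simp [sq_abs]
  ring

lemma qf_eq_circle {f : E2 → ℝ} (hf : ContDiff ℝ (⊤ : ℕ∞) f) (hc : HasCompactSupport f) (ω : ℝ) :
    qf f ω = (2 * Real.pi)⁻¹ * ∫ θ in (-Real.pi)..Real.pi, Gf f (pt (ω / (2 * Real.pi)) θ) := by
  have := Real.pi_pos
  rw [integral_Gf_circle hf.continuous hc, show 2 * Real.pi * (ω / (2 * Real.pi)) = ω by field_simp]
  field_simp

lemma qf_nonneg {f : E2 → ℝ} (hf : ContDiff ℝ (⊤ : ℕ∞) f) (hc : HasCompactSupport f) (ω : ℝ) :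
    0 ≤ qf f ω := by
  have := Real.pi_pos
  rw [qf_eq_circle hf hc]
  exact mul_nonneg (by positivity)
    (intervalIntegral.integral_nonneg (by linarith) fun _ _ => Gf_nonneg _ _)

lemma qf_continuous {f : E2 → ℝ} (hf : ContDiff ℝ (⊤ : ℕ∞) f) (hc : HasCompactSupport f) :
    Continuous (qf f) := by
  rw [funext (qf_eq_circle hf hc)]
  refine continuous_const.mul
    (intervalIntegral.continuous_parametric_intervalIntegral_of_continuous' ?_ _ _)
  exact (Gf_continuous hf hc).comp (continuous_pt.comp
    ((continuous_fst.div_const _).prodMk continuous_snd))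

lemma pw_eq (f₀ f₁ : E2 → ℝ) (ω : ℝ) : pw f₀ f₁ ω = qf f₁ ω + ω ^ 2 * qf f₀ ω := rfl

/-- The spectral energy density. -/
noncomputable def Hs (f₀ f₁ : E2 → ℝ) (η : E2) : ℝ := Gf f₁ η + (2 * Real.pi * ‖η‖) ^ 2 * Gf f₀ η

lemma integrable_add_fun {f g : E2 → ℝ} (hf : Integrable f) (hg : Integrable g) :
    Integrable (fun x => f x + g x) := hf.add hg

lemma E2_norm_sq (η : E2) : ‖η‖ ^ 2 = η 0 ^ 2 + η 1 ^ 2 := by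
  rw [EuclideanSpace.norm_sq_eq, Fin.sum_univ_two]; simp only [Real.norm_eq_abs, sq_abs]

/-- The energy controlled by the theorem, without the lowest order term of `f₀`. -/
noncomputable def en (f₀ f₁ : E2 → ℝ) : ℝ :=
  (∫ x, f₁ x ^ 2) + ((∫ x, pd 0 f₀ x ^ 2) + ∫ x, pd 1 f₀ x ^ 2)

/-- The higher order energy which controls the tail of the spectral density. -/
noncomputable def hen (f₀ f₁ : E2 → ℝ) : ℝ :=
  ((∫ x, pd 0 f₁ x ^ 2) + ∫ x, pd 1 f₁ x ^ 2) +
    ((∫ x, pd 0 (pd 0 f₀) x ^ 2) + ∫ x, pd 1 (pd 1 f₀) x ^ 2)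

section
variable {f₀ f₁ : E2 → ℝ}

lemma pw_nonneg (h0 : ContDiff ℝ (⊤ : ℕ∞) f₀) (h1 : ContDiff ℝ (⊤ : ℕ∞) f₁)
    (c0 : HasCompactSupport f₀) (c1 : HasCompactSupport f₁) (ω : ℝ) : 0 ≤ pw f₀ f₁ ω :=
  add_nonneg (qf_nonneg h1 c1 ω) (mul_nonneg (sq_nonneg _) (qf_nonneg h0 c0 ω))

lemma pw_continuous (h0 : ContDiff ℝ (⊤ : ℕ∞) f₀) (h1 : ContDiff ℝ (⊤ : ℕ∞) f₁)
    (c0 : HasCompactSupport f₀) (c1 : HasCompactSupport f₁) : Continuous (pw f₀ f₁) :=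
  (qf_continuous h1 c1).add ((continuous_pow 2).mul (qf_continuous h0 c0))

lemma Hs_eq (h0 : ContDiff ℝ (⊤ : ℕ∞) f₀) (c0 : HasCompactSupport f₀) (η : E2) :
    Hs f₀ f₁ η = Gf f₁ η + (Gf (pd 0 f₀) η + Gf (pd 1 f₀) η) := by
  rw [Hs, Gf_pd h0 c0, Gf_pd h0 c0, mul_pow, E2_norm_sq]; ring

lemma Hs_nonneg (f₀ f₁ : E2 → ℝ) (η : E2) : 0 ≤ Hs f₀ f₁ η :=
  add_nonneg (Gf_nonneg _ _) (mul_nonneg (sq_nonneg _) (Gf_nonneg _ _))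

lemma Hs_continuous (h0 : ContDiff ℝ (⊤ : ℕ∞) f₀) (h1 : ContDiff ℝ (⊤ : ℕ∞) f₁)
    (c0 : HasCompactSupport f₀) (c1 : HasCompactSupport f₁) : Continuous (Hs f₀ f₁) :=
  (Gf_continuous h1 c1).add (((continuous_const.mul continuous_norm).pow 2).mul
    (Gf_continuous h0 c0))

lemma Hs_integrable (h0 : ContDiff ℝ (⊤ : ℕ∞) f₀) (h1 : ContDiff ℝ (⊤ : ℕ∞) f₁)
    (c0 : HasCompactSupport f₀) (c1 : HasCompactSupport f₁) : Integrable (Hs f₀ f₁) := by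
  rw [funext (Hs_eq h0 c0)]
  exact (Gf_integrable h1 c1).add ((Gf_integrable (pd_contDiff h0 _) (pd_compact c0 _)).add
    (Gf_integrable (pd_contDiff h0 _) (pd_compact c0 _)))

lemma integral_Hs (h0 : ContDiff ℝ (⊤ : ℕ∞) f₀) (h1 : ContDiff ℝ (⊤ : ℕ∞) f₁)
    (c0 : HasCompactSupport f₀) (c1 : HasCompactSupport f₁) : ∫ η, Hs f₀ f₁ η = en f₀ f₁ := by
  have i0 := Gf_integrable (pd_contDiff h0 0) (pd_compact c0 0)
  have i1 := Gf_integrable (pd_contDiff h0 1) (pd_compact c0 1)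
  rw [funext (Hs_eq h0 c0), integral_add (Gf_integrable h1 c1)
    (integrable_add_fun i0 i1), integral_add i0 i1,
    integral_Gf h1 c1, integral_Gf (pd_contDiff h0 0) (pd_compact c0 0),
    integral_Gf (pd_contDiff h0 1) (pd_compact c0 1), en]

/-- The low frequency part of the energy is the integrated radiated power. -/
lemma integral_Hs_ball (h0 : ContDiff ℝ (⊤ : ℕ∞) f₀) (h1 : ContDiff ℝ (⊤ : ℕ∞) f₁)
    (c0 : HasCompactSupport f₀) (c1 : HasCompactSupport f₁) {K : ℝ} (hK : 0 < K) :
    ∫ η in Metric.ball (0 : E2) (K / (2 * Real.pi)), Hs f₀ f₁ η =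
      (2 * Real.pi)⁻¹ * ∫ ω in (0 : ℝ)..K, ω * pw f₀ f₁ ω := by
  have hpi := Real.pi_pos
  rw [polar_ball (Hs_continuous h0 h1 c0 c1) (by positivity)]
  have e : ∀ r ∈ Set.uIcc 0 (K / (2 * Real.pi)), r * ∫ θ in (-Real.pi)..Real.pi, Hs f₀ f₁ (pt r θ) =
      (fun ω => ω * pw f₀ f₁ ω) ((2 * Real.pi) * r) := fun r hr => by
    rw [Set.uIcc_of_le (by positivity)] at hr
    have hn := hr.1
    have hG : ∀ {f : E2 → ℝ}, ContDiff ℝ (⊤ : ℕ∞) f → HasCompactSupport f →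
        IntervalIntegrable (fun θ => Gf f (pt r θ)) volume (-Real.pi) Real.pi := fun hf hc =>
      ((Gf_continuous hf hc).comp (continuous_pt.comp
        (continuous_const.prodMk continuous_id))).intervalIntegrable _ _
    simp only [Hs, norm_pt hn]
    rw [intervalIntegral.integral_add (hG h1 c1) ((hG h0 c0).const_mul _),
      intervalIntegral.integral_const_mul, integral_Gf_circle h1.continuous c1,
      integral_Gf_circle h0.continuous c0, pw_eq]
    ring
  rw [intervalIntegral.integral_congr e, intervalIntegral.integral_comp_mul_left (fun ω => ω * pw f₀ f₁ ω) (by positivity),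
    show 2 * Real.pi * (K / (2 * Real.pi)) = K by field_simp, mul_zero, smul_eq_mul]

/-- Splitting of the energy at frequency `K`: the part above `K` gains a factor `K⁻²` from one more
derivative. -/
lemma en_le (h0 : ContDiff ℝ (⊤ : ℕ∞) f₀) (h1 : ContDiff ℝ (⊤ : ℕ∞) f₁)
    (c0 : HasCompactSupport f₀) (c1 : HasCompactSupport f₁) {K : ℝ} (hK : 0 < K) :
    en f₀ f₁ ≤ (∫ ω in (0 : ℝ)..K, ω * pw f₀ f₁ ω) + 2 * hen f₀ f₁ / K ^ 2 := by
  have hpi := Real.pi_gt_three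
  have hpn : 0 ≤ ∫ ω in (0 : ℝ)..K, ω * pw f₀ f₁ ω :=
    intervalIntegral.integral_nonneg hK.le fun ω hω => mul_nonneg hω.1 (pw_nonneg h0 h1 c0 c1 ω)
  have hlow := integral_Hs_ball h0 h1 c0 c1 hK
  have hsm := fun i => pd_contDiff h0 i
  have hcc := fun i => pd_compact c0 i
  have i10 := Gf_integrable (pd_contDiff h1 0) (pd_compact c1 0)
  have i11 := Gf_integrable (pd_contDiff h1 1) (pd_compact c1 1)
  have i00 := Gf_integrable (pd_contDiff (hsm 0) 0) (pd_compact (hcc 0) 0)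
  have i01 := Gf_integrable (pd_contDiff (hsm 1) 1) (pd_compact (hcc 1) 1)
  have hhigh : ∫ η in (Metric.ball (0 : E2) (K / (2 * Real.pi)))ᶜ, Hs f₀ f₁ η ≤
      2 * hen f₀ f₁ / K ^ 2 := by
    set T : E2 → ℝ := fun η => (Gf (pd 0 f₁) η + Gf (pd 1 f₁) η +
      (Gf (pd 0 (pd 0 f₀)) η + Gf (pd 1 (pd 1 f₀)) η)) * (2 / K ^ 2) with hT
    have hTi : Integrable T := ((i10.add i11).add (i00.add i01)).mul_const _
    have hT0 : ∀ η, 0 ≤ T η := fun η => mul_nonneg (add_nonneg (add_nonneg (Gf_nonneg _ _)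
      (Gf_nonneg _ _)) (add_nonneg (Gf_nonneg _ _) (Gf_nonneg _ _))) (by positivity)
    calc ∫ η in (Metric.ball (0 : E2) (K / (2 * Real.pi)))ᶜ, Hs f₀ f₁ η
        ≤ ∫ η in (Metric.ball (0 : E2) (K / (2 * Real.pi)))ᶜ, T η := by
          refine setIntegral_mono_on (Hs_integrable h0 h1 c0 c1).integrableOn hTi.integrableOn
            Metric.isOpen_ball.measurableSet.compl fun η hη => ?_
          have hη : K / (2 * Real.pi) ≤ ‖η‖ := by
            by_contra hlt
            exact hη (mem_ball_zero_iff.2 (not_le.1 hlt))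
          rw [div_le_iff₀ (by positivity)] at hη
          have hq : K ^ 2 ≤ (2 * Real.pi * η 0) ^ 2 + (2 * Real.pi * η 1) ^ 2 := by
            have : K ^ 2 ≤ (‖η‖ * (2 * Real.pi)) ^ 2 := by gcongr
            rw [mul_pow, E2_norm_sq] at this
            linarith
          rw [Hs_eq h0 c0, hT]
          simp only [Gf_pd (hsm _) (hcc _), Gf_pd h0 c0, Gf_pd h1 c1]
          have g1 := Gf_nonneg f₁ η
          have g0 := Gf_nonneg f₀ η
          rw [← mul_div_assoc, le_div_iff₀ (by positivity)]
          generalize (2 * Real.pi * η 0) ^ 2 = s at *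
          generalize hs1 : (2 * Real.pi * η 1) ^ 2 = t at *
          -- `(s + t)² ≤ 2 (s² + t²)` avoids the mixed derivative of `f₀`
          have hst : (s + t) * K ^ 2 ≤ 2 * (s * s + t * t) := by
            rcases le_or_gt (s + t) 0 with h | h
            · nlinarith [sq_nonneg s, sq_nonneg t, sq_nonneg K]
            · nlinarith [sq_nonneg (s - t)]
          nlinarith [mul_le_mul_of_nonneg_right hst g0, mul_le_mul_of_nonneg_right hq g1,
            mul_nonneg (sq_nonneg K) g1]
      _ ≤ ∫ η, T η := setIntegral_le_integral hTi (Eventually.of_forall hT0)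
      _ = _ := by
          rw [hT, integral_mul_const, integral_add (integrable_add_fun i10 i11)
            (integrable_add_fun i00 i01),
            integral_add i10 i11, integral_add i00 i01,
            integral_Gf (pd_contDiff h1 0) (pd_compact c1 0),
            integral_Gf (pd_contDiff h1 1) (pd_compact c1 1),
            integral_Gf (pd_contDiff (hsm 0) 0) (pd_compact (hcc 0) 0),
            integral_Gf (pd_contDiff (hsm 1) 1) (pd_compact (hcc 1) 1), hen]
          ring
  rw [← integral_Hs h0 h1 c0 c1, ← integral_add_compl Metric.isOpen_ball.measurableSet
    (Hs_integrable h0 h1 c0 c1), hlow]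
  refine add_le_add ?_ hhigh
  exact mul_le_of_le_one_left hpn (inv_le_one_of_one_le₀ (by linarith))

end

end

/-! ### Sobolev norms and the Poincaré inequality -/

lemma sobNormSq_zero (f : E2 → ℝ) : sobNormSq 0 f = ∫ x, f x ^ 2 := by
  have : (Finset.range (0 + 1) ×ˢ Finset.range (0 + 1)).filter (fun α : ℕ × ℕ => α.1 + α.2 ≤ 0) =
      {(0, 0)} := by decide
  rw [sobNormSq, this, Finset.sum_singleton]; rfl

lemma sobNormSq_one (f : E2 → ℝ) :
    sobNormSq 1 f = (∫ x, f x ^ 2) + ((∫ x, pd 0 f x ^ 2) + ∫ x, pd 1 f x ^ 2) := by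
  have : (Finset.range (1 + 1) ×ˢ Finset.range (1 + 1)).filter (fun α : ℕ × ℕ => α.1 + α.2 ≤ 1) =
      {(0, 0), (1, 0), (0, 1)} := by decide
  rw [sobNormSq, this, Finset.sum_insert (by decide), Finset.sum_insert (by decide),
    Finset.sum_singleton]
  rfl

lemma sob_sub (m : ℕ) (f : E2 → ℝ) (s : Finset (ℕ × ℕ)) (hs : ∀ α ∈ s, α.1 + α.2 ≤ m) :
    ∑ α ∈ s, ∫ x, ((pd 0)^[α.1] ((pd 1)^[α.2] f) x) ^ 2 ≤ sobNormSq m f := by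
  refine Finset.sum_le_sum_of_subset_of_nonneg (fun α hα => ?_) fun α _ _ =>
    integral_nonneg fun x => sq_nonneg _
  have := hs α hα
  simp only [Finset.mem_filter, Finset.mem_product, Finset.mem_range]
  omega

lemma sob_three (f : E2 → ℝ) : (∫ x, f x ^ 2) + ((∫ x, pd 0 f x ^ 2) + ∫ x, pd 1 f x ^ 2) ≤
    sobNormSq 3 f := by
  have := sob_sub 3 f {(0, 0), (1, 0), (0, 1)} (by decide)
  rw [Finset.sum_insert (by decide), Finset.sum_insert (by decide), Finset.sum_singleton] at this
  exact this

lemma sob_four (f : E2 → ℝ) : (∫ x, f x ^ 2) + (((∫ x, pd 0 f x ^ 2) + ∫ x, pd 1 f x ^ 2) +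
    ((∫ x, pd 0 (pd 0 f) x ^ 2) + ∫ x, pd 1 (pd 1 f) x ^ 2)) ≤ sobNormSq 4 f := by
  have := sob_sub 4 f {(0, 0), (1, 0), (0, 1), (2, 0), (0, 2)} (by decide)
  rw [Finset.sum_insert (by decide), Finset.sum_insert (by decide), Finset.sum_insert (by decide),
    Finset.sum_insert (by decide), Finset.sum_singleton] at this
  refine le_trans (le_of_eq ?_) this
  rw [add_assoc (∫ x, pd 0 f x ^ 2)]
  rfl

/-- Poincaré inequality on a bounded set. -/
lemma poincare {Ω : Set E2} {R : ℝ} (hR : Ω ⊆ Metric.closedBall 0 R)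
    {f : E2 → ℝ} (hf : ContDiff ℝ 1 f) (hc : HasCompactSupport f) (hs : tsupport f ⊆ Ω) :
    ∫ x, f x ^ 2 ≤ 4 * R ^ 2 * ∫ x, pd 0 f x ^ 2 := by
  have hg : ContDiff ℝ 1 (fun x : E2 => x 0) := (EuclideanSpace.proj (𝕜 := ℝ) (0 : Fin 2)).contDiff
  have hp := continuous_pderiv hf (ev 0)
  have hpc : HasCompactSupport (pd 0 f) := pd_compact hc 0
  have hib := ibp1 hg (hf.mul hf) (HasCompactSupport.mul_left hc) (ev 0)
  have e1 : ∀ z : E2, fderiv ℝ (fun x : E2 => x 0) z (ev 0) = 1 := fun z => by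
    have : fderiv ℝ (fun x : E2 => x 0) z = _ :=
      (EuclideanSpace.proj (𝕜 := ℝ) (0 : Fin 2)).hasFDerivAt.fderiv
    rw [this]; simp [ev]
  simp only [e1] at hib
  have e2 : ∀ z : E2, fderiv ℝ (f * f) z (ev 0) = 2 * (f z * pd 0 f z) := fun z => by
    have := fderiv_mul_apply' hf hf z (ev 0)
    rw [show (f * f) = fun x => f x * f x from rfl, this, pd]; ring
  have e3 : (∫ z, z 0 * fderiv ℝ (f * f) z (ev 0)) = -∫ x, f x ^ 2 := by
    have h : (∫ z, z 0 * fderiv ℝ (f * f) z (ev 0)) = -∫ z, 1 * (f z * f z) := hib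
    rw [h]; congr 2; funext x; ring
  have iF : Integrable (fun x => f x ^ 2) :=
    (hf.continuous.pow 2).integrable_of_hasCompactSupport (by
      simp only [sq]; exact HasCompactSupport.mul_left hc)
  have iP : Integrable (fun x => pd 0 f x ^ 2) :=
    (hp.pow 2).integrable_of_hasCompactSupport (by
      simp only [sq]; exact HasCompactSupport.mul_left hpc)
  -- `∫ f² = -∫ x₀ ∂₀(f²)`, which Young's inequality bounds by half of `∫ f²` and a gradient term
  have key : -(∫ z, z 0 * fderiv ℝ (f * f) z (ev 0)) ≤
      ∫ x, (1 / 2 * f x ^ 2 + 2 * R ^ 2 * pd 0 f x ^ 2) := by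
    rw [← integral_neg]
    have hp' : Continuous (pd 0 f) := hp
    refine integral_mono ?_ ((iF.const_mul _).add (iP.const_mul _)) fun x => ?_
    · simp only [e2]
      refine Integrable.neg (Continuous.integrable_of_hasCompactSupport ?_ ?_)
      · have := hf.continuous
        exact hg.continuous.mul (continuous_const.mul (this.mul hp'))
      · exact HasCompactSupport.mul_left (HasCompactSupport.mul_left (HasCompactSupport.mul_left hpc))
    · simp only [e2]
      by_cases hx : x ∈ tsupport f
      · have h1 := hR (hs hx)
        rw [mem_closedBall_zero_iff] at h1
        have h2 : x 0 ^ 2 ≤ R ^ 2 := by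
          have : ‖x‖ ^ 2 ≤ R ^ 2 := by gcongr
          rw [E2_norm_sq] at this
          nlinarith [sq_nonneg (x 1)]
        nlinarith [sq_nonneg (f x + 2 * x 0 * pd 0 f x), mul_le_mul_of_nonneg_right h2 (sq_nonneg (pd 0 f x))]
      · rw [image_eq_zero_of_notMem_tsupport hx]
        have : 0 ≤ R ^ 2 * pd 0 f x ^ 2 := by positivity
        nlinarith
  rw [e3, neg_neg, integral_add (iF.const_mul _) (iP.const_mul _), integral_const_mul,
    integral_const_mul] at key
  linarith

/-! ### Chebyshev growth and analytic continuation in the frequency -/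

lemma chebT_bound (n : ℕ) {x : ℝ} (hx : 1 ≤ x) :
    ((Polynomial.Chebyshev.T ℝ n).eval x) ≤ (2 * x) ^ n ∧
    0 ≤ (Polynomial.Chebyshev.T ℝ n).eval x := by
  have h0 : ∀ n : ℕ, 1 ≤ (Polynomial.Chebyshev.T ℝ n).eval x := fun n =>
    Polynomial.Chebyshev.one_le_eval_T_real n hx
  refine ⟨?_, by linarith [h0 n]⟩
  induction n using Nat.strong_induction_on with
  | _ n ih =>
    match n with
    | 0 => simp
    | 1 => simp; linarith
    | m + 2 =>
      have h := Polynomial.Chebyshev.T_add_two ℝ (m : ℤ)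
      have h' := congrArg (Polynomial.eval x) h
      simp only [Polynomial.eval_sub, Polynomial.eval_mul, Polynomial.eval_X,
        Polynomial.eval_ofNat] at h'
      have i1 := ih (m + 1) (by omega)
      have := h0 m
      push_cast at i1 ⊢
      rw [h', pow_succ]
      nlinarith

/-- A polynomial bounded on `[-1, 1]` grows outside at most like the Chebyshev polynomial of the same
degree, hence at most like `(2x)ᵈ`. -/
lemma cheb_growth {d : ℕ} {P : Polynomial ℝ} (hd : P.natDegree ≤ d) {a : ℝ} (ha : 0 < a)
    (hP : ∀ y ∈ Set.Icc (-1 : ℝ) 1, |P.eval y| ≤ a) {x : ℝ} (hx : 1 ≤ x) :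
    P.eval x ≤ a * (2 * x) ^ d := by
  have key := Polynomial.Chebyshev.eval_iterate_derivative_le_of_forall_abs_le_one (n := d)
    (P := Polynomial.C a⁻¹ * P) (k := 0) hx ?_ ?_
  · simp only [Function.iterate_zero, id, Polynomial.eval_mul, Polynomial.eval_C] at key
    have := key.trans (chebT_bound d hx).1
    rwa [inv_mul_le_iff₀ ha] at this
  · refine Polynomial.natDegree_le_iff_degree_le.1 ?_
    exact (Polynomial.natDegree_C_mul_le _ _).trans hd
  · intro y hy
    rw [Polynomial.eval_mul, Polynomial.eval_C, abs_mul, abs_of_pos (inv_pos.2 ha),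
      inv_mul_le_iff₀ ha, mul_one]
    exact hP y hy

/-- The remainder of the Bessel series decays geometrically with an arbitrarily small ratio `a⁻²`,
at the price of an exponential prefactor. -/
lemma tail_bound (n : ℕ) {s a : ℝ} (hs : 0 ≤ s) (ha : 0 < a) :
    ∑' m : ℕ, (s ^ 2) ^ (m + n) / ((m + n).factorial : ℝ) ^ 2 ≤
      Real.exp (2 * s * (a + 1)) / a ^ (2 * n) := by
  have hn := fact_pos' n
  have hsum : HasSum (fun m : ℕ => s ^ m / (m.factorial : ℝ)) (Real.exp s) := by
    rw [Real.exp_eq_exp_ℝ]; exact NormedSpace.expSeries_div_hasSum_exp s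
  have hle : ∀ m : ℕ, (s ^ 2) ^ (m + n) / ((m + n).factorial : ℝ) ^ 2 ≤
      (s ^ n / (n.factorial : ℝ)) ^ 2 * Real.exp s * (s ^ m / (m.factorial : ℝ)) := fun m => by
    have hm := fact_pos' m
    have h1 : ((n.factorial : ℝ) * m.factorial) ≤ ((m + n).factorial : ℝ) := by
      have := Nat.le_of_dvd (Nat.factorial_pos _) (Nat.factorial_mul_factorial_dvd_factorial_add m n)
      rw [mul_comm]; exact_mod_cast this
    have h2 : s ^ m / (m.factorial : ℝ) ≤ Real.exp s := Real.pow_div_factorial_le_exp s hs m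
    calc (s ^ 2) ^ (m + n) / ((m + n).factorial : ℝ) ^ 2
        ≤ (s ^ 2) ^ (m + n) / ((n.factorial : ℝ) * m.factorial) ^ 2 := by gcongr
      _ = (s ^ n / (n.factorial : ℝ)) ^ 2 * (s ^ m / (m.factorial : ℝ)) *
          (s ^ m / (m.factorial : ℝ)) := by field_simp; ring
      _ ≤ _ := by gcongr
  have hsum' := hsum.mul_left ((s ^ n / (n.factorial : ℝ)) ^ 2 * Real.exp s)
  have h3 : s ^ n / (n.factorial : ℝ) ≤ Real.exp (s * a) / a ^ n := by
    rw [le_div_iff₀ (by positivity)]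
    have := Real.pow_div_factorial_le_exp (s * a) (by positivity) n
    rw [mul_pow] at this
    linarith [show s ^ n / (n.factorial : ℝ) * a ^ n = s ^ n * a ^ n / (n.factorial : ℝ) by ring]
  calc _ ≤ ∑' m : ℕ, (s ^ n / (n.factorial : ℝ)) ^ 2 * Real.exp s * (s ^ m / (m.factorial : ℝ)) :=
        Summable.tsum_le_tsum hle (Summable.of_nonneg_of_le (fun _ => by positivity) hle
          hsum'.summable) hsum'.summable
    _ = (s ^ n / (n.factorial : ℝ)) ^ 2 * Real.exp s * Real.exp s := hsum'.tsum_eq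
    _ ≤ (Real.exp (s * a) / a ^ n) ^ 2 * Real.exp s * Real.exp s := by gcongr
    _ = _ := by
      rw [show 2 * s * (a + 1) = s * a + s * a + s + s by ring, Real.exp_add, Real.exp_add,
        Real.exp_add, show 2 * n = n + n by ring, pow_add]
      ring

lemma tail_mono (n : ℕ) {t u : ℝ} (ht : 0 ≤ t) (h : t ≤ u) :
    ∑' m : ℕ, t ^ (m + n) / ((m + n).factorial : ℝ) ^ 2 ≤
    ∑' m : ℕ, u ^ (m + n) / ((m + n).factorial : ℝ) ^ 2 := by
  have hu : ∀ v : ℝ, 0 ≤ v → Summable fun m : ℕ => v ^ (m + n) / ((m + n).factorial : ℝ) ^ 2 :=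
    fun v hv => by
    have := ((summable_nat_add_iff n).2 (Real.summable_pow_div_factorial v))
    refine Summable.of_nonneg_of_le (fun _ => by positivity) (fun m => ?_) this
    have := one_le_fact (m + n)
    gcongr
    nlinarith
  exact Summable.tsum_le_tsum (fun m => by gcongr) (hu t ht) (hu u (ht.trans h))

/-- The even moments of the autocorrelation of `f`. -/
noncomputable def mom (f : E2 → ℝ) (m : ℕ) : ℝ :=
  ∫ p : E2 × E2, f p.1 * f p.2 * ‖p.1 - p.2‖ ^ (2 * m) ∂((volume : Measure E2).prod volume)

/-- Cauchy–Schwarz on a set of finite measure, from the sign of the discriminant of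
`c ↦ ∫_B (|f| - c)²`. -/
lemma sq_integral_abs_le {f : E2 → ℝ} {B : Set E2} (hB : volume B ≠ ⊤)
    (i1 : IntegrableOn (fun x => f x ^ 2) B) (i2 : IntegrableOn (fun x => |f x|) B) :
    (∫ x in B, |f x|) * (∫ x in B, |f x|) ≤ volume.real B * ∫ x in B, f x ^ 2 := by
  have hq : ∀ c : ℝ, 0 ≤ volume.real B * (c * c) + (-2 * ∫ x in B, |f x|) * c +
      ∫ x in B, f x ^ 2 := fun c => by
    have j1 : IntegrableOn (fun x => (-2 * c) * |f x|) B := i2.const_mul _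
    have j2 : IntegrableOn (fun _ : E2 => c * c) B := integrableOn_const hB
    have j3 : IntegrableOn (fun x => (-2 * c) * |f x| + c * c) B := j1.add j2
    have h2 : 0 ≤ ∫ x in B, (|f x| - c) ^ 2 := integral_nonneg fun x => sq_nonneg _
    have h1 : ∫ x in B, (|f x| - c) ^ 2 = ∫ x in B, (f x ^ 2 + ((-2 * c) * |f x| + c * c)) := by
      congr 1; funext x
      rw [sub_sq, sq_abs]; ring
    rw [h1, integral_add i1 j3, integral_add j1 j2, integral_const_mul,
      setIntegral_const, smul_eq_mul] at h2
    linarith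
  have h3 := discrim_le_zero hq
  rw [discrim] at h3
  linarith

/-- Cauchy–Schwarz: `(∫ |f|)² ≤ |B_R| ∫ f²`. -/
lemma double_abs_le {R : ℝ} {f : E2 → ℝ} (hf : Continuous f) (hc : HasCompactSupport f)
    (hs : tsupport f ⊆ Metric.closedBall 0 R) :
    ∫ p : E2 × E2, |f p.1| * |f p.2| ∂((volume : Measure E2).prod volume) ≤
      volume.real (Metric.closedBall (0 : E2) R) * ∫ x, f x ^ 2 := by
  have hB : volume (Metric.closedBall (0 : E2) R) ≠ ⊤ := measure_closedBall_lt_top.ne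
  generalize Metric.closedBall (0 : E2) R = B at hs hB ⊢
  have hz : ∀ x, x ∉ B → f x = 0 := fun x hx => image_eq_zero_of_notMem_tsupport fun h => hx (hs h)
  have c1 : HasCompactSupport (fun x => f x ^ 2) := by
    simp only [sq]; exact HasCompactSupport.mul_left hc
  have i1 : Integrable (fun x => f x ^ 2) := (hf.pow 2).integrable_of_hasCompactSupport c1
  have i2 : Integrable (fun x => |f x|) :=
    hf.abs.integrable_of_hasCompactSupport (hc.comp_left abs_zero)
  have h0 : ∫ p : E2 × E2, |f p.1| * |f p.2| ∂((volume : Measure E2).prod volume) =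
    (∫ x, |f x|) * ∫ x, |f x| := integral_prod_mul (fun x => |f x|) (fun x => |f x|)
  have e1 : ∫ x in B, |f x| = ∫ x, |f x| :=
    setIntegral_eq_integral_of_forall_compl_eq_zero fun x hx => by rw [hz x hx, abs_zero]
  have e2 : ∫ x in B, f x ^ 2 = ∫ x, f x ^ 2 :=
    setIntegral_eq_integral_of_forall_compl_eq_zero fun x hx => by
      rw [hz x hx, zero_pow two_ne_zero]
  have := sq_integral_abs_le hB i1.integrableOn i2.integrableOn
  rw [e1, e2] at this
  rw [h0]; exact this

/-- The quadratic form `qf` is approximated by even polynomials in the frequency with a rapidly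
decreasing error. -/
lemma qf_trunc {R : ℝ} {f : E2 → ℝ} (hf : Continuous f) (hc : HasCompactSupport f)
    (hs : tsupport f ⊆ Metric.closedBall 0 R) (hR : 0 ≤ R) (n : ℕ) {ω a : ℝ} (hω : 0 ≤ ω)
    (ha : 0 < a) :
    |qf f ω - ∑ m ∈ Finset.range n, jc m / 4 ^ m * mom f m * ω ^ (2 * m)| ≤
      Real.exp (2 * (ω * R) * (a + 1)) / a ^ (2 * n) *
        (volume.real (Metric.closedBall (0 : E2) R) * ∫ x, f x ^ 2) := by
  set T := Real.exp (2 * (ω * R) * (a + 1)) / a ^ (2 * n)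
  have hT : 0 ≤ T := by positivity
  have habs : ∀ p : E2 × E2, |f p.1 * f p.2 *
      (Jk ω (p.1 - p.2) - ∑ m ∈ Finset.range n, jc m * ((ω * ‖p.1 - p.2‖ / 2) ^ 2) ^ m)| ≤
      T * (|f p.1| * |f p.2|) := fun p => by
    rw [abs_mul, abs_mul, mul_comm T]
    by_cases hp : f p.1 * f p.2 = 0
    · have : |f p.1| * |f p.2| = 0 := by rw [← abs_mul, hp, abs_zero]
      rw [this, zero_mul, zero_mul]
    refine mul_le_mul_of_nonneg_left ?_ (by positivity)
    have m1 := hs (subset_tsupport _ (left_ne_zero_of_mul hp))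
    have m2 := hs (subset_tsupport _ (right_ne_zero_of_mul hp))
    rw [mem_closedBall_zero_iff] at m1 m2
    have hle : ω * ‖p.1 - p.2‖ / 2 ≤ ω * R := by
      have := norm_sub_le p.1 p.2
      nlinarith
    refine (ps_jc_trunc n _ (by positivity)).trans ?_
    refine (tail_mono n (u := (ω * R) ^ 2) (by positivity) ?_).trans
      (tail_bound n (by positivity) ha)
    gcongr
  have e1 : ∑ m ∈ Finset.range n, jc m / 4 ^ m * mom f m * ω ^ (2 * m) =
      ∫ p : E2 × E2, ∑ m ∈ Finset.range n, f p.1 * f p.2 *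
        (jc m * ((ω * ‖p.1 - p.2‖ / 2) ^ 2) ^ m) ∂((volume : Measure E2).prod volume) := by
    rw [integral_finsetSum]
    · refine Finset.sum_congr rfl fun m _ => ?_
      rw [mom, ← integral_const_mul, ← integral_mul_const]
      congr 1; funext p
      rw [← pow_mul, div_pow, mul_pow, pow_mul 2 2 m]
      norm_num
      ring
    · intro m _
      exact prod_integrable hf hc (by fun_prop)
  have i2 := prod_integrable hf hc (h := fun p => Jk ω (p.1 - p.2))
    ((continuous_Jk ω).comp (by fun_prop))
  rw [e1, qf_double hf hc, ← integral_sub i2 (integrable_finsetSum _ fun m _ =>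
    prod_integrable hf hc (by fun_prop))]
  refine (abs_integral_le_integral_abs).trans ?_
  refine le_trans (integral_mono_of_nonneg (Eventually.of_forall fun _ => abs_nonneg _)
    (g := fun p => T * (|f p.1| * |f p.2|)) ?_ (Eventually.of_forall fun p => ?_)) ?_
  · refine Integrable.const_mul ?_ T
    have := prod_integrable hf.abs (hc.comp_left abs_zero) (h := fun _ => 1) continuous_const
    simpa using this
  · have := habs p
    rw [mul_sub, Finset.mul_sum] at this
    exact this
  · rw [integral_const_mul]
    exact mul_le_mul_of_nonneg_left (double_abs_le hf hc hs) hT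

/-- The polynomial obtained by truncating the power series of `S ↦ ∫₀^S ω pw(ω) dω`. -/
noncomputable def trP (f₀ f₁ : E2 → ℝ) (n : ℕ) : Polynomial ℝ :=
  ∑ m ∈ Finset.range n,
    (Polynomial.C (jc m / 4 ^ m * mom f₁ m / (2 * m + 2)) * Polynomial.X ^ (2 * m + 2) +
      Polynomial.C (jc m / 4 ^ m * mom f₀ m / (2 * m + 4)) * Polynomial.X ^ (2 * m + 4))

lemma trP_natDegree (f₀ f₁ : E2 → ℝ) (n : ℕ) : (trP f₀ f₁ n).natDegree ≤ 2 * n + 2 := by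
  refine Polynomial.natDegree_sum_le_of_forall_le _ _ fun m hm => ?_
  have := Finset.mem_range.1 hm
  refine Polynomial.natDegree_add_le_of_degree_le ?_ ?_ <;>
  exact (Polynomial.natDegree_C_mul_X_pow_le _ _).trans (by omega)

lemma trP_eval (f₀ f₁ : E2 → ℝ) (n : ℕ) (S : ℝ) : (trP f₀ f₁ n).eval S =
    ∑ m ∈ Finset.range n, (jc m / 4 ^ m * mom f₁ m / (2 * m + 2) * S ^ (2 * m + 2) +
      jc m / 4 ^ m * mom f₀ m / (2 * m + 4) * S ^ (2 * m + 4)) := by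
  simp [trP, Polynomial.eval_finsetSum]

lemma trP_even (f₀ f₁ : E2 → ℝ) (n : ℕ) (S : ℝ) :
    (trP f₀ f₁ n).eval (-S) = (trP f₀ f₁ n).eval S := by
  rw [trP_eval, trP_eval]
  refine Finset.sum_congr rfl fun m _ => ?_
  rw [Even.neg_pow ⟨m + 1, by ring⟩, Even.neg_pow ⟨m + 2, by ring⟩]

lemma trP_integral (f₀ f₁ : E2 → ℝ) (n : ℕ) (S : ℝ) :
    (∫ ω in (0:ℝ)..S, ω * ((∑ m ∈ Finset.range n, jc m / 4 ^ m * mom f₁ m * ω ^ (2 * m)) +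
      ω ^ 2 * ∑ m ∈ Finset.range n, jc m / 4 ^ m * mom f₀ m * ω ^ (2 * m))) =
      (trP f₀ f₁ n).eval S := by
  have e : ∀ ω : ℝ, ω * ((∑ m ∈ Finset.range n, jc m / 4 ^ m * mom f₁ m * ω ^ (2 * m)) +
      ω ^ 2 * ∑ m ∈ Finset.range n, jc m / 4 ^ m * mom f₀ m * ω ^ (2 * m)) =
      ∑ m ∈ Finset.range n, (jc m / 4 ^ m * mom f₁ m * ω ^ (2 * m + 1) +
        jc m / 4 ^ m * mom f₀ m * ω ^ (2 * m + 3)) := fun ω => by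
    rw [Finset.mul_sum, ← Finset.sum_add_distrib, Finset.mul_sum]
    refine Finset.sum_congr rfl fun m _ => by ring
  simp only [e]
  rw [trP_eval, intervalIntegral.integral_finsetSum]
  · refine Finset.sum_congr rfl fun m _ => ?_
    rw [intervalIntegral.integral_add (Continuous.intervalIntegrable (by fun_prop) _ _)
      (Continuous.intervalIntegrable (by fun_prop) _ _), intervalIntegral.integral_const_mul,
      intervalIntegral.integral_const_mul, integral_pow, integral_pow]
    push_cast
    rw [zero_pow (by omega), zero_pow (by omega)]
    ring
  · intro m _
    exact Continuous.intervalIntegrable (by fun_prop) _ _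

/-- The energy integral `S ↦ ∫₀^S ω pw(ω) dω` is approximated by the polynomial `trP` with a rapidly
decreasing error; the free parameter `a` is the one of `tail_bound`. -/
lemma Phi_trunc {R M : ℝ} {f₀ f₁ : E2 → ℝ} (h0 : ContDiff ℝ (⊤ : ℕ∞) f₀)
    (h1 : ContDiff ℝ (⊤ : ℕ∞) f₁) (c0 : HasCompactSupport f₀) (c1 : HasCompactSupport f₁)
    (s0 : tsupport f₀ ⊆ Metric.closedBall 0 R) (s1 : tsupport f₁ ⊆ Metric.closedBall 0 R)
    (hR : 0 ≤ R) (n0 : ∫ x, f₀ x ^ 2 ≤ M) (n1 : ∫ x, f₁ x ^ 2 ≤ M) (n : ℕ) {S a : ℝ} (hS : 0 ≤ S)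
    (ha : 0 < a) :
    |(∫ ω in (0:ℝ)..S, ω * pw f₀ f₁ ω) - (trP f₀ f₁ n).eval S| ≤
      Real.exp (2 * (S * R) * (a + 1)) / a ^ (2 * n) *
        (volume.real (Metric.closedBall (0 : E2) R) * M) * (S ^ 2 * (1 + S ^ 2)) := by
  set V := volume.real (Metric.closedBall (0 : E2) R)
  have hV : 0 ≤ V := measureReal_nonneg
  have hM : 0 ≤ M := (integral_nonneg fun x => sq_nonneg (f₀ x)).trans n0
  set T := Real.exp (2 * (S * R) * (a + 1)) / a ^ (2 * n) with hT
  have hT0 : 0 ≤ T := by positivity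
  have i1 : IntervalIntegrable (fun ω => ω * pw f₀ f₁ ω) volume 0 S :=
    (continuous_id.mul (pw_continuous h0 h1 c0 c1)).intervalIntegrable _ _
  rw [← trP_integral, ← intervalIntegral.integral_sub i1
    (Continuous.intervalIntegrable (by fun_prop) _ _)]
  have key : ∀ ω ∈ Set.uIoc 0 S, ‖ω * pw f₀ f₁ ω - ω *
      ((∑ m ∈ Finset.range n, jc m / 4 ^ m * mom f₁ m * ω ^ (2 * m)) +
      ω ^ 2 * ∑ m ∈ Finset.range n, jc m / 4 ^ m * mom f₀ m * ω ^ (2 * m))‖ ≤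
      S * (T * (V * M) * (1 + S ^ 2)) := fun ω hω => by
    rw [Set.uIoc_of_le hS] at hω
    obtain ⟨hω0, hωS⟩ := hω
    have q : ∀ f : E2 → ℝ, ContDiff ℝ (⊤ : ℕ∞) f → HasCompactSupport f →
        tsupport f ⊆ Metric.closedBall 0 R → ∫ x, f x ^ 2 ≤ M →
        |qf f ω - ∑ m ∈ Finset.range n, jc m / 4 ^ m * mom f m * ω ^ (2 * m)| ≤ T * (V * M) :=
      fun f hf hc hs hn => by
        refine (qf_trunc hf.continuous hc hs hR n hω0.le ha).trans ?_
        have : Real.exp (2 * (ω * R) * (a + 1)) / a ^ (2 * n) ≤ T := by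
          rw [hT]; gcongr
        have i0 : 0 ≤ ∫ x, f x ^ 2 := integral_nonneg fun x => sq_nonneg (f x)
        gcongr
    have q0 := q f₀ h0 c0 s0 n0
    have q1 := q f₁ h1 c1 s1 n1
    rw [pw_eq, ← mul_sub, Real.norm_eq_abs, abs_mul, abs_of_pos hω0]
    have hsq : ω ^ 2 ≤ S ^ 2 := by gcongr
    have hTV : 0 ≤ T * (V * M) := by positivity
    refine mul_le_mul hωS ?_ (abs_nonneg _) hS
    rw [add_sub_add_comm, ← mul_sub]
    refine (abs_add_le _ _).trans ?_
    rw [abs_mul, abs_of_nonneg (sq_nonneg ω)]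
    calc _ ≤ T * (V * M) + S ^ 2 * (T * (V * M)) := by gcongr
      _ = _ := by ring
  have := intervalIntegral.norm_integral_le_of_norm_le_const key
  rw [Real.norm_eq_abs, sub_zero, abs_of_nonneg hS] at this
  refine this.trans (le_of_eq ?_)
  ring

lemma exp_neg_four_le {x : ℝ} (hx : 1 ≤ x) (B : ℝ) :
    Real.exp (-2 * x ^ 4 + B * x ^ 2) ≤ Real.exp (B ^ 2 / 4) / x ^ 2 := by
  rw [le_div_iff₀ (by positivity)]
  have h1 : x ^ 2 ≤ Real.exp (x ^ 2) := by linarith [Real.add_one_le_exp (x ^ 2)]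
  calc Real.exp (-2 * x ^ 4 + B * x ^ 2) * x ^ 2
      ≤ Real.exp (-2 * x ^ 4 + B * x ^ 2) * Real.exp (x ^ 2) := by gcongr
    _ = Real.exp (-2 * x ^ 4 + B * x ^ 2 + x ^ 2) := by rw [← Real.exp_add]
    _ ≤ Real.exp (B ^ 2 / 4) := by
      apply Real.exp_le_exp.2
      nlinarith [sq_nonneg (x ^ 2 - B / 2), one_le_pow₀ hx (n := 2)]

lemma pow_exp_neg_le {x : ℝ} (hx : 1 ≤ x) (k : ℕ) :
    x ^ k * Real.exp (-(3 * x)) ≤ (k + 2).factorial / x ^ 2 := by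
  rw [le_div_iff₀ (by positivity), Real.exp_neg]
  have h1 := Real.pow_div_factorial_le_exp x (by linarith) (k + 2)
  have h2 : Real.exp x ≤ Real.exp (3 * x) := Real.exp_le_exp.2 (by linarith)
  have h3 := fact_pos' (k + 2)
  rw [div_le_iff₀ h3] at h1
  have h4 := Real.exp_pos (3 * x)
  rw [mul_right_comm, ← pow_add, ← div_eq_mul_inv, div_le_iff₀ h4]
  nlinarith

set_option maxHeartbeats 800000 in
/-- Quantitative analytic continuation: the energy integral over `(0, x)` is `O(M / x²)`
as soon as the one over `(0, 1)` is `O(exp (-2 x⁴))`. -/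
lemma continuation {R D : ℝ} (hR : 0 ≤ R) (hD : 0 ≤ D) : ∃ C : ℝ, 0 < C ∧
    ∀ (M : ℝ) (f₀ f₁ : E2 → ℝ), 1 ≤ M →
      ContDiff ℝ (⊤ : ℕ∞) f₀ → ContDiff ℝ (⊤ : ℕ∞) f₁ →
      HasCompactSupport f₀ → HasCompactSupport f₁ →
      tsupport f₀ ⊆ Metric.closedBall 0 R → tsupport f₁ ⊆ Metric.closedBall 0 R →
      ∫ x, f₀ x ^ 2 ≤ M → ∫ x, f₁ x ^ 2 ≤ M → ∀ x e : ℝ, 1 ≤ x → e ≤ Real.exp (-2 * x ^ 4) →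
      (∫ ω in (0:ℝ)..1, ω * pw f₀ f₁ ω) ≤ D * e →
      (∫ ω in (0:ℝ)..x, ω * pw f₀ f₁ ω) ≤ C * M / x ^ 2 := by
  set V := volume.real (Metric.closedBall (0 : E2) R) with hVd
  have hV : 0 ≤ V := measureReal_nonneg
  set A := 10 * R + 3 with hA
  set B := 4 * A + 8 with hB
  -- `A` makes `exp (-A x)` absorb the exponential prefactors of the truncation errors and leave
  -- `exp (-3x)`; `B` bounds the Chebyshev growth by `exp (B x²)`
  refine ⟨D * Real.exp (B ^ 2 / 4) + 8 * (V + 1) * 24 + 2 * V * 720, by positivity, ?_⟩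
  intro M f₀ f₁ hM h0 h1 c0 c1 s0 s1 n0 n1 x e hx he hD1
  set n := ⌈A * x⌉₊ with hn
  have hA0 : 0 < A := by positivity
  have hx0 : 0 < x := by linarith
  have hn1 : A * x ≤ n := Nat.le_ceil _
  have hn2 : (n : ℝ) ≤ A * x + 1 := (Nat.ceil_lt_add_one (by positivity)).le
  have hW : ∀ ω : ℝ, 0 ≤ ω → 0 ≤ ω * pw f₀ f₁ ω := fun ω hω =>
    mul_nonneg hω (pw_nonneg h0 h1 c0 c1 ω)
  have hWi : ∀ a b : ℝ, IntervalIntegrable (fun ω => ω * pw f₀ f₁ ω) volume a b := fun a b =>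
    (continuous_id.mul (pw_continuous h0 h1 c0 c1)).intervalIntegrable _ _
  -- the factor gained from the degree of truncation
  have h4n : (1 : ℝ) / 2 ^ (2 * n) ≤ Real.exp (-(A * x)) := by
    have h4 : Real.exp 1 ≤ 4 := by linarith [Real.exp_one_lt_d9]
    have : Real.exp n ≤ 2 ^ (2 * n) := by
      calc Real.exp n = Real.exp 1 ^ n := (Real.exp_one_pow n).symm
        _ ≤ 4 ^ n := by gcongr
        _ = 2 ^ (2 * n) := by rw [pow_mul]; norm_num
    calc (1 : ℝ) / 2 ^ (2 * n) ≤ 1 / Real.exp n := by gcongr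
      _ = Real.exp (-n) := by rw [Real.exp_neg, one_div]
      _ ≤ _ := Real.exp_le_exp.2 (by linarith)
  set τ := Real.exp (2 * R * (4 * x + 1)) / (4 * x) ^ (2 * n) * ((V + 1) * M) * 2 with hτ
  have hτ0 : 0 < τ := by positivity
  have hDe : 0 ≤ D * e := le_trans (intervalIntegral.integral_nonneg zero_le_one
    fun ω hω => hW ω hω.1) hD1
  -- the polynomial is even, so a bound on `[0, 1]` suffices; choosing `a = 4x` in the truncation error
  -- wins a factor `(4x)^(-2n)`, which beats the Chebyshev growth `(2x)^(2n + 2)`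
  have hQ1 : ∀ y ∈ Set.Icc (-1 : ℝ) 1, |(trP f₀ f₁ n).eval y| ≤ D * e + τ := fun y hy => by
    have hy' : |y| ≤ 1 := abs_le.2 hy
    have e1 : (trP f₀ f₁ n).eval y = (trP f₀ f₁ n).eval |y| := by
      rcases abs_cases y with h | h
      · rw [h.1]
      · rw [h.1, trP_even]
    have hp0 : 0 ≤ ∫ ω in (0:ℝ)..|y|, ω * pw f₀ f₁ ω :=
      intervalIntegral.integral_nonneg (abs_nonneg y) fun ω hω => hW ω hω.1
    have hp1 : (∫ ω in (0:ℝ)..|y|, ω * pw f₀ f₁ ω) ≤ ∫ ω in (0:ℝ)..1, ω * pw f₀ f₁ ω := by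
      rw [← intervalIntegral.integral_add_adjacent_intervals (hWi 0 |y|) (hWi |y| 1)]
      have : 0 ≤ ∫ ω in |y|..1, ω * pw f₀ f₁ ω := intervalIntegral.integral_nonneg hy'
        fun ω hω => hW ω ((abs_nonneg y).trans hω.1)
      linarith
    have ht := Phi_trunc h0 h1 c0 c1 s0 s1 hR n0 n1 n (abs_nonneg y) (a := 4 * x) (by positivity)
    have ht2 : Real.exp (2 * (|y| * R) * (4 * x + 1)) / (4 * x) ^ (2 * n) * (V * M) *
        (|y| ^ 2 * (1 + |y| ^ 2)) ≤ τ := by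
      have hy2 : |y| ^ 2 ≤ 1 := pow_le_one₀ (abs_nonneg y) hy'
      have hyR : |y| * R ≤ R := by nlinarith
      rw [hτ]
      gcongr
      · linarith
      · nlinarith [sq_nonneg |y|]
    rw [e1, abs_le]
    have := abs_le.1 (ht.trans ht2)
    constructor <;> linarith
  have hQx := cheb_growth (trP_natDegree f₀ f₁ n) (by positivity) hQ1 hx
  -- at `x` itself no growth has to be compensated, and `a = 2` is enough
  have hPx := (abs_le.1 (Phi_trunc h0 h1 c0 c1 s0 s1 hR n0 n1 n hx0.le
    (a := 2) (by norm_num))).2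
  rw [← hVd] at hPx
  -- contribution of the data on `(0, 1)`: since `n` is of order `x`, the growth factor is at most
  -- `exp (B x²)`
  have t1 : D * e * (2 * x) ^ (2 * n + 2) ≤ D * (Real.exp (B ^ 2 / 4) / x ^ 2) := by
    rw [mul_assoc]
    refine mul_le_mul_of_nonneg_left (le_trans ?_ (exp_neg_four_le hx B)) hD
    have h2x : (2 * x) ^ (2 * n + 2) ≤ Real.exp (B * x ^ 2) := by
      calc (2 * x) ^ (2 * n + 2) ≤ Real.exp (2 * x) ^ (2 * n + 2) := by
            gcongr; linarith [Real.add_one_le_exp (2 * x)]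
        _ = Real.exp ((2 * n + 2 : ℕ) * (2 * x)) := by rw [← Real.exp_nat_mul]
        _ ≤ _ := by
          apply Real.exp_le_exp.2
          push_cast
          rw [hB]
          nlinarith
    rw [Real.exp_add]
    exact mul_le_mul he h2x (by positivity) (Real.exp_pos _).le
  -- contribution of the truncation error on `[0, 1]`
  have t2 : τ * (2 * x) ^ (2 * n + 2) ≤ 8 * (V + 1) * M * (24 / x ^ 2) := by
    have e1 : τ * (2 * x) ^ (2 * n + 2) = 8 * (V + 1) * M *
        (x ^ 2 * (Real.exp (2 * R * (4 * x + 1)) * (1 / 2 ^ (2 * n)))) := by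
      rw [hτ, show 4 * x = 2 * (2 * x) by ring, mul_pow 2 (2 * x) (2 * n), pow_add (2 * x)]
      field_simp
      ring
    rw [e1]
    have := pow_exp_neg_le hx 2
    norm_num [Nat.factorial] at this
    have h2 : Real.exp (2 * R * (4 * x + 1)) * (1 / 2 ^ (2 * n)) ≤ Real.exp (-(3 * x)) := by
      calc _ ≤ Real.exp (2 * R * (4 * x + 1)) * Real.exp (-(A * x)) := by gcongr
        _ ≤ _ := by
          rw [← Real.exp_add]; apply Real.exp_le_exp.2; rw [hA]; nlinarith
    gcongr
    refine le_trans ?_ this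
    gcongr
  -- truncation error at `x`
  have t3 : Real.exp (2 * (x * R) * (2 + 1)) / 2 ^ (2 * n) * (V * M) * (x ^ 2 * (1 + x ^ 2)) ≤
      2 * V * M * (720 / x ^ 2) := by
    have := pow_exp_neg_le hx 4
    norm_num [Nat.factorial] at this
    have h2 : Real.exp (2 * (x * R) * (2 + 1)) * (1 / 2 ^ (2 * n)) ≤ Real.exp (-(3 * x)) := by
      calc _ ≤ Real.exp (2 * (x * R) * (2 + 1)) * Real.exp (-(A * x)) := by gcongr
        _ ≤ _ := by
          rw [← Real.exp_add]; apply Real.exp_le_exp.2; rw [hA]; nlinarith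
    have hx2 : 1 ≤ x ^ 2 := one_le_pow₀ hx
    have hx4 : x ^ 2 * (1 + x ^ 2) ≤ 2 * x ^ 4 := by nlinarith
    calc _ = V * M * ((x ^ 2 * (1 + x ^ 2)) *
          (Real.exp (2 * (x * R) * (2 + 1)) * (1 / 2 ^ (2 * n)))) := by ring
      _ ≤ V * M * ((2 * x ^ 4) * Real.exp (-(3 * x))) := by
        gcongr
      _ = 2 * V * M * (x ^ 4 * Real.exp (-(3 * x))) := by ring
      _ ≤ _ := mul_le_mul_of_nonneg_left this (by positivity)
  have hX : 0 ≤ D * Real.exp (B ^ 2 / 4) / x ^ 2 := by positivity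
  have hfin : D * (Real.exp (B ^ 2 / 4) / x ^ 2) ≤ D * Real.exp (B ^ 2 / 4) / x ^ 2 * M := by
    rw [← mul_div_assoc]; nlinarith
  calc _ ≤ D * (Real.exp (B ^ 2 / 4) / x ^ 2) + 8 * (V + 1) * M * (24 / x ^ 2) +
        2 * V * M * (720 / x ^ 2) := by linarith
    _ ≤ D * Real.exp (B ^ 2 / 4) / x ^ 2 * M + 8 * (V + 1) * M * (24 / x ^ 2) +
        2 * V * M * (720 / x ^ 2) := by linarith
    _ = _ := by ring

/-! ### The stability estimate -/

lemma rpow_two_thirds_mul {y : ℝ} (hy : 0 < y) : y ^ ((2:ℝ)/3) * y ^ ((4:ℝ)/3) = y ^ 2 := by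
  rw [← Real.rpow_add hy, show (2:ℝ)/3 + 4/3 = ((2:ℕ):ℝ) by norm_num, Real.rpow_natCast]

lemma final_arith {C₀ C₁ e D G Φ N : ℝ} (h0 : 0 ≤ C₀) (h1 : 0 ≤ C₁) (he : 0 ≤ e) (hD : 0 ≤ D)
    (hN : N ≤ Φ + 2 * G) (hΦ : Φ ≤ C₀ * e + C₁ * G) (hG : G ≤ 2 * D) :
    N ≤ (C₀ + 4 + 2 * C₁) * (e + D) := by
  nlinarith [mul_nonneg h1 hD, mul_nonneg h0 hD, mul_nonneg h1 he,
    mul_le_mul_of_nonneg_left hG h1]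

/-- The Poincaré inequality supplies the lowest order term of `f₀`. -/
lemma norms_le {R : ℝ} {f₀ f₁ : E2 → ℝ} (h0 : ContDiff ℝ (⊤ : ℕ∞) f₀)
    (c0 : HasCompactSupport f₀) (s0 : tsupport f₀ ⊆ Metric.closedBall 0 R) :
    sobNormSq 0 f₁ + sobNormSq 1 f₀ ≤ (1 + 4 * R ^ 2) * en f₀ f₁ := by
  have hp := poincare (Ω := Metric.closedBall (0 : E2) R) subset_rfl
    (h0.of_le (by exact_mod_cast le_top)) c0 s0
  have i1 : 0 ≤ ∫ x, f₁ x ^ 2 := integral_nonneg fun x => sq_nonneg _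
  have i2 : 0 ≤ ∫ x, pd 1 f₀ x ^ 2 := integral_nonneg fun x => sq_nonneg _
  rw [sobNormSq_zero, sobNormSq_one, en]
  nlinarith [sq_nonneg R]

/-- The integral over frequencies of `power_le_data`. -/
lemma energy_le_data {Ω : Set E2} {C : ℝ} {f₀ f₁ : E2 → ℝ} (h0 : ContDiff ℝ (⊤ : ℕ∞) f₀)
    (h1 : ContDiff ℝ (⊤ : ℕ∞) f₁) (c0 : HasCompactSupport f₀) (c1 : HasCompactSupport f₁)
    (hp : ∀ ω, 0 < ω → ω * pw f₀ f₁ ω ≤ C * bdata Ω f₀ f₁ ω) {K : ℝ} (hK : 0 < K)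
    (hne : 0 < ∫ ω in Set.Ioo (0 : ℝ) K, bdata Ω f₀ f₁ ω) :
    (∫ ω in (0:ℝ)..K, ω * pw f₀ f₁ ω) ≤ C * ∫ ω in Set.Ioo (0 : ℝ) K, bdata Ω f₀ f₁ ω := by
  -- a nonintegrable integrand would have Bochner integral zero
  have hi : IntegrableOn (bdata Ω f₀ f₁) (Set.Ioo 0 K) := by
    by_contra h
    rw [integral_undef h] at hne
    exact lt_irrefl _ hne
  rw [intervalIntegral.integral_of_le hK.le, integral_Ioc_eq_integral_Ioo, ← integral_const_mul]
  refine setIntegral_mono_on ?_ (hi.const_mul C) measurableSet_Ioo fun ω hω => hp ω hω.1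
  have : IntervalIntegrable (fun ω => ω * pw f₀ f₁ ω) volume 0 K :=
    (continuous_id.mul (pw_continuous h0 h1 c0 c1)).intervalIntegrable _ _
  exact ((intervalIntegrable_iff_integrableOn_Ioc_of_le hK.le).1 this).mono_set Set.Ioo_subset_Ioc_self

/-- **Increasing stability for the inverse source problem** (Theorem 1.1):
`‖f₁‖²_{(0)} + ‖f₀‖²_{(1)} ≤ C(ε² + M²/(1 + K^{2/3}E^{1/4}))`. -/
theorem increasing_stability
    (Ω : Set E2) (hΩo : IsOpen Ω) (hΩb : Bornology.IsBounded Ω) (hΩ2 : HasC2Boundary Ω)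
    (δ : ℝ) (hδ : 0 < δ) :
    ∃ C : ℝ, 0 < C ∧
      ∀ (M : ℝ) (f₀ f₁ : E2 → ℝ), 1 ≤ M →
        ContDiff ℝ (⊤ : ℕ∞) f₀ → ContDiff ℝ (⊤ : ℕ∞) f₁ →
        HasCompactSupport f₀ → HasCompactSupport f₁ →
        tsupport f₀ ⊆ Ω → tsupport f₁ ⊆ Ω →
        (∀ x ∈ frontier Ω, ∀ y ∈ tsupport f₀ ∪ tsupport f₁, δ < ‖x - y‖) →
        sobNormSq 4 f₀ + sobNormSq 3 f₁ ≤ M →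
        ∀ K : ℝ, 1 < K → ∀ ε Elog : ℝ,
          ε ^ 2 = ∫ ω in Set.Ioo (0 : ℝ) K,
              (ω ^ 2 * ∫ x in frontier Ω, ‖scatSol Ω f₀ f₁ x (ω : ℂ)‖ ^ 2 ∂(μH[1])) +
                ∫ x in frontier Ω, gradNormSq (fun x' => scatSol Ω f₀ f₁ x' (ω : ℂ)) x ∂(μH[1]) →
          0 < ε → ε < 1 → Elog = -Real.log ε →
          sobNormSq 0 f₁ + sobNormSq 1 f₀ ≤
            C * (ε ^ 2 + M ^ 2 / (1 + K ^ ((2 : ℝ) / 3) * Elog ^ ((1 : ℝ) / 4))) := by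
  obtain ⟨R, hR0, hR⟩ : ∃ R : ℝ, 0 < R ∧ Ω ⊆ Metric.closedBall 0 R := by
    obtain ⟨R, hR⟩ := hΩb.subset_closedBall 0
    exact ⟨max R 1, by positivity,
      hR.trans (Metric.closedBall_subset_closedBall (le_max_left _ _))⟩
  obtain ⟨C₀, hC₀, hdata⟩ := power_le_data hΩo hΩb hΩ2
  obtain ⟨C₁, hC₁, hcont⟩ := continuation hR0.le hC₀.le
  set P := 1 + 4 * R ^ 2 with hP
  have hP0 : 0 < P := by positivity
  refine ⟨P * (C₀ + 4 + 2 * C₁), by positivity, ?_⟩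
  intro M f₀ f₁ hM h0 h1 c0 c1 s0 s1 _ hsob K hK ε E hε hε0 hε1 hE
  have hK0 : 0 < K := by linarith
  have hE0 : 0 < E := by rw [hE]; linarith [Real.log_neg hε0 hε1]
  have hε2 : 0 < ε ^ 2 := by positivity
  have hεE : ε ^ 2 = Real.exp (-2 * E) := by
    rw [hE, show -2 * -Real.log ε = Real.log ε + Real.log ε by ring, Real.exp_add,
      Real.exp_log hε0, sq]
  have hb : ε ^ 2 = ∫ ω in Set.Ioo (0 : ℝ) K, bdata Ω f₀ f₁ ω := hε
  have h2 : (2 : WithTop ℕ∞) ≤ ((⊤ : ℕ∞) : WithTop ℕ∞) :=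
    WithTop.coe_le_coe.2 (le_top : (2 : ℕ∞) ≤ ⊤)
  have hΦK : (∫ ω in (0:ℝ)..K, ω * pw f₀ f₁ ω) ≤ C₀ * ε ^ 2 := by
    rw [hb]
    exact energy_le_data h0 h1 c0 c1 (hdata f₀ f₁ (h0.of_le h2) (h1.of_le h2) c0 c1 s0 s1) hK0
      (hb ▸ hε2)
  have hWi : ∀ a b : ℝ, IntervalIntegrable (fun ω => ω * pw f₀ f₁ ω) volume a b := fun a b =>
    (continuous_id.mul (pw_continuous h0 h1 c0 c1)).intervalIntegrable _ _
  have hΦ1 : (∫ ω in (0:ℝ)..1, ω * pw f₀ f₁ ω) ≤ C₀ * ε ^ 2 := by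
    rw [← intervalIntegral.integral_add_adjacent_intervals (hWi 0 1) (hWi 1 K)] at hΦK
    have : 0 ≤ ∫ ω in (1:ℝ)..K, ω * pw f₀ f₁ ω := intervalIntegral.integral_nonneg hK.le
      fun ω hω => mul_nonneg (by linarith [hω.1]) (pw_nonneg h0 h1 c0 c1 ω)
    linarith
  have nn : ∀ g : E2 → ℝ, 0 ≤ ∫ x, g x ^ 2 := fun g => integral_nonneg fun x => sq_nonneg _
  have hs3 := sob_three f₁
  have hs4 := sob_four f₀
  have hhen : hen f₀ f₁ ≤ M := by
    rw [hen]; linarith [nn f₀, nn f₁, nn (pd 0 f₀), nn (pd 1 f₀)]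
  have n0 : ∫ x, f₀ x ^ 2 ≤ M := by
    linarith [nn f₁, nn (pd 0 f₀), nn (pd 1 f₀), nn (pd 0 f₁), nn (pd 1 f₁),
      nn (pd 0 (pd 0 f₀)), nn (pd 1 (pd 1 f₀))]
  have n1 : ∫ x, f₁ x ^ 2 ≤ M := by
    linarith [nn f₀, nn (pd 0 f₀), nn (pd 1 f₀), nn (pd 0 f₁), nn (pd 1 f₁),
      nn (pd 0 (pd 0 f₀)), nn (pd 1 (pd 1 f₀))]
  have hen_le : ∀ y : ℝ, 0 < y → en f₀ f₁ ≤ (∫ ω in (0:ℝ)..y, ω * pw f₀ f₁ ω) + 2 * (M / y ^ 2) :=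
    fun y hy => (en_le h0 h1 c0 c1 hy).trans (by rw [← mul_div_assoc]; gcongr)
  have hL := norms_le (f₁ := f₁) h0 c0 (s0.trans hR)
  -- the exponent `3/16` gives `E^(1/4) = x^(4/3)` and, for `x ≥ 1`, `E = x^(16/3) ≥ x⁴`
  set x := E ^ ((3:ℝ)/16) with hx
  have hx0 : 0 < x := Real.rpow_pos_of_pos hE0 _
  have hE4 : E ^ ((1:ℝ)/4) = x ^ ((4:ℝ)/3) := by
    rw [hx, ← Real.rpow_mul hE0.le]; norm_num
  have hEx : E = x ^ ((16:ℝ)/3) := by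
    rw [hx, ← Real.rpow_mul hE0.le]; norm_num
  set F := K ^ ((2:ℝ)/3) * E ^ ((1:ℝ)/4) with hF
  have hF0 : 0 < F := by positivity
  have hMM : M ≤ M ^ 2 := by nlinarith
  -- `K^(2/3) E^(1/4) ≤ y^(2/3) y^(4/3) = y²` for `y ≥ max K x`
  have key : ∀ y : ℝ, 1 ≤ y → K ≤ y → x ≤ y → M / y ^ 2 ≤ 2 * (M ^ 2 / (1 + F)) := by
    intro y hy1 hKy hxy
    have hF2 : F ≤ y ^ 2 := by
      rw [hF, hE4, ← rpow_two_thirds_mul (by linarith : 0 < y)]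
      gcongr
    have hy2 : 1 ≤ y ^ 2 := one_le_pow₀ hy1
    rw [← mul_div_assoc, div_le_div_iff₀ (by positivity) (by positivity)]
    nlinarith
  have hden : 0 ≤ M ^ 2 / (1 + F) := by positivity
  refine hL.trans ?_
  rw [mul_assoc]
  refine mul_le_mul_of_nonneg_left ?_ hP0.le
  rcases le_total x K with hxK | hKx
  · have k1 := key K hK.le le_rfl hxK
    have k2 := hen_le K hK0
    have k3 : 0 ≤ C₁ * (M / K ^ 2) := by positivity
    exact final_arith hC₀.le hC₁.le hε2.le hden k2 (by linarith : _ ≤ C₀ * ε ^ 2 + C₁ * (M / K ^ 2)) k1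
  · have hx1 : 1 ≤ x := hK.le.trans hKx
    have k1 := key x hx1 hKx le_rfl
    have k2 := hen_le x hx0
    have hex : ε ^ 2 ≤ Real.exp (-2 * x ^ 4) := by
      rw [hεE]
      apply Real.exp_le_exp.2
      have : x ^ 4 ≤ x ^ ((16:ℝ)/3) := by
        rw [← Real.rpow_natCast]
        exact Real.rpow_le_rpow_of_exponent_le hx1 (by norm_num)
      rw [hEx]; linarith
    have k3 := hcont M f₀ f₁ hM h0 h1 c0 c1 (s0.trans hR) (s1.trans hR) n0 n1 x (ε ^ 2) hx1 hex hΦ1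
    rw [mul_div_assoc] at k3
    have k4 : 0 ≤ C₀ * ε ^ 2 := by positivity
    exact final_arith hC₀.le hC₁.le hε2.le hden k2 (by linarith : _ ≤ C₀ * ε ^ 2 + C₁ * (M / x ^ 2)) k1
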